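/- Suppose λ < 0. Then for every θ ∈ ℝ and every E ∈ σ(H_{α,θ,b}): L(E) > 0 if and only if αE < −2(1−|λ|), and L(E) = 0 if and only if αE ≥ −2(1−|λ|). -/

import Mathlib

open scoped Real

/-- The quasi-periodic potential `v(x) = 2λcos(2πx)/(1 - αcos(2πx))`. -/
noncomputable def potV (α lam : ℝ) (x : ℝ) : ℝ :=
  2 * lam * Real.cos (2 * Real.pi * x) / (1 - α * Real.cos (2 * Real.pi * x))

/-- One-step transfer matrix `A(x,z) = [[z - V x, -1],[1,0]]`. -/
noncomputable def tMat (V : ℝ → ℝ) (x : ℝ) (z : ℂ) : Matrix (Fin 2) (Fin 2) ℂ :=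
  !![z - (V x : ℝ), -1; 1, 0]

/-- The `n`-step transfer matrix `A_n(x,z) = A(x+(n-1)b,z) ⋯ A(x+b,z) A(x,z)`. -/
noncomputable def tProd (V : ℝ → ℝ) (b : ℝ) (n : ℕ) (x : ℝ) (z : ℂ) :
    Matrix (Fin 2) (Fin 2) ℂ :=
  (((List.range n).reverse).map (fun j => tMat V (x + (j : ℝ) * b) z)).prod

/-- The operator norm of a 2×2 complex matrix, acting on the Euclidean space `ℂ²`. -/
noncomputable def opNorm2 (M : Matrix (Fin 2) (Fin 2) ℂ) : ℝ :=
  ‖Matrix.toEuclideanCLM (𝕜 := ℂ) M‖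

/-- The Lyapunov exponent `L(z) = lim_n (1/n)∫₀¹ log‖A_n(x,z)‖ dx`; the limit exists and
equals `inf_{n ≥ 1} (1/n)∫₀¹ log‖A_n(x,z)‖ dx` by subadditivity, so we take that as the
definition. -/
noncomputable def lyap (V : ℝ → ℝ) (b : ℝ) (z : ℂ) : ℝ :=
  ⨅ n : ℕ+, ((n : ℝ))⁻¹ * ∫ x in (0:ℝ)..(1:ℝ), Real.log (opNorm2 (tProd V b n x z))

/-- `IsSchrodingerOp V b θ H` says that `H` is the bounded operator on `ℓ²(ℤ)` given by
`(Hu)ₙ = u_{n+1} + u_{n-1} + V(nb+θ)uₙ`. -/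
def IsSchrodingerOp (V : ℝ → ℝ) (b θ : ℝ)
    (H : lp (fun _ : ℤ => ℂ) 2 →L[ℂ] lp (fun _ : ℤ => ℂ) 2) : Prop :=
  ∀ u : lp (fun _ : ℤ => ℂ) 2, ∀ n : ℤ,
    (H u : ∀ _ : ℤ, ℂ) n = (u : ∀ _ : ℤ, ℂ) (n + 1) + (u : ∀ _ : ℤ, ℂ) (n - 1)
      + (V ((n : ℝ) * b + θ) : ℂ) * (u : ∀ _ : ℤ, ℂ) n

/-!
Continued to the complex phases `x - it / 2π`, the cocycle has an exponent `L(t)` that is convex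
in `t`, by Jensen's formula. Write `z = exp (2πix)`. The trace of an iterate is a quotient of
polynomials in `z`; at a rational frequency `p / q` and length `q` its numerator is a quadratic
polynomial in `z ^ q`, whose extreme coefficients have the size of traces of powers of explicit
matrices.

If `|αE + 2λ| > 2`, the constant coefficient grows faster than the denominator, and Jensen's
formula gives `L(0) > 0`. If `|αE + 2λ| ≤ 2`, the extreme coefficients contribute at most `|t|` to
the growth of the traces and the middle one at most `L(0)`. Where `L` is positive and
differentiable, few zeros lie near the circle, so the cocycle grows uniformly in the phase, which
persists at nearby rational frequencies; hence `L(t) ≤ max (L(0), |t|)` there. Thus `L(0) > 0`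
forces `L` to be constant near `0`, the growth is uniform at real phases too, and `E` is not in
the spectrum.

So `L(E) > 0` if and only if `|αE + 2λ| > 2` on the spectrum. For `λ < 0`, the case `αE + 2λ > 2`
cannot occur there, since then `|E - v| ≥ 1 + |E| / 2 > 2`.
-/

open MeasureTheory Polynomial
open scoped Matrix.Norms.L2Operator

namespace LyapunovDichotomy

/-! ### Two-by-two matrices -/

/-- Complex `2 × 2` matrices, normed by the operator norm on Euclidean `ℂ²`. -/
abbrev Mat := Matrix (Fin 2) (Fin 2) ℂ

/-- Euclidean `ℂ²`. -/
abbrev Vec := EuclideanSpace ℂ (Fin 2)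

/-- The operator on `ℂ²` given by a matrix. -/
noncomputable abbrev act (M : Mat) : Vec →L[ℂ] Vec := Matrix.toEuclideanCLM (𝕜 := ℂ) M

/-- The standard symplectic form on `ℂ²`. -/
noncomputable def wedge (v w : Vec) : ℂ := v 0 * w 1 - v 1 * w 0

section TwoByTwo

variable {A B M : Mat}

lemma act_apply (M : Mat) (v : Vec) (i : Fin 2) : act M v i = M i 0 * v 0 + M i 1 * v 1 := by
  simp [Matrix.mulVec, dotProduct, Fin.sum_univ_two]

lemma act_mul (M N : Mat) (v : Vec) : act (M * N) v = act M (act N v) := by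
  simp [map_mul]

lemma norm_act_le (M : Mat) (v : Vec) : ‖act M v‖ ≤ ‖M‖ * ‖v‖ :=
  (act M).le_opNorm v

lemma norm_le_of_forall_norm_act_le {C : ℝ} (hC : 0 ≤ C) (h : ∀ v, ‖act M v‖ ≤ C * ‖v‖) :
    ‖M‖ ≤ C :=
  (act M).opNorm_le_bound hC h

lemma norm_sq_eq_add (v : Vec) : ‖v‖ ^ 2 = ‖v 0‖ ^ 2 + ‖v 1‖ ^ 2 := by
  rw [EuclideanSpace.norm_sq_eq, Fin.sum_univ_two]

lemma norm_wedge_le (v w : Vec) : ‖wedge v w‖ ≤ ‖v‖ * ‖w‖ := by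
  have htri : ‖wedge v w‖ ≤ ‖v 0‖ * ‖w 1‖ + ‖v 1‖ * ‖w 0‖ := by
    simpa only [wedge, norm_mul] using norm_sub_le (v 0 * w 1) (v 1 * w 0)
  refine htri.trans (abs_le_of_sq_le_sq' ?_ (by positivity)).2
  rw [mul_pow, norm_sq_eq_add, norm_sq_eq_add]
  nlinarith [sq_nonneg (‖v 0‖ * ‖w 0‖ - ‖v 1‖ * ‖w 1‖)]

lemma wedge_act (M : Mat) (v w : Vec) : wedge (act M v) (act M w) = M.det * wedge v w := by
  rw [Matrix.det_fin_two]
  simp only [wedge, act_apply]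
  ring

lemma norm_sq_smul_eq_inner_smul_add_wedge_smul (w z : Vec) :
    ((‖w‖ ^ 2 : ℝ) : ℂ) • z =
      inner ℂ w z • w + wedge w z • !₂[-(starRingEnd ℂ) (w 1), (starRingEnd ℂ) (w 0)] := by
  have hnorm : ((‖w‖ ^ 2 : ℝ) : ℂ) =
      (starRingEnd ℂ) (w 0) * w 0 + (starRingEnd ℂ) (w 1) * w 1 := by
    rw [norm_sq_eq_add, Complex.conj_mul', Complex.conj_mul']
    push_cast
    rfl
  rw [hnorm, PiLp.inner_apply, Fin.sum_univ_two]
  ext i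
  fin_cases i <;> simp [wedge] <;> ring

lemma norm_mul_norm_act_le (A : Mat) (w z : Vec) :
    ‖w‖ * ‖act A z‖ ≤ ‖z‖ * ‖act A w‖ + ‖A‖ * ‖wedge w z‖ := by
  rcases eq_or_ne w 0 with rfl | hw
  · simp [wedge]
  set w' : Vec := !₂[-(starRingEnd ℂ) (w 1), (starRingEnd ℂ) (w 0)] with hw'
  have hnorm : ‖w'‖ = ‖w‖ := by
    refine (sq_eq_sq₀ (norm_nonneg _) (norm_nonneg _)).mp ?_
    rw [norm_sq_eq_add, norm_sq_eq_add]
    simp [hw', add_comm]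
  have hact : ((‖w‖ ^ 2 : ℝ) : ℂ) • act A z = inner ℂ w z • act A w + wedge w z • act A w' := by
    rw [← map_smul, norm_sq_smul_eq_inner_smul_add_wedge_smul, map_add, map_smul, map_smul]
  refine le_of_mul_le_mul_left ?_ (norm_pos_iff.mpr hw)
  calc ‖w‖ * (‖w‖ * ‖act A z‖)
      = ‖((‖w‖ ^ 2 : ℝ) : ℂ) • act A z‖ := by
        rw [norm_smul, Complex.norm_real, Real.norm_of_nonneg (by positivity)]
        ring
    _ ≤ ‖inner ℂ w z‖ * ‖act A w‖ + ‖wedge w z‖ * ‖act A w'‖ := by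
        rw [hact, ← norm_smul, ← norm_smul]
        exact norm_add_le _ _
    _ ≤ ‖w‖ * ‖z‖ * ‖act A w‖ + ‖wedge w z‖ * (‖A‖ * ‖w‖) := by
        gcongr
        · exact norm_inner_le_norm w z
        · exact hnorm ▸ norm_act_le A w'
    _ = ‖w‖ * (‖z‖ * ‖act A w‖ + ‖A‖ * ‖wedge w z‖) := by ring

lemma norm_act_mul_norm_mul_le (A : Mat) (hB : B.det = 1) (y : Vec) :
    ‖act B y‖ * ‖A * B‖ ≤ ‖B‖ * ‖act A (act B y)‖ + ‖A‖ * ‖y‖ := by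
  rcases (norm_nonneg (act B y)).eq_or_lt with h0 | h0
  · rw [← h0, zero_mul]
    positivity
  rw [mul_comm, ← le_div_iff₀ h0]
  refine norm_le_of_forall_norm_act_le (by positivity) fun v => ?_
  rw [div_mul_eq_mul_div, le_div_iff₀ h0, mul_comm, act_mul]
  calc ‖act B y‖ * ‖act A (act B v)‖
      ≤ ‖act B v‖ * ‖act A (act B y)‖ + ‖A‖ * ‖wedge (act B y) (act B v)‖ :=
        norm_mul_norm_act_le A _ _
    _ ≤ ‖B‖ * ‖v‖ * ‖act A (act B y)‖ + ‖A‖ * (‖y‖ * ‖v‖) := by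
        rw [wedge_act, hB, one_mul]
        gcongr
        · exact norm_act_le B v
        · exact norm_wedge_le y v
    _ = (‖B‖ * ‖act A (act B y)‖ + ‖A‖ * ‖y‖) * ‖v‖ := by ring

-- When `‖A * B‖` is much larger than `‖A‖` and `‖B‖`, every orbit `y, B y, A B y` is convex.
lemma two_mul_norm_act_le {Γ κ : ℝ} (hΓ : 0 < Γ) (hA : ‖A‖ ≤ Γ) (hB : ‖B‖ ≤ Γ) (hdet : B.det = 1)
    (hAB : 2 * Γ * κ ≤ ‖A * B‖) (y : Vec) :
    2 * κ * ‖act B y‖ ≤ ‖act A (act B y)‖ + ‖y‖ := by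
  refine le_of_mul_le_mul_left ?_ hΓ
  calc Γ * (2 * κ * ‖act B y‖) = ‖act B y‖ * (2 * Γ * κ) := by ring
    _ ≤ ‖act B y‖ * ‖A * B‖ := by gcongr
    _ ≤ ‖B‖ * ‖act A (act B y)‖ + ‖A‖ * ‖y‖ := norm_act_mul_norm_mul_le A hdet y
    _ ≤ Γ * ‖act A (act B y)‖ + Γ * ‖y‖ := by gcongr
    _ = Γ * (‖act A (act B y)‖ + ‖y‖) := by ring

lemma norm_entry_le (M : Mat) (i j : Fin 2) : ‖M i j‖ ≤ ‖M‖ := by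
  have h := (PiLp.norm_apply_le _ i).trans (norm_act_le M (EuclideanSpace.single j 1))
  rw [act_apply] at h
  fin_cases j <;> simpa using h

lemma norm_le_two_mul_of_forall_entry_le {m : ℝ} (h : ∀ i j, ‖M i j‖ ≤ m) : ‖M‖ ≤ 2 * m := by
  have hm : 0 ≤ m := (norm_nonneg _).trans (h 0 0)
  refine norm_le_of_forall_norm_act_le (by positivity) fun v => ?_
  have hcoord (i : Fin 2) : ‖act M v i‖ ^ 2 ≤ 2 * m ^ 2 * ‖v‖ ^ 2 := by
    rw [act_apply, norm_sq_eq_add]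
    calc ‖M i 0 * v 0 + M i 1 * v 1‖ ^ 2 ≤ (m * ‖v 0‖ + m * ‖v 1‖) ^ 2 := by
          gcongr
          refine (norm_add_le _ _).trans ?_
          rw [norm_mul, norm_mul]
          gcongr <;> apply h
      _ ≤ 2 * m ^ 2 * (‖v 0‖ ^ 2 + ‖v 1‖ ^ 2) := by
          nlinarith [sq_nonneg (m * ‖v 0‖ - m * ‖v 1‖)]
  refine (abs_le_of_sq_le_sq' ?_ (by positivity)).2
  rw [norm_sq_eq_add]
  nlinarith [hcoord 0, hcoord 1]

lemma norm_det_le_sq (M : Mat) : ‖M.det‖ ≤ ‖M‖ ^ 2 := by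
  have he (i : Fin 2) : ‖act M (EuclideanSpace.single i 1)‖ ≤ ‖M‖ := by
    simpa using norm_act_le M (EuclideanSpace.single i 1)
  calc ‖M.det‖
      = ‖wedge (act M (EuclideanSpace.single 0 1)) (act M (EuclideanSpace.single 1 1))‖ := by
        rw [wedge_act]
        simp [wedge]
    _ ≤ ‖act M (EuclideanSpace.single 0 1)‖ * ‖act M (EuclideanSpace.single 1 1)‖ :=
        norm_wedge_le _ _
    _ ≤ ‖M‖ ^ 2 := by
        rw [sq]
        gcongr <;> exact he _

lemma one_le_norm_of_det_eq_one (hM : M.det = 1) : 1 ≤ ‖M‖ := by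
  have h := norm_det_le_sq M
  rw [hM, norm_one] at h
  exact (one_le_sq_iff₀ (norm_nonneg _)).mp h

lemma norm_adjugate_le (M : Mat) : ‖M.adjugate‖ ≤ 2 * ‖M‖ := by
  refine norm_le_two_mul_of_forall_entry_le fun i j => ?_
  rw [Matrix.adjugate_fin_two]
  fin_cases i <;> fin_cases j <;> simp [norm_entry_le]

lemma norm_trace_le (M : Mat) : ‖M.trace‖ ≤ 2 * ‖M‖ := by
  rw [Matrix.trace_fin_two]
  linarith [norm_add_le (M 0 0) (M 1 1), norm_entry_le M 0 0, norm_entry_le M 1 1]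

lemma log_norm_mul_le (hA : A.det = 1) (hB : B.det = 1) :
    Real.log ‖A * B‖ ≤ Real.log ‖A‖ + Real.log ‖B‖ := by
  have hpos {X : Mat} (hX : X.det = 1) : 0 < ‖X‖ := one_pos.trans_le (one_le_norm_of_det_eq_one hX)
  rw [← Real.log_mul (hpos hA).ne' (hpos hB).ne']
  exact Real.log_le_log (hpos (by rw [Matrix.det_mul, hA, hB, one_mul])) (norm_mul_le _ _)

lemma sq_eq_trace_smul_sub_det_smul (M : Mat) : M ^ 2 = M.trace • M - M.det • 1 := by
  have h := M.aeval_self_charpoly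
  rw [Matrix.charpoly_fin_two] at h
  simp only [map_add, map_sub, map_mul, map_pow, aeval_X, aeval_C, Algebra.algebraMap_eq_smul_one,
    smul_mul_assoc, one_mul] at h
  rwa [sub_add, sub_eq_zero] at h

lemma pow_add_two_eq_trace_smul_sub_det_smul (M : Mat) (k : ℕ) :
    M ^ (k + 2) = M.trace • M ^ (k + 1) - M.det • M ^ k := by
  rw [pow_add, sq_eq_trace_smul_sub_det_smul, mul_sub, mul_smul_comm, mul_smul_comm, mul_one,
    ← pow_succ]

lemma norm_pow_le_of_det_eq_one (hM : M.det = 1) (k : ℕ) :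
    ‖M ^ k‖ ≤ ‖M‖ * (‖M.trace‖ + 1) ^ k := by
  have hone := one_le_norm_of_det_eq_one hM
  have htr : 0 ≤ ‖M.trace‖ := norm_nonneg _
  induction k using Nat.twoStepInduction with
  | zero => simpa using hone
  | one =>
    rw [pow_one, pow_one]
    nlinarith
  | more k ih₀ ih₁ =>
    rw [pow_add_two_eq_trace_smul_sub_det_smul, hM, one_smul]
    calc ‖M.trace • M ^ (k + 1) - M ^ k‖
        ≤ ‖M.trace‖ * ‖M ^ (k + 1)‖ + ‖M ^ k‖ := by
          rw [← norm_smul]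
          exact norm_sub_le _ _
      _ ≤ ‖M.trace‖ * (‖M‖ * (‖M.trace‖ + 1) ^ (k + 1)) + ‖M‖ * (‖M.trace‖ + 1) ^ k := by gcongr
      _ = ‖M‖ * (‖M.trace‖ + 1) ^ k * (‖M.trace‖ * (‖M.trace‖ + 1) + 1) := by ring
      _ ≤ ‖M‖ * (‖M.trace‖ + 1) ^ k * (‖M.trace‖ + 1) ^ 2 := by
          gcongr
          nlinarith
      _ = ‖M‖ * (‖M.trace‖ + 1) ^ (k + 2) := by ring

lemma trace_pow_eq_add {μ ν : ℂ} (htr : M.trace = μ + ν) (hdet : M.det = μ * ν) (k : ℕ) :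
    (M ^ k).trace = μ ^ k + ν ^ k := by
  induction k using Nat.twoStepInduction with
  | zero => norm_num [Matrix.trace_fin_two]
  | one => simpa using htr
  | more k ih₀ ih₁ =>
    rw [pow_add_two_eq_trace_smul_sub_det_smul, Matrix.trace_sub, Matrix.trace_smul,
      Matrix.trace_smul, ih₀, ih₁, htr, hdet, smul_eq_mul, smul_eq_mul]
    ring

end TwoByTwo

/-! ### Ordered products -/

/-- The product `F (n - 1) * ⋯ * F 0`, later factors on the left. -/
def orderedProd {R : Type*} [Monoid R] (F : ℕ → R) : ℕ → R
  | 0 => 1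
  | n + 1 => F n * orderedProd F n

section OrderedProd

variable {R S : Type*} [Monoid R] [Monoid S]

lemma orderedProd_add (F : ℕ → R) (m n : ℕ) :
    orderedProd F (m + n) = orderedProd (fun j => F (j + m)) n * orderedProd F m := by
  induction n with
  | zero => simp [orderedProd]
  | succ n ih => rw [← add_assoc, orderedProd, ih, orderedProd, mul_assoc, add_comm n m]

lemma orderedProd_const (x : R) (n : ℕ) : orderedProd (fun _ => x) n = x ^ n := by
  induction n with
  | zero => rw [orderedProd, pow_zero]
  | succ n ih => rw [orderedProd, ih, pow_succ']

lemma map_orderedProd (f : R →* S) (F : ℕ → R) (n : ℕ) :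
    f (orderedProd F n) = orderedProd (fun j => f (F j)) n := by
  induction n with
  | zero => exact map_one f
  | succ n ih => rw [orderedProd, map_mul, ih, orderedProd]

lemma orderedProd_mul_of_periodic {F : ℕ → R} {m : ℕ} (hF : Function.Periodic F m) (k : ℕ) :
    orderedProd F (m * k) = orderedProd F m ^ k := by
  have hshift : (fun j => F (j + m)) = F := funext hF
  induction k with
  | zero => simp [orderedProd]
  | succ k ih => rw [mul_add, mul_one, add_comm (m * k), orderedProd_add, hshift, ih, ← pow_succ]

lemma orderedProd_eq_prod_reverse (F : ℕ → R) (n : ℕ) :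
    orderedProd F n = (((List.range n).reverse).map F).prod := by
  induction n with
  | zero => rfl
  | succ n ih => rw [orderedProd, ih, List.range_succ]; simp

lemma orderedProd_smul (a : ℕ → ℂ) (F : ℕ → Mat) (n : ℕ) :
    orderedProd (fun j => a j • F j) n = (∏ j ∈ Finset.range n, a j) • orderedProd F n := by
  induction n with
  | zero => simp [orderedProd]
  | succ n ih =>
    rw [orderedProd, ih, orderedProd, Finset.prod_range_succ, smul_mul_smul_comm, mul_comm (a n)]

variable {F G : ℕ → Mat} {C : ℝ}

lemma det_orderedProd_eq_one (hF : ∀ j, (F j).det = 1) (n : ℕ) : (orderedProd F n).det = 1 := by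
  induction n with
  | zero => simp [orderedProd]
  | succ n ih => simp [orderedProd, Matrix.det_mul, ih, hF]

lemma norm_orderedProd_le (hF : ∀ j, ‖F j‖ ≤ C) (n : ℕ) : ‖orderedProd F n‖ ≤ C ^ n := by
  induction n with
  | zero => simp [orderedProd]
  | succ n ih =>
    have hC : 0 ≤ C := (norm_nonneg _).trans (hF 0)
    rw [orderedProd, pow_succ']
    exact (norm_mul_le _ _).trans (mul_le_mul (hF n) ih (norm_nonneg _) hC)

lemma norm_orderedProd_sub_le {ε : ℝ} (n : ℕ) (hC : 1 ≤ C) (hF : ∀ j, ‖F j‖ ≤ C)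
    (hG : ∀ j, ‖G j‖ ≤ C) (hFG : ∀ j < n, ‖F j - G j‖ ≤ ε) :
    ‖orderedProd F n - orderedProd G n‖ ≤ n * C ^ n * ε := by
  induction n with
  | zero => simp [orderedProd]
  | succ n ih =>
    have hprev := ih fun j hj => hFG j (by omega)
    have hlast := hFG n (by omega)
    have hε : 0 ≤ ε := (norm_nonneg _).trans hlast
    calc ‖orderedProd F (n + 1) - orderedProd G (n + 1)‖
        = ‖F n * (orderedProd F n - orderedProd G n) + (F n - G n) * orderedProd G n‖ := by
          simp only [orderedProd]
          noncomm_ring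
      _ ≤ ‖F n‖ * ‖orderedProd F n - orderedProd G n‖ + ‖F n - G n‖ * ‖orderedProd G n‖ :=
          (norm_add_le _ _).trans (add_le_add (norm_mul_le _ _) (norm_mul_le _ _))
      _ ≤ C * (n * C ^ n * ε) + ε * C ^ n := by
          gcongr
          · exact hF n
          · exact norm_orderedProd_le hG n
      _ ≤ C * (n * C ^ n * ε) + ε * C ^ (n + 1) := by
          gcongr
          omega
      _ = (n + 1 : ℕ) * C ^ (n + 1) * ε := by
          push_cast
          ring

lemma pow_mul_le_of_two_mul_le {w : ℕ → ℝ} {κ : ℝ} (hκ : 1 ≤ κ) (hw : ∀ k, 0 ≤ w k)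
    (hinit : κ * w 0 ≤ w 1) (hstep : ∀ k, 2 * κ * w (k + 1) ≤ w (k + 2) + w k) (k : ℕ) :
    κ ^ k * w 0 ≤ w k := by
  have hgrow (k : ℕ) : κ * w k ≤ w (k + 1) := by
    induction k with
    | zero => exact hinit
    | succ k ih => nlinarith [hstep k, hw k, hw (k + 1)]
  induction k with
  | zero => simp
  | succ k ih =>
    calc κ ^ (k + 1) * w 0 = κ * (κ ^ k * w 0) := by ring
      _ ≤ κ * w k := by gcongr
      _ ≤ w (k + 1) := hgrow k

lemma pow_le_norm_orderedProd (hF : ∀ j, (F j).det = 1) {n : ℕ} {Γ κ : ℝ} (hΓ : 0 < Γ)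
    (hκ : 1 < κ) (hup : ∀ m, ‖orderedProd (fun j => F (j + m)) n‖ ≤ Γ)
    (hlow : ∀ m, 2 * Γ * κ ≤ ‖orderedProd (fun j => F (j + m)) (2 * n)‖) (N : ℕ) :
    κ ^ N ≤ ‖orderedProd F (n * N)‖ := by
  set B : ℕ → Mat := fun m => orderedProd (fun j => F (j + m)) n with hB
  have htwo (m : ℕ) : orderedProd (fun j => F (j + m)) (2 * n) = B (m + n) * B m := by
    rw [two_mul, orderedProd_add]
    simp only [hB, add_assoc, add_comm m n]
  simp only [htwo] at hlow
  have hB₀ : κ < ‖B 0‖ := by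
    have h : Γ * (2 * κ) ≤ Γ * ‖B 0‖ :=
      calc Γ * (2 * κ) = 2 * Γ * κ := by ring
        _ ≤ ‖B (0 + n)‖ * ‖B 0‖ := (hlow 0).trans (norm_mul_le _ _)
        _ ≤ Γ * ‖B 0‖ := by gcongr; exact hup _
    linarith [le_of_mul_le_mul_left h hΓ]
  obtain ⟨y, hy⟩ : ∃ y : Vec, κ * ‖y‖ < ‖act (B 0) y‖ := by
    by_contra! h
    exact hB₀.not_ge (norm_le_of_forall_norm_act_le (by linarith) h)
  set w : ℕ → Vec := fun k => act (orderedProd F (n * k)) y with hw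
  have hw₀ : w 0 = y := by simp [hw, orderedProd]
  have hw_succ (k : ℕ) : w (k + 1) = act (B (n * k)) (w k) := by
    simp only [hw]
    rw [mul_add, mul_one, orderedProd_add, act_mul]
  have hy₀ : 0 < ‖y‖ := by
    refine norm_pos_iff.mpr ?_
    rintro rfl
    simp at hy
  refine le_of_mul_le_mul_right ?_ hy₀
  calc κ ^ N * ‖y‖ = κ ^ N * ‖w 0‖ := by rw [hw₀]
    _ ≤ ‖w N‖ := by
        refine pow_mul_le_of_two_mul_le (w := fun k => ‖w k‖) hκ.le (fun k => norm_nonneg _) ?_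
          (fun k => ?_) N
        · simpa only [zero_add, hw_succ 0, hw₀, mul_zero] using hy.le
        · rw [hw_succ (k + 1), hw_succ k]
          exact two_mul_norm_act_le hΓ (hup _) (hup _) (det_orderedProd_eq_one (fun _ => hF _) n)
            (by simpa only [mul_add, mul_one] using hlow (n * k)) _
    _ ≤ ‖orderedProd F (n * N)‖ * ‖y‖ := norm_act_le _ _

end OrderedProd

/-! ### Uniform equidistribution of irrational rotations -/

section Periodic

lemma uniformContinuous_of_periodic {X : Type*} [UniformSpace X] {f : ℝ → X}
    (hper : Function.Periodic f 1) (hf : Continuous f) : UniformContinuous f := by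
  have : Fact ((0 : ℝ) < 1) := ⟨one_pos⟩
  have hlift : Continuous (hper.lift : AddCircle (1 : ℝ) → X) := continuous_coinduced_dom.mpr hf
  have hmk : UniformContinuous ((↑) : ℝ → AddCircle (1 : ℝ)) :=
    uniformContinuous_addMonoidHom_of_continuous
      (f := QuotientAddGroup.mk' (AddSubgroup.zmultiples (1 : ℝ))) (AddCircle.continuous_mk' 1)
  exact (CompactSpace.uniformContinuous_of_continuous hlift).comp hmk

lemma exists_norm_le_of_periodic {V : Type*} [SeminormedAddCommGroup V] {f : ℝ → V}
    (hper : Function.Periodic f 1) (hf : Continuous f) : ∃ C, ∀ x, ‖f x‖ ≤ C := by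
  obtain ⟨C, hC⟩ := isCompact_Icc.exists_bound_of_continuousOn (s := Set.Icc (0 : ℝ) (0 + 1))
    hf.continuousOn
  refine ⟨C, fun x => ?_⟩
  obtain ⟨y, hy, hxy⟩ := hper.exists_mem_Ico one_pos x 0
  rw [hxy]
  exact hC y (Set.Ico_subset_Icc_self hy)

end Periodic

section Rotation

lemma eventually_lt_den {b : ℝ} (hb : Irrational b) (D : ℕ) :
    ∀ᶠ r : ℚ in Filter.comap (↑) (nhds b), D < r.den := by
  obtain ⟨ε, hfar, hε⟩ : ∃ ε : ℝ, (∀ r : ℚ, r.den ≤ D → ε ≤ dist b r) ∧ 0 < ε :=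
    ((hb.eventually_forall_le_dist_cast_rat_of_den_le D).filter_mono nhdsWithin_le_nhds
      |>.and self_mem_nhdsWithin).exists (f := nhdsWithin 0 (Set.Ioi 0))
  refine Filter.eventually_comap.mpr (Filter.mem_of_superset (Metric.ball_mem_nhds b hε) ?_)
  rintro _ hball r rfl
  by_contra! hle
  exact (Metric.mem_ball'.mp hball).not_ge (hfar r hle)

lemma exists_rat_lt_den_and_abs_sub_le {b : ℝ} (hb : Irrational b) (D : ℕ) :
    ∃ r : ℚ, D < r.den ∧ |b - r| ≤ 1 / (r.den : ℝ) ^ 2 := by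
  obtain ⟨η, hη, hball⟩ :=
    Metric.eventually_nhds_iff.mp (Filter.eventually_comap.mp (eventually_lt_den hb D))
  obtain ⟨n, hn⟩ := exists_nat_gt (1 / η)
  have hn₀ : (0 : ℝ) < n := (one_div_pos.mpr hη).trans hn
  obtain ⟨r, hr, hden⟩ := Real.exists_rat_abs_sub_le_and_den_le b (by exact_mod_cast hn₀)
  have hden₁ : (1 : ℝ) ≤ r.den := by exact_mod_cast r.pos
  have hdenn : (r.den : ℝ) ≤ n := by exact_mod_cast hden
  refine ⟨r, hball ?_ r rfl, hr.trans ?_⟩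
  · rw [dist_comm, Real.dist_eq]
    refine hr.trans_lt ?_
    rw [div_lt_comm₀ (by positivity) hη]
    nlinarith
  · gcongr
    nlinarith

lemma sum_range_natCast_zmod {A : Type*} [AddCommMonoid A] (q : ℕ) [NeZero q] (g : ZMod q → A) :
    ∑ j ∈ Finset.range q, g j = ∑ a, g a :=
  Finset.sum_bij' (fun j _ => (j : ZMod q)) (fun a _ => a.val) (by simp)
    (fun a _ => Finset.mem_range.mpr a.val_lt)
    (fun _ hj => ZMod.val_cast_of_lt (Finset.mem_range.mp hj)) (by simp) (by simp)

lemma sum_range_mul_eq_of_isCoprime {A : Type*} [AddCommMonoid A] {q : ℕ} [NeZero q] {a : ℤ}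
    (ha : IsCoprime a q) {G : ℤ → A} (hG : Function.Periodic G q) :
    ∑ j ∈ Finset.range q, G (j * a) = ∑ j ∈ Finset.range q, G j := by
  set g : ZMod q → A := fun u => G u.cast with hg
  have hgG (i : ℤ) : G i = g i :=
    calc G i = G (i % q + i / q * q) := by rw [mul_comm, Int.emod_add_mul_ediv]
      _ = G (i % q) := hG.int_mul (i / q) (i % q)
      _ = g i := by simp only [hg, ZMod.coe_intCast]
  obtain ⟨u, hu⟩ := (ZMod.coe_int_isUnit_iff_isCoprime a q).mpr ha.symm
  calc ∑ j ∈ Finset.range q, G (j * a) = ∑ j ∈ Finset.range q, g (j * u) := by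
        simp only [hgG, hu, Int.cast_mul, Int.cast_natCast]
    _ = ∑ v, g (v * u) := sum_range_natCast_zmod q fun v => g (v * u)
    _ = ∑ v, g v := Equiv.sum_comp u.mulRight g
    _ = ∑ j ∈ Finset.range q, G j := by
        simp only [← sum_range_natCast_zmod, hgG, Int.cast_natCast]

variable {f : ℝ → ℝ}

lemma sum_integral_div_eq (hper : Function.Periodic f 1) (hf : Continuous f) {q : ℕ} (hq : 0 < q)
    (x : ℝ) :
    ∑ j ∈ Finset.range q, ∫ s in (x + j / q)..(x + (j + 1) / q), f s = ∫ s in (0 : ℝ)..1, f s := by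
  have hadj := intervalIntegral.sum_integral_adjacent_intervals (μ := volume) (f := f)
    (a := fun k : ℕ => x + k / q) (n := q) fun k _ => hf.intervalIntegrable _ _
  have hq' : (q : ℝ) ≠ 0 := by positivity
  push_cast at hadj
  rw [hadj, zero_div, add_zero, div_self hq', hper.intervalIntegral_add_eq x 0, zero_add]

lemma abs_sub_mul_integral_le (hf : Continuous f) {q : ℝ} (hq : 0 < q) {y a η : ℝ}
    (hη : ∀ s ∈ Set.Icc a (a + 1 / q), |f y - f s| ≤ η) :
    |f y - q * ∫ s in a..(a + 1 / q), f s| ≤ η := by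
  have hle : a ≤ a + 1 / q := by simpa using hq.le
  have hint : f y - q * ∫ s in a..(a + 1 / q), f s = q * ∫ s in a..(a + 1 / q), (f y - f s) := by
    rw [intervalIntegral.integral_sub (by simp) (hf.intervalIntegrable _ _),
      intervalIntegral.integral_const, smul_eq_mul]
    field_simp
    ring
  have hbound := intervalIntegral.norm_integral_le_of_norm_le_const
    (f := fun s => f y - f s) (a := a) (b := a + 1 / q) (C := η) fun s hs => by
      rw [Set.uIoc_of_le hle] at hs
      exact hη s (Set.Ioc_subset_Icc_self hs)
  rw [add_sub_cancel_left, abs_of_pos (by positivity), Real.norm_eq_abs] at hbound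
  rw [hint, abs_mul, abs_of_pos hq]
  calc q * |∫ s in a..(a + 1 / q), (f y - f s)| ≤ q * (η * (1 / q)) := by gcongr
    _ = η := by field_simp

-- The orbit point `x + j b` is within `1/q` of `x + j p/q`, and `j ↦ j p` permutes the residues
-- modulo `q`.
lemma abs_sum_sub_den_mul_integral_le (hper : Function.Periodic f 1) (hf : Continuous f) {b : ℝ}
    {r : ℚ} (hr : |b - r| ≤ 1 / (r.den : ℝ) ^ 2) {η : ℝ}
    (hη : ∀ s t : ℝ, |s - t| ≤ 2 / r.den → |f s - f t| ≤ η) (x : ℝ) :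
    |∑ j ∈ Finset.range r.den, f (x + j * b) - r.den * ∫ y in (0 : ℝ)..1, f y| ≤ r.den * η := by
  have : NeZero r.den := ⟨r.den_nz⟩
  have hq : (0 : ℝ) < r.den := by exact_mod_cast r.pos
  have hrat : (r : ℝ) = r.num / r.den := by exact_mod_cast (Rat.num_div_den r).symm
  set I : ℤ → ℝ := fun i => ∫ s in (x + i / r.den)..(x + i / r.den + 1 / r.den), f s with hI
  have hIper : Function.Periodic I r.den := fun i => by
    have hshift : x + ((i + r.den : ℤ) : ℝ) / r.den = x + i / r.den + 1 := by
      push_cast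
      field_simp
      ring
    simp only [hI, hshift, add_right_comm _ (1 : ℝ) (1 / (r.den : ℝ))]
    rw [← intervalIntegral.integral_comp_add_right]
    simp only [hper _]
  have hsum : ∑ j ∈ Finset.range r.den, I (j * r.num) = ∫ y in (0 : ℝ)..1, f y := by
    have hcop : IsCoprime r.num r.den := Rat.isCoprime_num_den r
    rw [sum_range_mul_eq_of_isCoprime hcop hIper, ← sum_integral_div_eq hper hf r.pos x]
    simp only [hI, Int.cast_natCast, add_assoc, add_div]
  have hterm (j : ℕ) (hj : j < r.den) : |f (x + j * b) - r.den * I (j * r.num)| ≤ η := by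
    refine abs_sub_mul_integral_le hf hq fun s hs => hη _ _ ?_
    have hclose : |(j : ℝ) * b - (j * r.num : ℤ) / r.den| ≤ 1 / r.den := by
      have hjq : (j : ℝ) ≤ r.den := by exact_mod_cast hj.le
      calc |(j : ℝ) * b - (j * r.num : ℤ) / r.den| = j * |b - r| := by
            rw [← Nat.abs_cast j, ← abs_mul, Nat.abs_cast, hrat]
            push_cast
            ring_nf
        _ ≤ r.den * (1 / (r.den : ℝ) ^ 2) := by gcongr
        _ = 1 / r.den := by field_simp
    have htwo : (2 : ℝ) / r.den = 1 / r.den + 1 / r.den := by ring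
    rw [abs_le] at hclose ⊢
    constructor <;> linarith [hs.1, hs.2, hclose.1, hclose.2]
  rw [← hsum, Finset.mul_sum, ← Finset.sum_sub_distrib]
  calc _ ≤ ∑ j ∈ Finset.range r.den, |f (x + j * b) - r.den * I (j * r.num)| :=
        Finset.abs_sum_le_sum_abs _ _
    _ ≤ ∑ _j ∈ Finset.range r.den, η :=
        Finset.sum_le_sum fun j hj => hterm j (Finset.mem_range.mp hj)
    _ = r.den * η := by simp

lemma abs_sum_range_le_of_block {g : ℕ → ℝ} {q : ℕ} (hq : 0 < q) {η C : ℝ}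
    (hblock : ∀ m, |∑ j ∈ Finset.range q, g (m + j)| ≤ q * η) (hC : ∀ j, |g j| ≤ C) (n : ℕ) :
    |∑ j ∈ Finset.range n, g j| ≤ n * η + q * C := by
  have hC₀ : 0 ≤ C := (abs_nonneg _).trans (hC 0)
  have hq' : (0 : ℝ) < q := by exact_mod_cast hq
  have hη : 0 ≤ η := nonneg_of_mul_nonneg_right ((abs_nonneg _).trans (hblock 0)) hq'
  induction n using Nat.strong_induction_on generalizing g with
  | _ n ih =>
    rcases lt_or_ge n q with hnq | hqn
    · calc |∑ j ∈ Finset.range n, g j| ≤ ∑ _j ∈ Finset.range n, C :=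
            (Finset.abs_sum_le_sum_abs _ _).trans (Finset.sum_le_sum fun _ _ => hC _)
        _ = n * C := by simp
        _ ≤ q * C := by gcongr
        _ ≤ n * η + q * C := le_add_of_nonneg_left (by positivity)
    · obtain ⟨m, rfl⟩ := Nat.exists_eq_add_of_le hqn
      have hrest := ih m (by omega) (g := fun j => g (q + j))
        (fun i => by simpa only [add_assoc] using hblock (q + i)) fun j => hC _
      have hfirst := hblock 0
      simp only [zero_add] at hfirst
      rw [Finset.sum_range_add]
      push_cast
      linarith [abs_add_le (∑ j ∈ Finset.range q, g j) (∑ j ∈ Finset.range m, g (q + j))]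

theorem eventually_abs_sum_sub_mul_integral_le (hper : Function.Periodic f 1) (hf : Continuous f)
    {b : ℝ} (hb : Irrational b) {η : ℝ} (hη : 0 < η) :
    ∀ᶠ n : ℕ in Filter.atTop, ∀ x,
      |∑ j ∈ Finset.range n, f (x + j * b) - n * ∫ y in (0 : ℝ)..1, f y| ≤ n * η := by
  set m := ∫ y in (0 : ℝ)..1, f y
  obtain ⟨C, hC⟩ := exists_norm_le_of_periodic (f := fun x => f x - m)
    (fun x => congrArg (· - m) (hper x)) (by fun_prop)
  obtain ⟨δ, hδ, hmod⟩ := Metric.uniformContinuous_iff.mp (uniformContinuous_of_periodic hper hf)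
    (η / 2) (by positivity)
  obtain ⟨D, hD⟩ := exists_nat_gt (2 / δ)
  obtain ⟨r, hrD, hr⟩ := exists_rat_lt_den_and_abs_sub_le hb D
  have hδr : 2 / (r.den : ℝ) < δ := by
    rw [div_lt_comm₀ (by exact_mod_cast r.pos) hδ]
    exact hD.trans (by exact_mod_cast hrD)
  have hblock (x : ℝ) := abs_sum_sub_den_mul_integral_le hper hf hr
    (fun s t hst => (hmod (hst.trans_lt hδr)).le) x
  filter_upwards [Filter.eventually_ge_atTop ⌈r.den * C / (η / 2)⌉₊] with n hn x
  have hlarge : r.den * C ≤ n * (η / 2) := (div_le_iff₀ (by positivity)).mp (Nat.ceil_le.mp hn)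
  have hsub (k : ℕ) (y : ℝ) : ∑ j ∈ Finset.range k, (f (y + j * b) - m) =
      ∑ j ∈ Finset.range k, f (y + j * b) - k * m := by simp
  have h := abs_sum_range_le_of_block (g := fun j => f (x + j * b) - m) r.pos
    (fun i => by
      have h := hblock (x + i * b)
      rw [← hsub] at h
      simpa only [Nat.cast_add, add_mul, add_assoc] using h)
    (fun j => hC _) n
  rw [hsub] at h
  linarith

end Rotation

/-! ### Cocycles over a rotation -/

/-- Continuous one-periodic maps `ℝ → SL(2, ℂ)`, the generators of cocycles over rotations of
`ℝ / ℤ`. -/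
structure IsSL2Cocycle (A : ℝ → Mat) : Prop where
  continuous : Continuous A
  periodic : Function.Periodic A 1
  det_eq_one : ∀ x, (A x).det = 1

/-- The iterate `A (x + (n - 1) a) ⋯ A (x + a) A x` of the cocycle `A` over the rotation by `a`. -/
noncomputable def cocycleIter (A : ℝ → Mat) (a : ℝ) (n : ℕ) (x : ℝ) : Mat :=
  orderedProd (fun j => A (x + j * a)) n

/-- The average over `x` of the logarithmic growth of the `n`-th iterate. -/
noncomputable def meanLogNorm (A : ℝ → Mat) (a : ℝ) (n : ℕ) : ℝ :=
  ∫ x in (0 : ℝ)..1, Real.log ‖cocycleIter A a n x‖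

/-- The Lyapunov exponent, as the infimum of the subadditive averages. -/
noncomputable def lyapExp (A : ℝ → Mat) (a : ℝ) : ℝ :=
  ⨅ n : ℕ+, (n : ℝ)⁻¹ * meanLogNorm A a n

lemma orderedProd_shift_eq_cocycleIter (A : ℝ → Mat) (a : ℝ) (m n : ℕ) (x : ℝ) :
    orderedProd (fun j => A (x + (j + m : ℕ) * a)) n = cocycleIter A a n (x + m * a) := by
  rw [cocycleIter]
  congr! 3
  push_cast
  ring

lemma cocycleIter_add (A : ℝ → Mat) (a : ℝ) (m n : ℕ) (x : ℝ) :
    cocycleIter A a (m + n) x = cocycleIter A a n (x + m * a) * cocycleIter A a m x := by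
  rw [← orderedProd_shift_eq_cocycleIter, cocycleIter, cocycleIter, orderedProd_add]

namespace IsSL2Cocycle

variable {A : ℝ → Mat} (hA : IsSL2Cocycle A) (a : ℝ) (n : ℕ)

include hA

lemma det_iter (x : ℝ) : (cocycleIter A a n x).det = 1 :=
  det_orderedProd_eq_one (fun _ => hA.det_eq_one _) n

lemma one_le_norm_iter (x : ℝ) : 1 ≤ ‖cocycleIter A a n x‖ :=
  one_le_norm_of_det_eq_one (hA.det_iter a n x)

lemma norm_iter_pos (x : ℝ) : 0 < ‖cocycleIter A a n x‖ :=
  one_pos.trans_le (hA.one_le_norm_iter a n x)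

lemma log_norm_iter_nonneg (x : ℝ) : 0 ≤ Real.log ‖cocycleIter A a n x‖ :=
  Real.log_nonneg (hA.one_le_norm_iter a n x)

lemma periodic_iter : Function.Periodic (cocycleIter A a n) 1 := fun x => by
  simp only [cocycleIter, add_right_comm x 1, hA.periodic _]

lemma continuous_iter : Continuous (cocycleIter A a n) := by
  induction n with
  | zero => exact continuous_const
  | succ n ih => exact (hA.continuous.comp (by fun_prop)).mul ih

lemma continuous_log_norm_iter : Continuous fun x => Real.log ‖cocycleIter A a n x‖ :=
  (hA.continuous_iter a n).norm.log fun x => (hA.norm_iter_pos a n x).ne'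

lemma exists_norm_le : ∃ C, 1 ≤ C ∧ ∀ x, ‖A x‖ ≤ C := by
  obtain ⟨C, hC⟩ := exists_norm_le_of_periodic hA.periodic hA.continuous
  exact ⟨C, (one_le_norm_of_det_eq_one (hA.det_eq_one 0)).trans (hC 0), hC⟩

lemma meanLogNorm_nonneg : 0 ≤ meanLogNorm A a n :=
  intervalIntegral.integral_nonneg zero_le_one fun x _ => hA.log_norm_iter_nonneg a n x

lemma lyapExp_nonneg : 0 ≤ lyapExp A a :=
  le_ciInf fun n => mul_nonneg (by positivity) (hA.meanLogNorm_nonneg a n)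

lemma mul_lyapExp_le_meanLogNorm : n * lyapExp A a ≤ meanLogNorm A a n := by
  rcases n.eq_zero_or_pos with rfl | hn
  · simpa using hA.meanLogNorm_nonneg a 0
  · have hbdd : BddBelow (Set.range fun n : ℕ+ => (n : ℝ)⁻¹ * meanLogNorm A a n) := by
      refine ⟨0, ?_⟩
      rintro _ ⟨k, rfl⟩
      exact mul_nonneg (by positivity) (hA.meanLogNorm_nonneg a k)
    have h := ciInf_le hbdd ⟨n, hn⟩
    rw [PNat.mk_coe, inv_mul_eq_div, le_div_iff₀ (by exact_mod_cast hn)] at h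
    rwa [mul_comm]

lemma log_norm_iter_add_le (m : ℕ) (x : ℝ) :
    Real.log ‖cocycleIter A a (m + n) x‖ ≤
      Real.log ‖cocycleIter A a m x‖ + Real.log ‖cocycleIter A a n (x + m * a)‖ := by
  rw [cocycleIter_add, add_comm (Real.log _)]
  exact log_norm_mul_le (hA.det_iter a n _) (hA.det_iter a m _)

lemma log_norm_iter_mul_le_sum (m k : ℕ) (x : ℝ) :
    Real.log ‖cocycleIter A a (m * k) x‖ ≤
      ∑ j ∈ Finset.range k, Real.log ‖cocycleIter A a m (x + j * (m * a))‖ := by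
  induction k with
  | zero => simp [cocycleIter, orderedProd]
  | succ k ih =>
    have hshift : x + (m * k : ℕ) * a = x + k * (m * a) := by
      push_cast
      ring
    rw [mul_add, mul_one, Finset.sum_range_succ, ← hshift]
    linarith [hA.log_norm_iter_add_le a m (m * k) x]

lemma log_norm_iter_le {C : ℝ} (hC : ∀ x, ‖A x‖ ≤ C) (x : ℝ) :
    Real.log ‖cocycleIter A a n x‖ ≤ n * Real.log C := by
  rw [← Real.log_pow]
  exact Real.log_le_log (hA.norm_iter_pos a n x) (norm_orderedProd_le (fun _ => hC _) n)

variable {a}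

lemma eventually_log_norm_iter_le_of_meanLogNorm_le (ha : Irrational a) {m : ℕ} (hm : 0 < m)
    {u v : ℝ} (hu : meanLogNorm A a m ≤ m * u) (hu₀ : 0 ≤ u) (huv : u < v) :
    ∀ᶠ n : ℕ in Filter.atTop, ∀ x, Real.log ‖cocycleIter A a n x‖ ≤ n * v := by
  obtain ⟨C, hC₁, hC⟩ := hA.exists_norm_le
  have hlogC := Real.log_nonneg hC₁
  have hm' : (0 : ℝ) < m := by exact_mod_cast hm
  have hδ : 0 < (v - u) / 2 := by linarith
  have hweyl := eventually_abs_sum_sub_mul_integral_le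
    (fun x => by simp only [hA.periodic_iter a m x]) (hA.continuous_log_norm_iter a m)
    (ha.natCast_mul hm.ne') (mul_pos hm' hδ)
  filter_upwards [(Nat.tendsto_div_const_atTop hm.ne').eventually hweyl,
    Filter.eventually_ge_atTop ⌈m * Real.log C / ((v - u) / 2)⌉₊] with n hn hlarge x
  have hrem : (n % m : ℕ) * Real.log C ≤ m * Real.log C := by
    gcongr
    exact (Nat.mod_lt n hm).le
  have hmn : (m : ℝ) * (n / m : ℕ) ≤ n := by exact_mod_cast Nat.mul_div_le n m
  calc Real.log ‖cocycleIter A a n x‖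
      = Real.log ‖cocycleIter A a (m * (n / m) + n % m) x‖ := by rw [Nat.div_add_mod]
    _ ≤ Real.log ‖cocycleIter A a (m * (n / m)) x‖ + m * Real.log C :=
        (hA.log_norm_iter_add_le a _ _ x).trans
          (add_le_add_right ((hA.log_norm_iter_le a _ hC _).trans hrem) _)
    _ ≤ (n / m : ℕ) * (m * u) + (n / m : ℕ) * (m * ((v - u) / 2)) + m * Real.log C := by
        have hsum := hA.log_norm_iter_mul_le_sum a m (n / m) x
        have hmean : (n / m : ℕ) * meanLogNorm A a m ≤ (n / m : ℕ) * (m * u) := by gcongr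
        have hweylx := (abs_le.mp (hn x)).2
        rw [meanLogNorm] at hmean
        linarith
    _ = m * (n / m : ℕ) * (u + (v - u) / 2) + m * Real.log C := by ring
    _ ≤ n * (u + (v - u) / 2) + n * ((v - u) / 2) :=
        add_le_add (mul_le_mul_of_nonneg_right hmn (by linarith))
          ((div_le_iff₀ hδ).mp (Nat.ceil_le.mp hlarge))
    _ = n * v := by ring

theorem eventually_log_norm_iter_le (ha : Irrational a) {v : ℝ} (hv : lyapExp A a < v) :
    ∀ᶠ n : ℕ in Filter.atTop, ∀ x, Real.log ‖cocycleIter A a n x‖ ≤ n * v := by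
  obtain ⟨m, hm⟩ := exists_lt_of_ciInf_lt hv
  have hmean : meanLogNorm A a m ≤ m * ((m : ℝ)⁻¹ * meanLogNorm A a m) := by field_simp; rfl
  exact hA.eventually_log_norm_iter_le_of_meanLogNorm_le ha m.pos hmean
    (mul_nonneg (by positivity) (hA.meanLogNorm_nonneg a m)) hm

end IsSL2Cocycle

/-! ### Logarithmic averages of polynomials over circles -/

/-- The point of the circle of radius `exp t` about the origin with argument `2πx`. -/
noncomputable def circlePt (t x : ℝ) : ℂ :=
  Complex.exp (t + 2 * π * Complex.I * x)

lemma circlePt_periodic (t : ℝ) : Function.Periodic (circlePt t) 1 := fun x => by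
  simp only [circlePt, Complex.ofReal_add, Complex.ofReal_one, mul_add, mul_one, ← add_assoc]
  exact Complex.exp_periodic _

lemma continuous_circlePt : Continuous fun p : ℝ × ℝ => circlePt p.1 p.2 := by
  unfold circlePt
  fun_prop

lemma continuous_circlePt_right (t : ℝ) : Continuous (circlePt t) :=
  continuous_circlePt.comp (by fun_prop : Continuous fun x : ℝ => (t, x))

@[simp]
lemma norm_circlePt (t x : ℝ) : ‖circlePt t x‖ = Real.exp t := by
  simp [circlePt, Complex.norm_exp]

lemma circlePt_add (t x y : ℝ) : circlePt t (x + y) = circlePt t x * circlePt 0 y := by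
  rw [circlePt, circlePt, circlePt, ← Complex.exp_add]
  push_cast
  ring_nf

lemma norm_circlePt_sub (t x y : ℝ) :
    ‖circlePt t x - circlePt t y‖ = Real.exp t * (2 * |Real.sin (π * (x - y))|) := by
  have hone : ‖circlePt 0 (x - y) - 1‖ = 2 * |Real.sin (π * (x - y))| := by
    have h := Complex.norm_exp_I_mul_ofReal_sub_one (2 * (π * (x - y)))
    rw [mul_div_cancel_left₀ _ two_ne_zero, norm_mul, Real.norm_two, Real.norm_eq_abs] at h
    rw [← h, circlePt]
    push_cast
    ring_nf
  rw [← hone, ← norm_circlePt t y, ← norm_mul, mul_sub, mul_one, ← circlePt_add,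
    add_sub_cancel]

lemma norm_circlePt_sub_le (t x y : ℝ) :
    ‖circlePt t x - circlePt t y‖ ≤ Real.exp t * (2 * π * |x - y|) := by
  have h := Real.abs_sin_le_abs (x := π * (x - y))
  rw [abs_mul, abs_of_pos Real.pi_pos] at h
  rw [norm_circlePt_sub, mul_assoc]
  gcongr

lemma mul_abs_sub_round_le_norm_circlePt_sub (t x y : ℝ) :
    Real.exp t * (4 * |x - y - round (x - y)|) ≤ ‖circlePt t x - circlePt t y‖ := by
  set s := x - y - round (x - y) with hs
  have hsin : |Real.sin (π * (x - y))| = |Real.sin (π * s)| := by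
    rw [hs, mul_sub π (x - y), mul_comm π (round _ : ℝ), Real.sin_sub_int_mul_pi, abs_mul, abs_zpow]
    simp
  have hjordan : 2 * |s| ≤ |Real.sin (π * s)| := by
    have hround : |π * s| ≤ π / 2 := by
      rw [abs_mul, abs_of_pos Real.pi_pos]
      nlinarith [abs_sub_round (x - y), Real.pi_pos]
    have h := Real.mul_abs_le_abs_sin hround
    rwa [abs_mul, abs_of_pos Real.pi_pos, ← mul_assoc, div_mul_cancel₀ _ Real.pi_ne_zero] at h
  rw [norm_circlePt_sub, hsin]
  exact mul_le_mul_of_nonneg_left (by linarith) (Real.exp_pos t).le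

lemma circlePt_injOn (t : ℝ) : Set.InjOn (circlePt t) (Set.Ioc 0 1) := by
  intro x hx y hy hxy
  have h := mul_abs_sub_round_le_norm_circlePt_sub t x y
  rw [hxy, sub_self, norm_zero] at h
  have hint : x - y = round (x - y) := by
    rw [← sub_eq_zero, ← abs_nonpos_iff]
    by_contra! hpos
    exact absurd h (not_le.mpr (by positivity))
  have hlt : |(round (x - y) : ℝ)| < 1 := by
    rw [← hint, abs_sub_lt_iff]
    exact ⟨by linarith [hx.2, hy.1], by linarith [hx.1, hy.2]⟩
  rw [← Int.cast_abs] at hlt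
  have hzero : round (x - y) = 0 := Int.abs_lt_one_iff.mp (by exact_mod_cast hlt)
  rw [hzero, Int.cast_zero] at hint
  linarith

lemma ae_eval_circlePt_ne_zero {g : ℂ[X]} (hg : g ≠ 0) (t : ℝ) :
    ∀ᵐ x ∂volume.restrict (Set.Ioc 0 1), g.eval (circlePt t x) ≠ 0 := by
  have hfin : (Set.Ioc 0 1 ∩ circlePt t ⁻¹' {z | g.IsRoot z}).Finite :=
    Set.Finite.of_finite_image ((finite_setOfPred_isRoot hg).subset (by
      rintro _ ⟨x, hx, rfl⟩
      exact hx.2)) ((circlePt_injOn t).mono Set.inter_subset_left)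
  rw [ae_restrict_iff' measurableSet_Ioc]
  filter_upwards [hfin.countable.ae_notMem volume] with x hx hx₁ hroot
  exact hx ⟨hx₁, hroot⟩

/-- The average of `log |g|` over the circle of radius `exp t`. -/
noncomputable def logAvg (g : ℂ[X]) (t : ℝ) : ℝ :=
  ∫ x in (0 : ℝ)..1, Real.log ‖g.eval (circlePt t x)‖

/-- The polynomial `g (exp t * X)`, whose Mahler measure encodes `logAvg g t`. -/
noncomputable def dilate (t : ℝ) (g : ℂ[X]) : ℂ[X] :=
  g.comp (C (Real.exp t : ℂ) * X)

lemma dilate_zero (g : ℂ[X]) : dilate 0 g = g := by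
  simp [dilate]

lemma eval_dilate_circleMap (t : ℝ) (g : ℂ[X]) (x : ℝ) :
    (dilate t g).eval (circleMap 0 1 (2 * π * x)) = g.eval (circlePt t x) := by
  rw [dilate, eval_comp, circlePt, Complex.exp_add]
  simp [circleMap, mul_right_comm]

lemma intervalIntegrable_log_norm_eval (g : ℂ[X]) (t : ℝ) :
    IntervalIntegrable (fun x => Real.log ‖g.eval (circlePt t x)‖) volume 0 1 := by
  have h := (dilate t g).intervalIntegrable_mahlerMeasure.comp_mul_left (c := 2 * π)
  rw [zero_div, div_self Real.two_pi_pos.ne'] at h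
  simpa only [eval_dilate_circleMap] using h

lemma logAvg_eq_log_mahlerMeasure (g : ℂ[X]) (t : ℝ) :
    logAvg g t = Real.log (dilate t g).mahlerMeasure := by
  have h := intervalIntegral.integral_comp_mul_left (a := 0) (b := 1)
    (fun θ => Real.log ‖(dilate t g).eval (circleMap 0 1 θ)‖) Real.two_pi_pos.ne'
  simp only [eval_dilate_circleMap, mul_zero, mul_one] at h
  rw [← logMahlerMeasure_eq_log_MahlerMeasure, logMahlerMeasure_def, Real.circleAverage_def,
    logAvg, h]

lemma log_norm_coeff_le {g : ℂ[X]} {i : ℕ} (hi : g.coeff i ≠ 0) :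
    Real.log ‖g.coeff i‖ ≤ Real.log (g.natDegree.choose i) + logAvg g 0 := by
  have h := norm_coeff_le_choose_mul_mahlerMeasure i g
  have hpos : 0 < g.natDegree.choose i * g.mahlerMeasure := (norm_pos_iff.mpr hi).trans_le h
  have hchoose : (g.natDegree.choose i : ℝ) ≠ 0 := left_ne_zero_of_mul hpos.ne'
  rw [logAvg_eq_log_mahlerMeasure, dilate_zero,
    ← Real.log_mul hchoose (right_ne_zero_of_mul hpos.ne')]
  exact Real.log_le_log (norm_pos_iff.mpr hi) h

/-- The average of `z ↦ log |z - w|` over the circle of radius `exp t`. -/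
noncomputable def rootPotential (w : ℂ) (t : ℝ) : ℝ :=
  Real.log (max (Real.exp t) ‖w‖)

lemma mahlerMeasure_dilate_X_sub_C (t : ℝ) (w : ℂ) :
    (dilate t (X - C w)).mahlerMeasure = max (Real.exp t) ‖w‖ := by
  have h : dilate t (X - C w) = C (Real.exp t : ℂ) * X + C (-w) := by
    simp [dilate, sub_eq_add_neg]
  rw [h, mahlerMeasure_C_mul_X_add_C (by simp)]
  simp

lemma logAvg_X_sub_C (w : ℂ) (t : ℝ) : logAvg (X - C w) t = rootPotential w t := by
  rw [logAvg_eq_log_mahlerMeasure, mahlerMeasure_dilate_X_sub_C, rootPotential]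

lemma mahlerMeasure_dilate (g : ℂ[X]) (t : ℝ) :
    (dilate t g).mahlerMeasure =
      ‖g.leadingCoeff‖ * (g.roots.map fun w => max (Real.exp t) ‖w‖).prod := by
  have hfactor : dilate t g =
      C g.leadingCoeff * (g.roots.map fun w => dilate t (X - C w)).prod := by
    conv_lhs => rw [(IsAlgClosed.splits g).eq_prod_roots]
    rw [dilate, mul_comp, C_comp, multiset_prod_comp, Multiset.map_map]
    rfl
  rw [hfactor, mahlerMeasure_mul, mahlerMeasure_const, prod_mahlerMeasure_eq_mahlerMeasure_prod,
    Multiset.map_map]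
  simp only [Function.comp_def, mahlerMeasure_dilate_X_sub_C]

lemma logAvg_eq_log_leadingCoeff_add_sum {g : ℂ[X]} (hg : g ≠ 0) (t : ℝ) :
    logAvg g t =
      Real.log ‖g.leadingCoeff‖ + (g.roots.map fun w => rootPotential w t).sum := by
  have hpos : ∀ w : ℂ, 0 < max (Real.exp t) ‖w‖ := fun w => lt_max_of_lt_left (Real.exp_pos t)
  have hne : ∀ u ∈ g.roots.map fun w => max (Real.exp t) ‖w‖, u ≠ 0 := fun u hu => by
    obtain ⟨w, -, rfl⟩ := Multiset.mem_map.mp hu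
    exact (hpos w).ne'
  rw [logAvg_eq_log_mahlerMeasure, mahlerMeasure_dilate,
    Real.log_mul (by simpa using hg) (Multiset.prod_ne_zero fun h => hne 0 h rfl),
    Real.log_multiset_prod hne, Multiset.map_map]
  rfl

lemma rootPotential_zero (t : ℝ) : rootPotential 0 t = t := by
  rw [rootPotential, norm_zero, max_eq_left (Real.exp_pos t).le, Real.log_exp]

lemma rootPotential_of_ne_zero {w : ℂ} (hw : w ≠ 0) (t : ℝ) :
    rootPotential w t = max t (Real.log ‖w‖) := by
  have hw' : 0 < ‖w‖ := norm_pos_iff.mpr hw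
  rw [rootPotential, Real.strictMonoOn_log.monotoneOn.map_max (Real.exp_pos t) hw',
    Real.log_exp]

lemma convexOn_rootPotential (w : ℂ) : ConvexOn ℝ Set.univ (rootPotential w) := by
  rcases eq_or_ne w 0 with rfl | hw
  · rw [funext rootPotential_zero]
    exact convexOn_id convex_univ
  · rw [funext (rootPotential_of_ne_zero hw)]
    exact (convexOn_id convex_univ).sup (convexOn_const _ convex_univ)

lemma convexOn_logAvg (g : ℂ[X]) : ConvexOn ℝ Set.univ (logAvg g) := by
  rcases eq_or_ne g 0 with rfl | hg
  · have hzero : logAvg 0 = fun _ => 0 := funext fun t => by simp [logAvg]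
    exact hzero ▸ convexOn_const 0 convex_univ
  · rw [funext (logAvg_eq_log_leadingCoeff_add_sum hg)]
    refine (convexOn_const _ convex_univ).add ?_
    induction g.roots using Multiset.induction_on with
    | empty => simpa using convexOn_const (0 : ℝ) convex_univ
    | cons w s ih =>
      simp only [Multiset.map_cons, Multiset.sum_cons]
      exact (convexOn_rootPotential w).add ih

lemma two_mul_le_add_of_convexOn {s : Set ℝ} {f : ℝ → ℝ} (hf : ConvexOn ℝ s f) {t h : ℝ}
    (h₁ : t + h ∈ s) (h₂ : t - h ∈ s) : 2 * f t ≤ f (t + h) + f (t - h) := by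
  have hmid := hf.2 h₁ h₂ (by norm_num : (0 : ℝ) ≤ 1 / 2) (by norm_num : (0 : ℝ) ≤ 1 / 2)
    (by norm_num)
  simp only [smul_eq_mul] at hmid
  rw [show 1 / 2 * (t + h) + 1 / 2 * (t - h) = t by ring] at hmid
  linarith

/-- The open annulus of logarithmic width `h` around the circle of radius `exp t`. -/
def annulus (t h : ℝ) : Set ℂ :=
  {w | ‖w‖ ∈ Set.Ioo (Real.exp (t - h / 2)) (Real.exp (t + h / 2))}

open Classical in
/-- The roots of `g` in `annulus t h`, with multiplicity. -/
noncomputable def annulusRoots (g : ℂ[X]) (t h : ℝ) : Multiset ℂ :=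
  g.roots.filter (· ∈ annulus t h)

lemma half_le_rootPotential_second_difference {w : ℂ} {t h : ℝ}
    (hw : w ∈ annulus t h) :
    h / 2 ≤ rootPotential w (t + h) + rootPotential w (t - h) - 2 * rootPotential w t := by
  have hpos : 0 < ‖w‖ := (Real.exp_pos _).trans hw.1
  have hlow := (Real.lt_log_iff_exp_lt hpos).mpr hw.1
  have hup := (Real.log_lt_iff_lt_exp hpos).mpr hw.2
  simp only [rootPotential_of_ne_zero (norm_pos_iff.mp hpos)]
  have hleft := le_max_left (t + h) (Real.log ‖w‖)
  have hright := le_max_right (t - h) (Real.log ‖w‖)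
  rcases max_cases t (Real.log ‖w‖) with ⟨hmax, -⟩ | ⟨hmax, -⟩ <;> rw [hmax] <;> linarith

lemma card_annulusRoots_mul_le {g : ℂ[X]} (hg : g ≠ 0) (t h : ℝ) :
    (annulusRoots g t h).card * (h / 2) ≤ logAvg g (t + h) + logAvg g (t - h) - 2 * logAvg g t := by
  classical
  have hsum (s : Multiset ℂ) :
      (s.filter (· ∈ annulus t h)).card * (h / 2) ≤
        (s.map fun w => rootPotential w (t + h)).sum +
          (s.map fun w => rootPotential w (t - h)).sum -
          2 * (s.map fun w => rootPotential w t).sum := by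
    induction s using Multiset.induction_on with
    | empty => simp
    | cons w s ih =>
      simp only [Multiset.map_cons, Multiset.sum_cons]
      by_cases hw : w ∈ annulus t h
      · rw [Multiset.filter_cons_of_pos _ hw, Multiset.card_cons, Nat.cast_add_one]
        linarith [half_le_rootPotential_second_difference hw]
      · rw [Multiset.filter_cons_of_neg _ hw]
        linarith [two_mul_le_add_of_convexOn (convexOn_rootPotential w) (Set.mem_univ (t + h))
          (Set.mem_univ (t - h))]
  simp only [logAvg_eq_log_leadingCoeff_add_sum hg]
  rw [annulusRoots]
  convert hsum g.roots using 1
  ring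

/-! ### Polynomial matrices -/

lemma exists_notMem_integral_le_integral {X Y : Type*} [MeasurableSpace X] [MeasurableSpace Y]
    {μ : Measure X} {ν : Measure Y} [IsProbabilityMeasure μ] [IsProbabilityMeasure ν]
    {f : X → Y → ℝ} (hf : Measurable (Function.uncurry f)) {K : ℝ} (hK : ∀ x y, f x y ≤ K)
    (hslice : ∀ y, Integrable (fun x => f x y) μ) {m : Y → ℝ} (hm : Integrable m ν)
    (hle : ∀ y, m y ≤ ∫ x, f x y ∂μ) {N : Set X} (hN : μ N = 0) :
    ∃ x ∉ N, ∫ y, m y ∂ν ≤ ∫ y, f x y ∂ν := by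
  have habs (x : X) (y : Y) : ‖f x y‖ ≤ 2 * |K| - f x y := by
    rw [Real.norm_eq_abs, abs_le]
    exact ⟨by linarith [abs_nonneg K], by linarith [hK x y, le_abs_self K]⟩
  have hnorm (y : Y) : ∫ x, ‖f x y‖ ∂μ ≤ 2 * |K| - m y := by
    have h := integral_mono (hslice y).norm ((integrable_const (2 * |K|)).sub (hslice y))
      fun x => habs x y
    simp only [Pi.sub_apply] at h
    rw [integral_sub (integrable_const _) (hslice y), integral_const, probReal_univ,
      one_smul] at h
    linarith [hle y]
  have hint : Integrable (Function.uncurry f) (μ.prod ν) := by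
    refine (integrable_prod_iff' hf.aestronglyMeasurable).mpr ⟨.of_forall hslice, ?_⟩
    refine ((integrable_const (2 * |K|)).sub hm).mono'
      hf.norm.stronglyMeasurable.integral_prod_left.aestronglyMeasurable (.of_forall fun y => ?_)
    rw [Real.norm_of_nonneg (integral_nonneg fun x => norm_nonneg _)]
    exact hnorm y
  obtain ⟨x, hx, hxle⟩ := exists_notMem_null_integral_le hint.integral_prod_left hN
  refine ⟨x, hx, le_trans ?_ hxle⟩
  rw [show ∫ x, ∫ y, Function.uncurry f (x, y) ∂ν ∂μ = ∫ y, ∫ x, f x y ∂μ ∂ν from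
    integral_integral_swap hint]
  exact integral_mono hm hint.integral_prod_right hle

/-- Square matrices of polynomials, of the size of `Mat`. -/
abbrev PolyMat := Matrix (Fin 2) (Fin 2) ℂ[X]

/-- Entrywise evaluation of a polynomial matrix. -/
noncomputable def evalMat (z : ℂ) : PolyMat →+* Mat :=
  (evalRingHom z).mapMatrix

@[simp]
lemma evalMat_apply (z : ℂ) (P : PolyMat) (i j : Fin 2) : evalMat z P i j = (P i j).eval z := rfl

lemma continuous_evalMat (P : PolyMat) : Continuous fun z => evalMat z P :=
  continuous_matrix fun i j => (P i j).continuous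

/-- The cubic polynomial whose coefficients are the entries of `M`. -/
noncomputable def entryPoly (M : Mat) : ℂ[X] :=
  C (M 0 0) + C (M 0 1) * X + C (M 1 0) * X ^ 2 + C (M 1 1) * X ^ 3

/-- A combination of the entries of `P` with unimodular weights if `‖w‖ = 1`: for most `w` it is, on
average, as large as `P` itself. -/
noncomputable def mixEntries (P : PolyMat) (w : ℂ) : ℂ[X] :=
  P 0 0 + C w * P 0 1 + C (w ^ 2) * P 1 0 + C (w ^ 3) * P 1 1

lemma eval_mixEntries (P : PolyMat) (w z : ℂ) :
    (mixEntries P w).eval z = (entryPoly (evalMat z P)).eval w := by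
  simp only [mixEntries, entryPoly, evalMat_apply, eval_add, eval_mul, eval_C, eval_X, eval_pow]
  ring

lemma exists_coeff_entryPoly (M : Mat) : ∃ i ≤ 3, ‖M‖ ≤ 2 * ‖(entryPoly M).coeff i‖ := by
  by_contra! h
  have hcoeff (i j : Fin 2) : (entryPoly M).coeff (2 * i + j) = M i j := by
    fin_cases i <;> fin_cases j <;> simp [entryPoly, coeff_X, coeff_C, coeff_X_pow]
  set r := (entryPoly M).coeff
  have hmax (i j : Fin 2) : ‖M i j‖ < ‖M‖ / 2 := by
    rw [← hcoeff i j]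
    linarith [h (2 * i + j) (by omega)]
  obtain ⟨δ, hδ⟩ : ∃ δ < ‖M‖ / 2, ∀ i j, ‖M i j‖ ≤ δ :=
    ⟨max (max ‖M 0 0‖ ‖M 0 1‖) (max ‖M 1 0‖ ‖M 1 1‖), by simp [hmax], by simp [Fin.forall_fin_two]⟩
  linarith [norm_le_two_mul_of_forall_entry_le hδ.2]

lemma log_norm_le_logAvg_entryPoly {M : Mat} (hM : M ≠ 0) :
    Real.log ‖M‖ ≤ Real.log 6 + logAvg (entryPoly M) 0 := by
  obtain ⟨i, hi, hle⟩ := exists_coeff_entryPoly M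
  have hMpos : 0 < ‖M‖ := norm_pos_iff.mpr hM
  have hcoeff : 0 < ‖(entryPoly M).coeff i‖ := by linarith
  have hchoose : (entryPoly M).natDegree.choose i ≤ 3 := by
    have hdeg : (entryPoly M).natDegree ≤ 3 := by
      unfold entryPoly
      compute_degree
    refine (Nat.choose_le_choose i hdeg).trans ?_
    interval_cases i <;> decide
  have hlog : Real.log ((entryPoly M).natDegree.choose i) ≤ Real.log 3 := by
    have hne : (entryPoly M).coeff i ≠ 0 := norm_pos_iff.mp hcoeff
    exact Real.log_le_log (by exact_mod_cast Nat.choose_pos (le_natDegree_of_ne_zero hne))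
      (by exact_mod_cast hchoose)
  calc Real.log ‖M‖ ≤ Real.log (2 * ‖(entryPoly M).coeff i‖) := Real.log_le_log hMpos hle
    _ = Real.log 2 + Real.log ‖(entryPoly M).coeff i‖ := Real.log_mul two_ne_zero hcoeff.ne'
    _ ≤ Real.log 2 + (Real.log 3 + logAvg (entryPoly M) 0) := by
      linarith [log_norm_coeff_le (norm_pos_iff.mp hcoeff)]
    _ = Real.log 6 + logAvg (entryPoly M) 0 := by
      rw [← add_assoc, ← Real.log_mul two_ne_zero three_ne_zero]
      norm_num

lemma norm_eval_mixEntries_le (P : PolyMat) {w : ℂ} (hw : ‖w‖ = 1) (z : ℂ) :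
    ‖(mixEntries P w).eval z‖ ≤ 4 * ‖evalMat z P‖ := by
  have hentry (i j : Fin 2) (k : ℕ) : ‖w ^ k * (P i j).eval z‖ ≤ ‖evalMat z P‖ := by
    rw [norm_mul, norm_pow, hw, one_pow, one_mul]
    exact norm_entry_le (evalMat z P) i j
  have h00 := hentry 0 0 0
  have h01 := hentry 0 1 1
  rw [pow_zero, one_mul] at h00
  rw [pow_one] at h01
  simp only [mixEntries, eval_add, eval_mul, eval_C]
  refine (norm_add₄_le ..).trans ?_
  linarith [hentry 1 0 2, hentry 1 1 3]

lemma natDegree_mixEntries_le {P : PolyMat} {d : ℕ} (hP : ∀ i j, (P i j).natDegree ≤ d) (w : ℂ) :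
    (mixEntries P w).natDegree ≤ d := by
  have hC (v : ℂ) (i j : Fin 2) : (C v * P i j).natDegree ≤ d :=
    (natDegree_C_mul_le _ _).trans (hP i j)
  exact natDegree_add_le_of_degree_le (natDegree_add_le_of_degree_le
    (natDegree_add_le_of_degree_le (hP 0 0) (hC _ 0 1)) (hC _ 1 0)) (hC _ 1 1)

/-- The average of `log ‖P‖` over the circle of radius `exp t`. -/
noncomputable def logAvgNorm (P : PolyMat) (t : ℝ) : ℝ :=
  ∫ x in (0 : ℝ)..1, Real.log ‖evalMat (circlePt t x) P‖

lemma continuous_log_norm_evalMat {P : PolyMat} {t : ℝ}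
    (hP : ∀ x, evalMat (circlePt t x) P ≠ 0) :
    Continuous fun x => Real.log ‖evalMat (circlePt t x) P‖ :=
  ((continuous_evalMat P).comp (continuous_circlePt_right t)).norm.log fun x =>
    norm_ne_zero_iff.mpr (hP x)

lemma measurable_log_norm_eval_mixEntries (P : PolyMat) (t : ℝ) :
    Measurable (Function.uncurry fun s x : ℝ =>
      Real.log ‖(mixEntries P (circlePt 0 s)).eval (circlePt t x)‖) := by
  have hw : Continuous fun p : ℝ × ℝ => circlePt 0 p.1 :=
    (continuous_circlePt_right 0).comp continuous_fst
  have hz : Continuous fun p : ℝ × ℝ => circlePt t p.2 :=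
    (continuous_circlePt_right t).comp continuous_snd
  have hentry (i j : Fin 2) : Continuous fun p : ℝ × ℝ => (P i j).eval (circlePt t p.2) :=
    (P i j).continuous.comp hz
  refine Real.measurable_log.comp (Continuous.measurable ?_)
  simp only [mixEntries, eval_add, eval_mul, eval_C]
  exact ((((hentry 0 0).add (hw.mul (hentry 0 1))).add ((hw.pow 2).mul (hentry 1 0))).add
    ((hw.pow 3).mul (hentry 1 1))).norm

lemma exists_log_norm_eval_mixEntries_le (P : PolyMat) (t : ℝ) :
    ∃ K, ∀ s x, Real.log ‖(mixEntries P (circlePt 0 s)).eval (circlePt t x)‖ ≤ K := by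
  have hper : Function.Periodic (fun x => evalMat (circlePt t x) P) 1 := fun x => by
    simp only [circlePt_periodic t x]
  obtain ⟨K, hK⟩ := exists_norm_le_of_periodic hper
    ((continuous_evalMat P).comp (continuous_circlePt_right t))
  refine ⟨4 * K, fun s x => (Real.log_le_self (norm_nonneg _)).trans ?_⟩
  exact (norm_eval_mixEntries_le P (by simp) _).trans (by gcongr; exact hK x)

lemma ae_mixEntries_ne_zero {P : PolyMat} {z : ℂ} (hP : evalMat z P ≠ 0) :
    ∀ᵐ s ∂volume.restrict (Set.Ioc 0 1), mixEntries P (circlePt 0 s) ≠ 0 := by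
  have hne : entryPoly (evalMat z P) ≠ 0 := fun h => by
    obtain ⟨i, -, hi⟩ := exists_coeff_entryPoly (evalMat z P)
    rw [h, coeff_zero, norm_zero, mul_zero] at hi
    exact hP (norm_le_zero_iff.mp hi)
  filter_upwards [ae_eval_circlePt_ne_zero hne 0] with s hs hzero
  rw [← eval_mixEntries, hzero, eval_zero] at hs
  exact hs rfl

lemma exists_logAvgNorm_le_logAvg_mixEntries {P : PolyMat} {t : ℝ}
    (hP : ∀ x, evalMat (circlePt t x) P ≠ 0) :
    ∃ w : ℂ, ‖w‖ = 1 ∧ mixEntries P w ≠ 0 ∧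
      logAvgNorm P t ≤ Real.log 6 + logAvg (mixEntries P w) t := by
  have hprob : IsProbabilityMeasure (volume.restrict (Set.Ioc (0 : ℝ) 1)) := ⟨by simp⟩
  have hint := (continuous_log_norm_evalMat hP).intervalIntegrable (μ := volume) 0 1
  have hm : Integrable (fun x => Real.log ‖evalMat (circlePt t x) P‖ - Real.log 6)
      (volume.restrict (Set.Ioc 0 1)) :=
    (intervalIntegrable_iff_integrableOn_Ioc_of_le zero_le_one).mp
      (hint.sub intervalIntegrable_const)
  have hslice (x : ℝ) : Integrable
      (fun s => Real.log ‖(mixEntries P (circlePt 0 s)).eval (circlePt t x)‖)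
      (volume.restrict (Set.Ioc 0 1)) := by
    simp only [eval_mixEntries]
    exact (intervalIntegrable_iff_integrableOn_Ioc_of_le zero_le_one).mp
      (intervalIntegrable_log_norm_eval _ 0)
  have hle (x : ℝ) : Real.log ‖evalMat (circlePt t x) P‖ - Real.log 6 ≤
      ∫ s in Set.Ioc 0 1, Real.log ‖(mixEntries P (circlePt 0 s)).eval (circlePt t x)‖ := by
    simp only [eval_mixEntries]
    rw [← intervalIntegral.integral_of_le zero_le_one, sub_le_iff_le_add']
    exact log_norm_le_logAvg_entryPoly (hP x)
  obtain ⟨K, hK⟩ := exists_log_norm_eval_mixEntries_le P t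
  obtain ⟨s, hs, hsle⟩ := exists_notMem_integral_le_integral
    (measurable_log_norm_eval_mixEntries P t) hK hslice hm hle
    (ae_iff.mp (ae_mixEntries_ne_zero (hP 0)))
  rw [← intervalIntegral.integral_of_le zero_le_one, ← intervalIntegral.integral_of_le zero_le_one,
    intervalIntegral.integral_sub hint intervalIntegrable_const, intervalIntegral.integral_const,
    sub_zero, one_smul, sub_le_iff_le_add'] at hsle
  exact ⟨circlePt 0 s, by simp, not_not.mp hs, hsle⟩

lemma logAvg_le_logAvgNorm {g : ℂ[X]} (hg : g ≠ 0) {P : PolyMat}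
    (hle : ∀ z, ‖g.eval z‖ ≤ 4 * ‖evalMat z P‖) {t : ℝ}
    (hP : ∀ x, evalMat (circlePt t x) P ≠ 0) :
    logAvg g t ≤ Real.log 4 + logAvgNorm P t := by
  have hcont := continuous_log_norm_evalMat hP
  have hmono : logAvg g t ≤
      ∫ x in (0 : ℝ)..1, (Real.log 4 + Real.log ‖evalMat (circlePt t x) P‖) := by
    rw [logAvg, intervalIntegral.integral_of_le zero_le_one,
      intervalIntegral.integral_of_le zero_le_one]
    refine integral_mono_ae (intervalIntegrable_log_norm_eval g t).1
      ((continuous_const.add hcont).intervalIntegrable 0 1).1 ?_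
    filter_upwards [ae_eval_circlePt_ne_zero hg t] with x hx
    rw [← Real.log_mul four_ne_zero (norm_ne_zero_iff.mpr (hP x))]
    exact Real.log_le_log (norm_pos_iff.mpr hx) (hle _)
  rwa [intervalIntegral.integral_add intervalIntegrable_const (hcont.intervalIntegrable 0 1),
    intervalIntegral.integral_const, sub_zero, one_smul] at hmono

/-- The `n`-fold product of `z ↦ D (exp (2πi j a) z)`, `j < n`, as a polynomial matrix. -/
noncomputable def iterPoly (D : PolyMat) (a : ℝ) (n : ℕ) : PolyMat :=
  orderedProd (fun j => D.map fun g => g.comp (C (circlePt 0 (j * a)) * X)) n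

lemma evalMat_iterPoly (D : PolyMat) (a t x : ℝ) (n : ℕ) :
    evalMat (circlePt t x) (iterPoly D a n) =
      orderedProd (fun j => evalMat (circlePt t (x + j * a)) D) n := by
  rw [iterPoly]
  refine (map_orderedProd (evalMat (circlePt t x)).toMonoidHom _ n).trans ?_
  congr! 2 with j
  ext i k
  change ((D i k).comp _).eval _ = (D i k).eval _
  rw [eval_comp, eval_mul, eval_C, eval_X, mul_comm, ← circlePt_add]

lemma natDegree_orderedProd_le {F : ℕ → PolyMat} {d : ℕ} (hF : ∀ k i j, (F k i j).natDegree ≤ d)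
    (n : ℕ) (i j : Fin 2) : (orderedProd F n i j).natDegree ≤ d * n := by
  induction n generalizing i j with
  | zero =>
    rw [orderedProd, Matrix.one_apply]
    split_ifs <;> simp
  | succ n ih =>
    rw [orderedProd, Matrix.mul_apply]
    refine natDegree_sum_le_of_forall_le _ _ fun k _ => natDegree_mul_le.trans ?_
    rw [mul_add, mul_one, add_comm]
    exact add_le_add (ih k j) (hF n i k)

lemma coeff_orderedProd {F : ℕ → PolyMat} {d : ℕ} (hF : ∀ k i j, (F k i j).natDegree ≤ d)
    (n : ℕ) : (orderedProd F n).map (coeff · (d * n)) =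
      orderedProd (fun k => (F k).map (coeff · d)) n := by
  induction n with
  | zero =>
    ext i j
    simp only [orderedProd, Matrix.one_apply, Matrix.map_apply]
    split_ifs <;> simp
  | succ n ih =>
    rw [orderedProd, orderedProd, ← ih, mul_add, mul_one, add_comm]
    ext i j
    simp only [Matrix.map_apply, Matrix.mul_apply, finsetSum_coeff]
    exact Finset.sum_congr rfl fun k _ =>
      coeff_mul_add_eq_of_natDegree_le (hF n i k) (natDegree_orderedProd_le hF n k j)

lemma natDegree_twist_le {D : PolyMat} {d : ℕ} (hD : ∀ i j, (D i j).natDegree ≤ d) (ζ : ℂ)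
    (i j : Fin 2) : ((D.map fun g => g.comp (C ζ * X)) i j).natDegree ≤ d := by
  rw [Matrix.map_apply]
  have hX : (C ζ * X).natDegree ≤ 1 := (natDegree_C_mul_le ζ X).trans natDegree_X_le
  simpa using natDegree_comp_le.trans (Nat.mul_le_mul (hD i j) hX)

lemma natDegree_iterPoly_le {D : PolyMat} {d : ℕ} (hD : ∀ i j, (D i j).natDegree ≤ d) (a : ℝ)
    (n : ℕ) (i j : Fin 2) : (iterPoly D a n i j).natDegree ≤ d * n :=
  natDegree_orderedProd_le (fun _ => natDegree_twist_le hD _) n i j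

section RootSums

lemma log_sub_log_le {u v d ε : ℝ} (hd : 0 < d) (hu : d ≤ u) (hv : d ≤ v) (huv : |u - v| ≤ d * ε) :
    Real.log u - Real.log v ≤ ε := by
  have hv0 : 0 < v := hd.trans_le hv
  have hu0 : 0 < u := hd.trans_le hu
  have hε : 0 ≤ ε := nonneg_of_mul_nonneg_right ((abs_nonneg _).trans huv) hd
  calc Real.log u - Real.log v = Real.log (u / v) := (Real.log_div hu0.ne' hv0.ne').symm
    _ ≤ u / v - 1 := Real.log_le_sub_one_of_pos (by positivity)
    _ = (u - v) / v := by field_simp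
    _ ≤ ε := by
      rw [div_le_iff₀ hv0]
      nlinarith [(abs_le.mp huv).2]

lemma abs_log_sub_log_le {u v d ε : ℝ} (hd : 0 < d) (hu : d ≤ u) (hv : d ≤ v)
    (huv : |u - v| ≤ d * ε) : |Real.log u - Real.log v| ≤ ε :=
  abs_sub_le_iff.mpr
    ⟨log_sub_log_le hd hu hv huv, log_sub_log_le hd hv hu (by rwa [abs_sub_comm])⟩

variable {t b : ℝ} {w : ℂ}

lemma abs_norm_circlePt_sub_sub_le (ht : Real.exp t ≤ 2) {x y : ℝ} {q : ℕ}
    (hxy : |x - y| ≤ 2 / q) :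
    |‖circlePt t x - w‖ - ‖circlePt t y - w‖| ≤ 26 / q := by
  calc |‖circlePt t x - w‖ - ‖circlePt t y - w‖|
      ≤ ‖circlePt t x - w - (circlePt t y - w)‖ := abs_norm_sub_norm_le _ _
    _ = ‖circlePt t x - circlePt t y‖ := by rw [sub_sub_sub_cancel_right]
    _ ≤ Real.exp t * (2 * π * |x - y|) := norm_circlePt_sub_le t x y
    _ ≤ 2 * (2 * 3.15 * (2 / q)) := by
      gcongr
      exact Real.pi_lt_d2.le
    _ ≤ 26 / q := by
      rw [div_eq_mul_one_div 2, div_eq_mul_one_div 26]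
      nlinarith [show (0 : ℝ) ≤ 1 / q by positivity]

lemma abs_sub_round_lt_of_norm_circlePt_sub_lt (ht : 1 / 2 ≤ Real.exp t) {x y δ : ℝ}
    (hx : ‖circlePt t x - w‖ < δ) (hy : ‖circlePt t y - w‖ < δ) :
    |x - y - round (x - y)| < δ := by
  have hdist : ‖circlePt t x - circlePt t y‖ < 2 * δ := by
    have h := dist_triangle_right (circlePt t x) (circlePt t y) w
    simp only [dist_eq_norm] at h
    linarith
  have h := mul_abs_sub_round_le_norm_circlePt_sub t x y
  nlinarith [abs_nonneg (x - y - round (x - y))]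

lemma exists_forall_le_norm_circlePt_sub (ht : 1 / 2 ≤ Real.exp t) (b x₀ : ℝ) {s : ℝ} (hs : 0 < s)
    {R : Multiset ℂ} {D : ℕ} (hR : R.card ≤ D) {q : ℕ} (hsmall : (D * q : ℕ) * s ≤ 1 / 2) :
    ∃ i ≤ D * q, ∀ j < q, ∀ w ∈ R, s ≤ ‖circlePt t (x₀ + i * s + j * b) - w‖ := by
  classical
  by_contra! hcon
  have hF (i : ℕ) : ∃ jw : ℕ × ℂ, i ≤ D * q →
      jw.1 < q ∧ jw.2 ∈ R ∧ ‖circlePt t (x₀ + i * s + jw.1 * b) - jw.2‖ < s := by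
    by_cases hi : i ≤ D * q
    · obtain ⟨j, hj, w, hw, hclose⟩ := hcon i hi
      exact ⟨(j, w), fun _ => ⟨hj, hw, hclose⟩⟩
    · exact ⟨(0, 0), fun h => absurd h hi⟩
  choose F hF using hF
  have hcard : (Finset.range q ×ˢ R.toFinset).card < (Finset.range (D * q + 1)).card := by
    rw [Finset.card_product, Finset.card_range, Finset.card_range, Nat.lt_succ_iff, mul_comm]
    gcongr
    exact (Multiset.toFinset_card_le R).trans hR
  obtain ⟨i, hi, i', hi', hne, heq⟩ : ∃ i ∈ Finset.range (D * q + 1),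
      ∃ i' ∈ Finset.range (D * q + 1), i ≠ i' ∧ F i = F i' := by
    refine Finset.exists_ne_map_eq_of_card_lt_of_maps_to hcard fun i hi => ?_
    have h := hF i (Finset.mem_range_succ_iff.mp (Finset.mem_coe.mp hi))
    exact Finset.mem_coe.mpr (Finset.mem_product.mpr
      ⟨Finset.mem_range.mpr h.1, Multiset.mem_toFinset.mpr h.2.1⟩)
  rw [Finset.mem_range_succ_iff] at hi hi'
  have hround := abs_sub_round_lt_of_norm_circlePt_sub_lt ht (hF i hi).2.2 (heq ▸ (hF i' hi').2.2)
  have hdiff : x₀ + i * s + (F i).1 * b - (x₀ + i' * s + (F i).1 * b) = ((i : ℝ) - i') * s := by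
    ring
  have habs : |((i : ℝ) - i') * s| = |(i : ℝ) - i'| * s := by rw [abs_mul, abs_of_pos hs]
  have hupper : |(i : ℝ) - i'| ≤ (D * q : ℕ) := abs_sub_le_of_nonneg_of_le i.cast_nonneg
    (by exact_mod_cast hi) i'.cast_nonneg (by exact_mod_cast hi')
  have hlower : 1 ≤ |(i : ℝ) - i'| := by
    exact_mod_cast Int.one_le_abs (sub_ne_zero.mpr (Nat.cast_injective.ne hne) : (i : ℤ) - i' ≠ 0)
  have hhalf : |((i : ℝ) - i') * s| ≤ |(1 : ℝ)| / 2 := by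
    rw [habs, abs_one]
    exact (mul_le_mul_of_nonneg_right hupper hs.le).trans hsmall
  rw [hdiff, ← UnitAddCircle.norm_eq, (AddCircle.norm_coe_eq_abs_iff 1 one_ne_zero).mpr hhalf,
    habs] at hround
  exact (le_mul_of_one_le_left hs.le hlower).not_gt hround

lemma le_norm_circlePt_sub_of_notMem_annulus (ht : 1 / 2 ≤ Real.exp t) {h : ℝ} (hh : 0 < h)
    (hw : w ∉ annulus t h) (x : ℝ) :
    (1 - Real.exp (-(h / 2))) / 2 ≤ ‖circlePt t x - w‖ := by
  have hnorm := abs_norm_sub_norm_le (circlePt t x) w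
  rw [norm_circlePt] at hnorm
  have hexp : Real.exp (-(h / 2)) < 1 := by rw [Real.exp_lt_one_iff]; linarith
  rw [annulus, Set.mem_ofPred_eq, Set.mem_Ioo, not_and_or, not_lt, not_lt] at hw
  rcases hw with hin | hout
  · rw [sub_eq_add_neg, Real.exp_add] at hin
    nlinarith [le_abs_self (Real.exp t - ‖w‖)]
  · rw [Real.exp_add] at hout
    nlinarith [neg_abs_le (Real.exp t - ‖w‖), Real.add_one_le_exp (-(h / 2)),
      Real.add_one_le_exp (h / 2)]

variable {r : ℚ}

lemma mul_rootPotential_sub_le_of_notMem_annulus (hr : |b - r| ≤ 1 / (r.den : ℝ) ^ 2)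
    (ht : 1 / 2 ≤ Real.exp t) (ht' : Real.exp t ≤ 2) {h : ℝ} (hh : 0 < h) (hw : w ∉ annulus t h)
    {η : ℝ} (hη : 52 / r.den ≤ (1 - Real.exp (-(h / 2))) * η) (x : ℝ) :
    r.den * (rootPotential w t - η) ≤
      ∑ j ∈ Finset.range r.den, Real.log ‖circlePt t (x + j * b) - w‖ := by
  have hd : 0 < (1 - Real.exp (-(h / 2))) / 2 :=
    half_pos (sub_pos.mpr (by rw [Real.exp_lt_one_iff]; linarith))
  have hlow := le_norm_circlePt_sub_of_notMem_annulus ht hh hw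
  have hper : Function.Periodic (fun y => Real.log ‖circlePt t y - w‖) 1 := fun y => by
    simp only [circlePt_periodic t y]
  have hcont : Continuous fun y => Real.log ‖circlePt t y - w‖ :=
    ((continuous_circlePt_right t).sub continuous_const).norm.log
      fun y => (hd.trans_le (hlow y)).ne'
  have hsum := abs_sum_sub_den_mul_integral_le hper hcont hr (fun y z hyz =>
    abs_log_sub_log_le (ε := η) hd (hlow y) (hlow z) <|
      (abs_norm_circlePt_sub_sub_le ht' hyz).trans <| by
        linarith [show (52 : ℝ) / r.den = 2 * (26 / r.den) by ring]) x
  have hint : ∫ y in (0 : ℝ)..1, Real.log ‖circlePt t y - w‖ = rootPotential w t := by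
    rw [← logAvg_X_sub_C, logAvg]
    simp only [eval_sub, eval_X, eval_C]
  rw [hint] at hsum
  linarith [(abs_le.mp hsum).1]

lemma natCast_inj_of_sub_mul_num_eq {j j' : ℕ} (hj : j < r.den) (hj' : j' < r.den) {k : ℤ}
    (h : ((j : ℤ) - j') * r.num = r.den * k) : j = j' := by
  have hcop : IsCoprime (r.den : ℤ) r.num := by
    rw [Int.isCoprime_iff_gcd_eq_one, Int.gcd_comm]
    exact r.reduced
  have hzero : (j : ℤ) - j' = 0 :=
    Int.eq_zero_of_abs_lt_dvd (hcop.dvd_of_dvd_mul_right ⟨k, h⟩) (by rw [abs_lt]; omega)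
  omega

lemma abs_sub_mul_num_sub_round_mul_den_lt_two (hr : |b - r| ≤ 1 / (r.den : ℝ) ^ 2) {j j' : ℕ}
    (hj : j < r.den) (hj' : j' < r.den) {x : ℝ} {k : ℤ}
    (hk : |x + j * b - (x + j' * b) - k| < 1 / r.den) :
    |((j : ℤ) - j') * r.num - k * r.den| < 2 := by
  have hd : (0 : ℝ) < r.den := by exact_mod_cast r.pos
  have hr_eq : (r : ℝ) = r.num / r.den := by exact_mod_cast (Rat.num_div_den r).symm
  have hjj' : |(j : ℝ) - j'| ≤ r.den := abs_sub_le_of_nonneg_of_le j.cast_nonneg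
    (by exact_mod_cast hj.le) j'.cast_nonneg (by exact_mod_cast hj'.le)
  have herr : |((j : ℝ) - j') * (b - r)| ≤ 1 / r.den := by
    rw [abs_mul]
    calc _ ≤ (r.den : ℝ) * (1 / (r.den : ℝ) ^ 2) := by gcongr
      _ = _ := by field_simp
  have heq : ((((j : ℤ) - j') * r.num - k * r.den : ℤ) : ℝ) =
      r.den * ((x + j * b - (x + j' * b) - k) - ((j : ℝ) - j') * (b - r)) := by
    push_cast
    rw [hr_eq]
    field_simp
    ring
  have hlt : |((((j : ℤ) - j') * r.num - k * r.den : ℤ) : ℝ)| < 2 := by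
    rw [heq, abs_mul, abs_of_pos hd]
    calc _ < (r.den : ℝ) * (1 / r.den + 1 / r.den) := by
          gcongr
          exact (abs_sub _ _).trans_lt (add_lt_add_of_lt_of_le hk herr)
      _ = 2 := by field_simp; norm_num
  exact_mod_cast hlt

lemma card_norm_circlePt_sub_lt_le_three (hr : |b - r| ≤ 1 / (r.den : ℝ) ^ 2)
    (ht : 1 / 2 ≤ Real.exp t) (x : ℝ) :
    ((Finset.range r.den).filter fun j : ℕ => ‖circlePt t (x + j * b) - w‖ < 1 / r.den).card
      ≤ 3 := by
  set S := (Finset.range r.den).filter fun j : ℕ => ‖circlePt t (x + j * b) - w‖ < 1 / r.den with hS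
  have hmem {j : ℕ} (hj : j ∈ S) : j < r.den ∧ ‖circlePt t (x + j * b) - w‖ < 1 / r.den := by
    simpa [hS] using hj
  rcases S.eq_empty_or_nonempty with hempty | ⟨j₀, hj₀⟩
  · simp [hempty]
  set k : ℕ → ℤ := fun j => round (x + j * b - (x + j₀ * b))
  set m : ℕ → ℤ := fun j => ((j : ℤ) - j₀) * r.num - k j * r.den with hm
  have hm_mem : ∀ j ∈ S, m j ∈ Finset.Icc (-1 : ℤ) 1 := fun j hj => by
    have h : |m j| < 2 := abs_sub_mul_num_sub_round_mul_den_lt_two hr (hmem hj).1 (hmem hj₀).1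
      (abs_sub_round_lt_of_norm_circlePt_sub_lt ht (hmem hj).2 (hmem hj₀).2)
    rw [abs_lt] at h
    rw [Finset.mem_Icc]
    omega
  have hm_inj : Set.InjOn m S := fun j hj j' hj' heq =>
    natCast_inj_of_sub_mul_num_eq (hmem hj).1 (hmem hj').1 (k := k j - k j') <| by
      simp only [hm] at heq
      linarith
  simpa using Finset.card_le_card_of_injOn m hm_mem hm_inj

lemma rootPotential_le_integral_log_max {δ : ℝ} (hδ : 0 < δ) (w : ℂ) (t : ℝ) :
    rootPotential w t ≤ ∫ y in (0 : ℝ)..1, Real.log (max ‖circlePt t y - w‖ δ) := by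
  rw [← logAvg_X_sub_C, logAvg, intervalIntegral.integral_of_le zero_le_one,
    intervalIntegral.integral_of_le zero_le_one]
  have hcont : Continuous fun y => Real.log (max ‖circlePt t y - w‖ δ) :=
    (((continuous_circlePt_right t).sub continuous_const).norm.max continuous_const).log
      fun y => (lt_max_of_lt_right hδ).ne'
  refine integral_mono_ae (intervalIntegrable_log_norm_eval (X - C w) t).1
    (hcont.intervalIntegrable 0 1).1 ?_
  filter_upwards [ae_eval_circlePt_ne_zero (X_sub_C_ne_zero w) t] with y hy
  refine Real.log_le_log (norm_pos_iff.mpr hy) ?_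
  simp only [eval_sub, eval_X, eval_C]
  exact le_max_left _ _

lemma mul_rootPotential_sub_add_le_of_forall_le_norm (hr : |b - r| ≤ 1 / (r.den : ℝ) ^ 2)
    (ht : 1 / 2 ≤ Real.exp t) (ht' : Real.exp t ≤ 2) {s : ℝ} (hs : 0 < s) (hs1 : s ≤ 1) {x : ℝ}
    (hsep : ∀ j < r.den, s ≤ ‖circlePt t (x + j * b) - w‖) :
    r.den * (rootPotential w t - 26) + 3 * Real.log s ≤
      ∑ j ∈ Finset.range r.den, Real.log ‖circlePt t (x + j * b) - w‖ := by
  have hd : (0 : ℝ) < r.den := by exact_mod_cast r.pos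
  have hδ : (0 : ℝ) < 1 / r.den := by positivity
  have hδ1 : 1 / (r.den : ℝ) ≤ 1 := (div_le_one hd).mpr (by exact_mod_cast r.pos)
  set f : ℝ → ℝ := fun y => Real.log (max ‖circlePt t y - w‖ (1 / r.den)) with hf
  have hper : Function.Periodic f 1 := fun y => by simp only [hf, circlePt_periodic t y]
  have hcont : Continuous f :=
    (((continuous_circlePt_right t).sub continuous_const).norm.max continuous_const).log
      fun y => (lt_max_of_lt_right hδ).ne'
  have hriemann := abs_sum_sub_den_mul_integral_le hper hcont hr (fun y z hyz =>
    abs_log_sub_log_le (ε := 26) hδ (le_max_right _ _) (le_max_right _ _) <|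
      (abs_max_sub_max_le_abs _ _ _).trans <|
        (abs_norm_circlePt_sub_sub_le ht' hyz).trans_eq (by ring)) x
  have hpoint (j : ℕ) (hj : j ∈ Finset.range r.den) : f (x + j * b) +
      (if ‖circlePt t (x + j * b) - w‖ < 1 / r.den then Real.log s else 0) ≤
        Real.log ‖circlePt t (x + j * b) - w‖ := by
    have hlog := Real.log_le_log hs (hsep j (Finset.mem_range.mp hj))
    simp only [hf]
    split_ifs with hlt
    · rw [max_eq_right hlt.le]
      linarith [Real.log_nonpos hδ.le hδ1]
    · rw [max_eq_left (not_lt.mp hlt), add_zero]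
  have hsum := Finset.sum_le_sum hpoint
  rw [Finset.sum_add_distrib, ← Finset.sum_filter, Finset.sum_const, nsmul_eq_mul] at hsum
  have hcard : (((Finset.range r.den).filter
      fun j : ℕ => ‖circlePt t (x + j * b) - w‖ < 1 / r.den).card : ℝ) ≤ 3 := by
    exact_mod_cast card_norm_circlePt_sub_lt_le_three hr ht x
  nlinarith [Real.log_nonpos hs.le hs1, (abs_le.mp hriemann).1,
    mul_le_mul_of_nonneg_left (rootPotential_le_integral_log_max hδ w t) hd.le]

lemma log_norm_eval_eq_add_sum {g : ℂ[X]} (hg : g ≠ 0) {z : ℂ} (hz : ∀ w ∈ g.roots, z ≠ w) :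
    Real.log ‖g.eval z‖ =
      Real.log ‖g.leadingCoeff‖ + (g.roots.map fun w => Real.log ‖z - w‖).sum := by
  have hne : ∀ u ∈ g.roots.map fun w => ‖z - w‖, u ≠ 0 := fun u hu => by
    obtain ⟨w, hw, rfl⟩ := Multiset.mem_map.mp hu
    exact norm_ne_zero_iff.mpr (sub_ne_zero.mpr (hz w hw))
  have hprod : ‖(g.roots.map fun w => z - w).prod‖ = (g.roots.map fun w => ‖z - w‖).prod :=
    (map_multiset_prod (normHom : ℂ →*₀ ℝ) _).trans (by rw [Multiset.map_map]; rfl)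
  rw [(IsAlgClosed.splits g).eval_eq_prod_roots, norm_mul, hprod,
    Real.log_mul (by simpa using hg) (Multiset.prod_ne_zero fun h => hne 0 h rfl),
    Real.log_multiset_prod hne, Multiset.map_map]
  rfl

lemma sum_rootPotential_sub_le (hr : |b - r| ≤ 1 / (r.den : ℝ) ^ 2) (ht : 1 / 2 ≤ Real.exp t)
    (ht' : Real.exp t ≤ 2) {h : ℝ} (hh : 0 < h) {s : ℝ} (hs : 0 < s) (hs1 : s ≤ 1) {η : ℝ}
    (hη : 0 ≤ η) (hq : 52 / r.den ≤ (1 - Real.exp (-(h / 2))) * η) [DecidablePred (· ∈ annulus t h)]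
    {x : ℝ} {R : Multiset ℂ} (hsep : ∀ j < r.den, ∀ w ∈ R, s ≤ ‖circlePt t (x + j * b) - w‖) :
    r.den * ((R.map fun w => rootPotential w t).sum - R.card * η) -
        (R.filter (· ∈ annulus t h)).card * (r.den * 26 - 3 * Real.log s) ≤
      ∑ j ∈ Finset.range r.den, (R.map fun w => Real.log ‖circlePt t (x + j * b) - w‖).sum := by
  induction R using Multiset.induction_on with
  | empty => simp
  | cons w R ih =>
    have ih := ih fun j hj w hw => hsep j hj w (Multiset.mem_cons_of_mem hw)
    simp only [Multiset.map_cons, Multiset.sum_cons, Multiset.card_cons, Finset.sum_add_distrib]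
    have hη' : 0 ≤ (r.den : ℝ) * η := by positivity
    by_cases hw : w ∈ annulus t h
    · have hnear := mul_rootPotential_sub_add_le_of_forall_le_norm hr ht ht' hs hs1 fun j hj =>
        hsep j hj w (Multiset.mem_cons_self _ _)
      rw [Multiset.filter_cons_of_pos _ hw, Multiset.card_cons]
      push_cast
      linarith
    · have hfar := mul_rootPotential_sub_le_of_notMem_annulus hr ht ht' hh hw hq x
      rw [Multiset.filter_cons_of_neg _ hw]
      push_cast
      linarith

lemma mul_logAvg_sub_le_sum_log_norm_eval (hr : |b - r| ≤ 1 / (r.den : ℝ) ^ 2)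
    (ht : 1 / 2 ≤ Real.exp t) (ht' : Real.exp t ≤ 2) {h : ℝ} (hh : 0 < h) {s : ℝ} (hs : 0 < s)
    (hs1 : s ≤ 1) {η : ℝ} (hη : 0 ≤ η) (hq : 52 / r.den ≤ (1 - Real.exp (-(h / 2))) * η)
    {g : ℂ[X]} (hg : g ≠ 0) {D : ℕ} (hD : g.natDegree ≤ D) {x : ℝ}
    (hsep : ∀ j < r.den, ∀ w ∈ g.roots, s ≤ ‖circlePt t (x + j * b) - w‖) {k : ℝ}
    (hk : logAvg g (t + h) + logAvg g (t - h) - 2 * logAvg g t ≤ k * (h / 2)) :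
    r.den * (logAvg g t - D * η) - k * (r.den * 26 - 3 * Real.log s) ≤
      ∑ j ∈ Finset.range r.den, Real.log ‖g.eval (circlePt t (x + j * b))‖ := by
  classical
  have hfactor : ∀ j ∈ Finset.range r.den, Real.log ‖g.eval (circlePt t (x + j * b))‖ =
      Real.log ‖g.leadingCoeff‖ +
        (g.roots.map fun w => Real.log ‖circlePt t (x + j * b) - w‖).sum := fun j hj =>
    log_norm_eval_eq_add_sum hg fun w hw => sub_ne_zero.mp <| norm_pos_iff.mp <|
      hs.trans_le (hsep j (Finset.mem_range.mp hj) w hw)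
  have hnear : ((annulusRoots g t h).card : ℝ) ≤ k :=
    le_of_mul_le_mul_right ((card_annulusRoots_mul_le hg t h).trans hk) (half_pos hh)
  have hcard : (g.roots.card : ℝ) ≤ D := by exact_mod_cast (card_roots' g).trans hD
  have hsum := sum_rootPotential_sub_le hr ht ht' hh hs hs1 hη hq hsep
  have hlog : 0 ≤ r.den * 26 - 3 * Real.log s := by
    linarith [Real.log_nonpos hs.le hs1, show (0 : ℝ) ≤ r.den * 26 by positivity]
  have hdeg : (r.den : ℝ) * (g.roots.card * η) ≤ r.den * (D * η) := by gcongr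
  rw [Finset.sum_congr rfl hfactor, Finset.sum_add_distrib, Finset.sum_const, Finset.card_range,
    nsmul_eq_mul, logAvg_eq_log_leadingCoeff_add_sum hg]
  have hnear' := mul_le_mul_of_nonneg_right hnear hlog
  rw [annulusRoots] at hnear'
  linarith

end RootSums

/-! ### Rational cocycles -/

/-- The points `circlePt t x` with `|t| ≤ r`. -/
def closedAnnulus (r : ℝ) : Set ℂ :=
  {z | ‖z‖ ∈ Set.Icc (Real.exp (-r)) (Real.exp r)}

lemma isCompact_closedAnnulus (r : ℝ) : IsCompact (closedAnnulus r) :=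
  (isCompact_closedBall (0 : ℂ) (Real.exp r)).of_isClosed_subset
    (isClosed_Icc.preimage continuous_norm) fun z hz => by simpa using hz.2

lemma circlePt_mem_closedAnnulus {r t : ℝ} (ht : |t| ≤ r) (x : ℝ) :
    circlePt t x ∈ closedAnnulus r := by
  obtain ⟨h₁, h₂⟩ := abs_le.mp ht
  simpa [closedAnnulus] using ⟨h₁, h₂⟩

lemma hasDerivAt_circlePt (t x : ℝ) :
    HasDerivAt (circlePt t) (circlePt t x * (2 * π * Complex.I)) x := by
  have h : HasDerivAt (fun y : ℝ => (t + 2 * π * Complex.I * y : ℂ)) (2 * π * Complex.I) x := by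
    simpa using ((hasDerivAt_id x).ofReal_comp.const_mul (2 * π * Complex.I : ℂ)).const_add (t : ℂ)
  exact h.cexp

lemma exists_rootPotential_eq {r : ℝ} {w : ℂ} (hw : w ∉ closedAnnulus r) :
    ∃ m : ℝ, ∀ t, |t| ≤ r → rootPotential w t = rootPotential w 0 + m * t := by
  rw [closedAnnulus, Set.mem_ofPred_eq, Set.mem_Icc, not_and_or, not_le, not_le] at hw
  rcases hw with hw | hw
  · have hpot {t : ℝ} (ht : -r ≤ t) : rootPotential w t = t := by
      rw [rootPotential, max_eq_left (hw.le.trans (Real.exp_le_exp.mpr ht)), Real.log_exp]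
    refine ⟨1, fun t ht => ?_⟩
    rw [hpot (abs_le.mp ht).1, hpot (by linarith [abs_nonneg t]), zero_add, one_mul]
  · have hpot {t : ℝ} (ht : t ≤ r) : rootPotential w t = Real.log ‖w‖ := by
      rw [rootPotential, max_eq_right ((Real.exp_le_exp.mpr ht).trans hw.le)]
    refine ⟨0, fun t ht => ?_⟩
    rw [hpot (abs_le.mp ht).2, hpot (by linarith [abs_nonneg t]), zero_mul, add_zero]

/-- A cocycle `x ↦ num z / den z`, `z = exp (2πix)`, with quadratic polynomial entries, extended
holomorphically to `z = circlePt t x` for `|t| ≤ width`. -/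
structure RationalCocycle where
  num : PolyMat
  den : ℂ[X]
  width : ℝ
  natDegree_num_le : ∀ i j, (num i j).natDegree ≤ 2
  det_num : num.det = den ^ 2
  width_pos : 0 < width
  width_le_half : width ≤ 1 / 2
  eval_den_ne_zero : ∀ z ∈ closedAnnulus width, den.eval z ≠ 0

namespace RationalCocycle

variable (M : RationalCocycle)

/-- The cocycle on the circle of radius `exp t`. -/
noncomputable def cocycle (t x : ℝ) : Mat :=
  (M.den.eval (circlePt t x))⁻¹ • evalMat (circlePt t x) M.num

/-- The Lyapunov exponent on the circle of radius `exp t`. -/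
noncomputable def exponent (b t : ℝ) : ℝ :=
  lyapExp (M.cocycle t) b

lemma eval_den_circlePt_ne_zero {t : ℝ} (ht : |t| ≤ M.width) (x : ℝ) :
    M.den.eval (circlePt t x) ≠ 0 :=
  M.eval_den_ne_zero _ (circlePt_mem_closedAnnulus ht x)

lemma isSL2Cocycle {t : ℝ} (ht : |t| ≤ M.width) : IsSL2Cocycle (M.cocycle t) where
  continuous := by
    have hcircle := continuous_circlePt_right t
    exact ((M.den.continuous.comp hcircle).inv₀ (M.eval_den_circlePt_ne_zero ht)).smul
      ((continuous_evalMat M.num).comp hcircle)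
  periodic x := by simp only [cocycle, circlePt_periodic t x]
  det_eq_one x := by
    rw [cocycle, Matrix.det_smul, Fintype.card_fin, evalMat, ← RingHom.map_det, M.det_num, map_pow,
      coe_evalRingHom, inv_pow,
      inv_mul_cancel₀ (pow_ne_zero 2 (M.eval_den_circlePt_ne_zero ht x))]

lemma one_half_le_exp {t : ℝ} (ht : |t| ≤ M.width) : 1 / 2 ≤ Real.exp t := by
  linarith [neg_abs_le t, M.width_le_half, Real.add_one_le_exp t]

lemma exp_le_two {t : ℝ} (ht : |t| ≤ M.width) : Real.exp t ≤ 2 := by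
  have h : Real.exp t * Real.exp (-t) = 1 := by rw [← Real.exp_add, add_neg_cancel, Real.exp_zero]
  have h' := M.one_half_le_exp (t := -t) (by rwa [abs_neg])
  nlinarith [Real.exp_pos t]

lemma exists_norm_cocycle_le : ∃ C, ∀ t, |t| ≤ M.width → ∀ x, ‖M.cocycle t x‖ ≤ C := by
  have hcont : ContinuousOn (fun z => (M.den.eval z)⁻¹ • evalMat z M.num)
      (closedAnnulus M.width) :=
    (M.den.continuous.continuousOn.inv₀ M.eval_den_ne_zero).smul
      (continuous_evalMat M.num).continuousOn
  obtain ⟨C, hC⟩ := (isCompact_closedAnnulus M.width).exists_bound_of_continuousOn hcont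
  exact ⟨C, fun t ht x => hC _ (circlePt_mem_closedAnnulus ht x)⟩

lemma exists_norm_div_den_sub_le (g : ℂ[X]) : ∃ C, ∀ t, |t| ≤ M.width → ∀ x y,
    ‖(M.den.eval (circlePt t x))⁻¹ * g.eval (circlePt t x) -
      (M.den.eval (circlePt t y))⁻¹ * g.eval (circlePt t y)‖ ≤ C * |x - y| := by
  let f' : ℂ → ℂ := fun z => (-M.den.derivative.eval z / M.den.eval z ^ 2 * g.eval z +
    (M.den.eval z)⁻¹ * g.derivative.eval z) * (z * (2 * π * Complex.I))
  have hf' : ContinuousOn f' (closedAnnulus M.width) := by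
    have hden := M.eval_den_ne_zero
    have hden2 := fun z hz => pow_ne_zero 2 (hden z hz)
    simp only [f']
    fun_prop (disch := assumption)
  obtain ⟨C, hC⟩ := (isCompact_closedAnnulus M.width).exists_bound_of_continuousOn hf'
  refine ⟨C, fun t ht x y => ?_⟩
  refine convex_univ.norm_image_sub_le_of_norm_hasDerivWithin_le (f' := fun y => f' (circlePt t y))
    (f := fun y => (M.den.eval (circlePt t y))⁻¹ * g.eval (circlePt t y))
    (fun y _ => ?_) (fun y _ => hC _ (circlePt_mem_closedAnnulus ht y)) (Set.mem_univ y)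
    (Set.mem_univ x)
  have hdiv := ((M.den.hasDerivAt _).inv (M.eval_den_circlePt_ne_zero ht y)).mul
    (g.hasDerivAt (circlePt t y))
  exact (hdiv.comp y (hasDerivAt_circlePt t y)).hasDerivWithinAt

lemma exists_norm_cocycle_sub_le : ∃ C, ∀ t, |t| ≤ M.width → ∀ x y,
    ‖M.cocycle t x - M.cocycle t y‖ ≤ C * |x - y| := by
  choose C hC using fun p : Fin 2 × Fin 2 => M.exists_norm_div_den_sub_le (M.num p.1 p.2)
  refine ⟨2 * ∑ p, |C p|, fun t ht x y => ?_⟩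
  rw [mul_assoc]
  refine norm_le_two_mul_of_forall_entry_le fun i j => ?_
  calc ‖(M.cocycle t x - M.cocycle t y) i j‖ ≤ C (i, j) * |x - y| := hC (i, j) t ht x y
    _ ≤ (∑ p, |C p|) * |x - y| := by
        gcongr
        exact (le_abs_self _).trans
          (Finset.single_le_sum (f := fun p => |C p|) (fun _ _ => abs_nonneg _)
            (Finset.mem_univ (i, j)))

lemma exists_bounds : ∃ C, 1 ≤ C ∧ ∀ t, |t| ≤ M.width → ∀ x,
    ‖M.cocycle t x‖ ≤ C ∧ ∀ y, ‖M.cocycle t x - M.cocycle t y‖ ≤ C * |x - y| := by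
  obtain ⟨C₁, h₁⟩ := M.exists_norm_cocycle_le
  obtain ⟨C₂, h₂⟩ := M.exists_norm_cocycle_sub_le
  refine ⟨max 1 (max C₁ C₂), le_max_left _ _, fun t ht x => ⟨?_, fun y => ?_⟩⟩
  · exact (h₁ t ht x).trans (by simp)
  · exact (h₂ t ht x y).trans (by gcongr; simp)

section Averages

variable (a : ℝ) (n : ℕ) {t : ℝ} (ht : |t| ≤ M.width)

include ht

lemma evalMat_iterPoly_num (x : ℝ) : evalMat (circlePt t x) (iterPoly M.num a n) =
    (∏ j ∈ Finset.range n, M.den.eval (circlePt t (x + j * a))) •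
      cocycleIter (M.cocycle t) a n x := by
  have hne := fun j : ℕ => M.eval_den_circlePt_ne_zero ht (x + j * a)
  rw [evalMat_iterPoly, cocycleIter, ← orderedProd_smul]
  simp only [cocycle, smul_inv_smul₀ (hne _)]

lemma evalMat_iterPoly_num_ne_zero (x : ℝ) : evalMat (circlePt t x) (iterPoly M.num a n) ≠ 0 := by
  rw [M.evalMat_iterPoly_num a n ht]
  exact smul_ne_zero (Finset.prod_ne_zero_iff.mpr fun j _ => M.eval_den_circlePt_ne_zero ht _)
    (norm_pos_iff.mp ((M.isSL2Cocycle ht).norm_iter_pos a n x))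

lemma log_norm_evalMat_iterPoly_num (x : ℝ) :
    Real.log ‖evalMat (circlePt t x) (iterPoly M.num a n)‖ =
      (∑ j ∈ Finset.range n, Real.log ‖M.den.eval (circlePt t (x + j * a))‖) +
        Real.log ‖cocycleIter (M.cocycle t) a n x‖ := by
  have hne := fun j : ℕ => norm_ne_zero_iff.mpr (M.eval_den_circlePt_ne_zero ht (x + j * a))
  rw [M.evalMat_iterPoly_num a n ht, norm_smul, norm_prod, Real.log_mul
    (Finset.prod_ne_zero_iff.mpr fun j _ => hne j)
    ((M.isSL2Cocycle ht).norm_iter_pos a n x).ne', Real.log_prod fun j _ => hne j]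

lemma continuous_log_norm_den : Continuous fun x => Real.log ‖M.den.eval (circlePt t x)‖ :=
  (M.den.continuous.comp (continuous_circlePt_right t)).norm.log fun x =>
    norm_ne_zero_iff.mpr (M.eval_den_circlePt_ne_zero ht x)

lemma logAvgNorm_iterPoly_num : logAvgNorm (iterPoly M.num a n) t =
    n * logAvg M.den t + meanLogNorm (M.cocycle t) a n := by
  have hper : Function.Periodic (fun x => Real.log ‖M.den.eval (circlePt t x)‖) 1 := fun x => by
    simp only [circlePt_periodic t x]
  have hden := M.continuous_log_norm_den ht
  have hshift (c : ℝ) : ∫ x in (0 : ℝ)..1, Real.log ‖M.den.eval (circlePt t (x + c))‖ =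
      logAvg M.den t := by
    rw [intervalIntegral.integral_comp_add_right fun x => Real.log ‖M.den.eval (circlePt t x)‖,
      zero_add, add_comm, hper.intervalIntegral_add_eq c 0, zero_add, logAvg]
  have hint (j : ℕ) : IntervalIntegrable
      (fun x => Real.log ‖M.den.eval (circlePt t (x + j * a))‖) volume 0 1 :=
    (hden.comp (continuous_add_const _)).intervalIntegrable 0 1
  simp only [logAvgNorm, M.log_norm_evalMat_iterPoly_num a n ht]
  rw [intervalIntegral.integral_add, intervalIntegral.integral_finsetSum fun j _ => hint j]
  · simp only [hshift, Finset.sum_const, Finset.card_range, nsmul_eq_mul, meanLogNorm]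
  · simpa only [Finset.sum_fn] using
      IntervalIntegrable.sum (Finset.range n) fun j _ => hint j
  · exact ((M.isSL2Cocycle ht).continuous_log_norm_iter a n).intervalIntegrable 0 1

end Averages

lemma den_ne_zero : M.den ≠ 0 := fun h =>
  M.eval_den_circlePt_ne_zero (t := 0) (by simpa using M.width_pos.le) 0 (by rw [h, eval_zero])

lemma exists_logAvg_den_eq : ∃ m : ℝ, ∀ t, |t| ≤ M.width →
    logAvg M.den t = logAvg M.den 0 + m * t := by
  choose m hm using fun w : {w // w ∈ M.den.roots} =>
    exists_rootPotential_eq fun hw => M.eval_den_ne_zero w hw (isRoot_of_mem_roots w.2)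
  refine ⟨(M.den.roots.attach.map m).sum, fun t ht => ?_⟩
  simp only [logAvg_eq_log_leadingCoeff_add_sum M.den_ne_zero]
  rw [← Multiset.attach_map_val' _ (rootPotential · t),
    ← Multiset.attach_map_val' _ (rootPotential · 0), add_assoc, ← Multiset.sum_map_mul_right,
    ← Multiset.sum_map_add]
  simp only [hm _ t ht]

end RationalCocycle

namespace RationalCocycle

variable (M : RationalCocycle) {b : ℝ}

lemma exists_comparison (a : ℝ) (n : ℕ) {t : ℝ} (ht : |t| ≤ M.width) :
    ∃ g : ℂ[X], g ≠ 0 ∧ g.natDegree ≤ 2 * n ∧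
      (∀ z, ‖g.eval z‖ ≤ 4 * ‖evalMat z (iterPoly M.num a n)‖) ∧
      n * logAvg M.den t + meanLogNorm (M.cocycle t) a n ≤ Real.log 6 + logAvg g t := by
  obtain ⟨w, hw, hg, hle⟩ := exists_logAvgNorm_le_logAvg_mixEntries
    (M.evalMat_iterPoly_num_ne_zero a n ht)
  rw [M.logAvgNorm_iterPoly_num a n ht] at hle
  exact ⟨_, hg, natDegree_mixEntries_le (natDegree_iterPoly_le M.natDegree_num_le a n) w,
    norm_eval_mixEntries_le _ hw, hle⟩

lemma logAvg_le_of_norm_eval_le {g : ℂ[X]} (hg : g ≠ 0) (a : ℝ) (n : ℕ)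
    (hle : ∀ z, ‖g.eval z‖ ≤ 4 * ‖evalMat z (iterPoly M.num a n)‖) {t : ℝ}
    (ht : |t| ≤ M.width) :
    logAvg g t ≤ Real.log 4 + (n * logAvg M.den t + meanLogNorm (M.cocycle t) a n) := by
  rw [← M.logAvgNorm_iterPoly_num a n ht]
  exact logAvg_le_logAvgNorm hg hle (M.evalMat_iterPoly_num_ne_zero a n ht)

end RationalCocycle

lemma IsSL2Cocycle.eventually_meanLogNorm_le {A : ℝ → Mat} (hA : IsSL2Cocycle A) {a : ℝ}
    (ha : Irrational a) {v : ℝ} (hv : lyapExp A a < v) :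
    ∀ᶠ n : ℕ in Filter.atTop, meanLogNorm A a n ≤ n * v := by
  filter_upwards [hA.eventually_log_norm_iter_le ha hv] with n hn
  have h := intervalIntegral.integral_mono_on zero_le_one
    ((hA.continuous_log_norm_iter a n).intervalIntegrable 0 1)
    (intervalIntegrable_const (μ := volume) (c := n * v)) fun x _ => hn x
  simpa [meanLogNorm] using h

namespace RationalCocycle

variable (M : RationalCocycle) {b : ℝ}

lemma convexOn_exponent (hb : Irrational b) :
    ConvexOn ℝ (Set.Icc (-M.width) M.width) (M.exponent b) := by
  refine ⟨convex_Icc _ _, fun s hs t ht μ ν hμ hν hμν => ?_⟩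
  have hu := (convex_Icc _ _) hs ht hμ hν hμν
  rw [Set.mem_Icc, ← abs_le] at hs ht hu
  obtain ⟨m, hm⟩ := M.exists_logAvg_den_eq
  refine le_of_forall_pos_le_add fun ε hε => ?_
  have hlt (r : ℝ) : lyapExp (M.cocycle r) b < M.exponent b r + ε / 2 := by
    rw [exponent]; linarith
  have hlog := (tendsto_const_div_atTop_nhds_zero_nat (Real.log 6 + Real.log 4)).eventually
    (eventually_le_nhds (half_pos hε))
  obtain ⟨n, hns, hnt, hn, hn₀⟩ := ((M.isSL2Cocycle hs).eventually_meanLogNorm_le hb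
    (hlt s)).and (((M.isSL2Cocycle ht).eventually_meanLogNorm_le hb (hlt t)).and
    (hlog.and (Filter.eventually_gt_atTop 0))) |>.exists
  have hn' : (0 : ℝ) < n := by exact_mod_cast hn₀
  obtain ⟨g, hg, -, hgle, hgu⟩ := M.exists_comparison b n hu
  have hgs := M.logAvg_le_of_norm_eval_le hg b n hgle hs
  have hgt := M.logAvg_le_of_norm_eval_le hg b n hgle ht
  have hconv := (convexOn_logAvg g).2 (Set.mem_univ s) (Set.mem_univ t) hμ hν hμν
  have hlow := (M.isSL2Cocycle hu).mul_lyapExp_le_meanLogNorm b n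
  rw [div_le_iff₀ hn'] at hn
  rw [hm _ hu] at hgu
  rw [hm s hs] at hgs
  rw [hm t ht] at hgt
  refine le_of_mul_le_mul_left ?_ hn'
  have h₁ := mul_le_mul_of_nonneg_left
    (hgs.trans (add_le_add_right (add_le_add_right hns _) _)) hμ
  have h₂ := mul_le_mul_of_nonneg_left
    (hgt.trans (add_le_add_right (add_le_add_right hnt _) _)) hν
  obtain rfl : ν = 1 - μ := by linarith
  simp only [exponent, smul_eq_mul] at *
  linarith

end RationalCocycle

/-! ### Pointwise lower bounds where the exponent is almost affine -/

namespace IsSL2Cocycle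

variable {A : ℝ → Mat} (hA : IsSL2Cocycle A) {C : ℝ} (hAC : ∀ x, ‖A x‖ ≤ C)

include hA hAC

lemma norm_iter_shift_le (a : ℝ) (n j : ℕ) (x : ℝ) :
    ‖cocycleIter A a n (x + j * a)‖ ≤ 2 * C ^ (2 * j) * ‖cocycleIter A a n x‖ := by
  have hconj : cocycleIter A a n (x + j * a) = cocycleIter A a j (x + n * a) *
      cocycleIter A a n x * (cocycleIter A a j x).adjugate := by
    rw [← cocycleIter_add, add_comm n j, cocycleIter_add, mul_assoc, Matrix.mul_adjugate,
      hA.det_iter, one_smul, mul_one]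
  have hj (y : ℝ) : ‖cocycleIter A a j y‖ ≤ C ^ j := norm_orderedProd_le (fun _ => hAC _) j
  have hC : 0 ≤ C := (norm_nonneg _).trans (hAC 0)
  rw [hconj]
  calc _ ≤ ‖cocycleIter A a j (x + n * a)‖ * ‖cocycleIter A a n x‖ *
        ‖(cocycleIter A a j x).adjugate‖ :=
        (norm_mul_le _ _).trans (mul_le_mul_of_nonneg_right (norm_mul_le _ _) (norm_nonneg _))
    _ ≤ C ^ j * ‖cocycleIter A a n x‖ * (2 * C ^ j) := by
        gcongr
        · exact hj _
        · exact (norm_adjugate_le _).trans (by gcongr; exact hj x)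
    _ = _ := by ring

lemma norm_iter_le_two_mul (hC : 1 ≤ C) (hLip : ∀ x y, ‖A x - A y‖ ≤ C * |x - y|) (a : ℝ) {n : ℕ}
    {x y : ℝ} (hxy : n * C ^ n * (C * |x - y|) ≤ 1) :
    ‖cocycleIter A a n x‖ ≤ 2 * ‖cocycleIter A a n y‖ := by
  have hsub : ‖cocycleIter A a n x - cocycleIter A a n y‖ ≤ n * C ^ n * (C * |x - y|) :=
    norm_orderedProd_sub_le n hC (fun _ => hAC _) (fun _ => hAC _) fun j _ => by
      simpa using hLip (x + j * a) (y + j * a)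
  linarith [norm_le_norm_add_norm_sub' (cocycleIter A a n x) (cocycleIter A a n y),
    hA.one_le_norm_iter a n y]

end IsSL2Cocycle

/-- The displacement `(16 C ^ 2) ^ (-N)` is negligible for `N` steps of a cocycle bounded by `C`. -/
lemma mul_pow_mul_inv_pow_le_one {C : ℝ} (hC : 1 ≤ C) {N q : ℕ} (hN : 1 ≤ N) (hq : q ≤ N) :
    N * C ^ N * (C * ((2 * N * q : ℕ) * ((16 * C ^ 2) ^ N)⁻¹)) ≤ 1 := by
  have hN₂ : (N : ℝ) ≤ 2 ^ N := by exact_mod_cast Nat.lt_two_pow_self.le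
  have hq₂ : (q : ℝ) ≤ 2 ^ N := by exact_mod_cast hq.trans Nat.lt_two_pow_self.le
  have h₂ : (2 : ℝ) ≤ 2 ^ N := le_self_pow₀ one_le_two (by omega)
  rw [← mul_assoc C, ← mul_assoc, mul_inv_le_iff₀ (by positivity), one_mul]
  push_cast
  calc (N : ℝ) * C ^ N * (C * (2 * N * q))
      ≤ 2 ^ N * C ^ N * (C ^ N * (2 ^ N * 2 ^ N * 2 ^ N)) := by
        gcongr
        exact le_self_pow₀ hC (by omega)
    _ = (16 * C ^ 2) ^ N := by
        rw [show 16 * C ^ 2 = 2 * 2 * 2 * 2 * C * C by ring]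
        simp only [mul_pow]
        ring

lemma mul_inv_pow_le_half {C : ℝ} (hC : 1 ≤ C) {N q : ℕ} (hN : 2 ≤ N) (hq : q ≤ N) :
    ((2 * N * q : ℕ) : ℝ) * ((16 * C ^ 2) ^ N)⁻¹ ≤ 1 / 2 := by
  set y : ℝ := (2 * N * q : ℕ) * ((16 * C ^ 2) ^ N)⁻¹
  have hle : 2 * 1 * (1 * y) ≤ N * C ^ N * (C * y) := by
    gcongr
    · exact_mod_cast hN
    · exact one_le_pow₀ hC
  linarith [mul_pow_mul_inv_pow_le_one hC (by omega : 1 ≤ N) hq]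

namespace RationalCocycle

variable (M : RationalCocycle) {b : ℝ}

lemma logAvg_second_difference_le {N : ℕ} {t h ε : ℝ} (ht : |t| ≤ M.width)
    (htp : |t + h| ≤ M.width) (htm : |t - h| ≤ M.width) {g : ℂ[X]} (hg : g ≠ 0)
    (hgle : ∀ z, ‖g.eval z‖ ≤ 4 * ‖evalMat z (iterPoly M.num b N)‖)
    (hgt : N * logAvg M.den t + meanLogNorm (M.cocycle t) b N ≤ Real.log 6 + logAvg g t)
    (hp : meanLogNorm (M.cocycle (t + h)) b N ≤ N * (M.exponent b (t + h) + ε))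
    (hm : meanLogNorm (M.cocycle (t - h)) b N ≤ N * (M.exponent b (t - h) + ε)) :
    logAvg g (t + h) + logAvg g (t - h) - 2 * logAvg g t ≤ 2 * (Real.log 4 + Real.log 6) +
      N * (M.exponent b (t + h) + M.exponent b (t - h) - 2 * M.exponent b t + 2 * ε) := by
  obtain ⟨m, hden⟩ := M.exists_logAvg_den_eq
  have hgp := M.logAvg_le_of_norm_eval_le hg b N hgle htp
  have hgm := M.logAvg_le_of_norm_eval_le hg b N hgle htm
  have hlow := (M.isSL2Cocycle ht).mul_lyapExp_le_meanLogNorm b N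
  rw [hden _ htp] at hgp
  rw [hden _ htm] at hgm
  rw [hden t ht] at hgt
  rw [← exponent] at hlow
  linarith

lemma log_norm_eval_shift_le {C : ℝ} (hC : 1 ≤ C) {t : ℝ} (ht : |t| ≤ M.width)
    (hAC : ∀ x, ‖M.cocycle t x‖ ≤ C) {N q j : ℕ} (hj : j < q) {η x x₀ : ℝ} {g : ℂ[X]}
    (hgle : ∀ z, ‖g.eval z‖ ≤ 4 * ‖evalMat z (iterPoly M.num b N)‖)
    (hden : ∀ x, |∑ k ∈ Finset.range N, Real.log ‖M.den.eval (circlePt t (x + k * b))‖ -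
      N * logAvg M.den t| ≤ N * η)
    (hx : ‖cocycleIter (M.cocycle t) b N x‖ ≤ 2 * ‖cocycleIter (M.cocycle t) b N x₀‖)
    (hgx : g.eval (circlePt t (x + j * b)) ≠ 0) :
    Real.log ‖g.eval (circlePt t (x + j * b))‖ ≤ Real.log 16 + N * (logAvg M.den t + η) +
      2 * q * Real.log C + Real.log ‖cocycleIter (M.cocycle t) b N x₀‖ := by
  have hA := M.isSL2Cocycle ht
  have hpoly := Real.log_le_log (norm_pos_iff.mpr hgx) (hgle _)
  rw [Real.log_mul four_ne_zero
    (norm_ne_zero_iff.mpr (M.evalMat_iterPoly_num_ne_zero b N ht _)),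
    M.log_norm_evalMat_iterPoly_num b N ht] at hpoly
  have hshift : ‖cocycleIter (M.cocycle t) b N (x + j * b)‖ ≤
      4 * C ^ (2 * q) * ‖cocycleIter (M.cocycle t) b N x₀‖ :=
    calc _ ≤ 2 * C ^ (2 * j) * ‖cocycleIter (M.cocycle t) b N x‖ :=
          hA.norm_iter_shift_le hAC b N j x
      _ ≤ 2 * C ^ (2 * q) * (2 * ‖cocycleIter (M.cocycle t) b N x₀‖) := by gcongr
      _ = _ := by ring
  have hpow : C ^ (2 * q) ≠ 0 := by positivity
  have hlog := Real.log_le_log (hA.norm_iter_pos b N _) hshift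
  rw [Real.log_mul (by positivity) (hA.norm_iter_pos b N x₀).ne', Real.log_mul four_ne_zero hpow,
    Real.log_pow] at hlog
  have h16 : Real.log 16 = Real.log 4 + Real.log 4 := by
    rw [← Real.log_mul four_ne_zero four_ne_zero]
    norm_num
  have hbirk := (abs_le.mp (hden (x + j * b))).2
  push_cast at hlog
  linarith

lemma den_mul_meanLogNorm_le {C : ℝ} (hC : 1 ≤ C) {t : ℝ} (ht : |t| ≤ M.width)
    (hAC : ∀ x, ‖M.cocycle t x‖ ≤ C)
    (hLip : ∀ x y, ‖M.cocycle t x - M.cocycle t y‖ ≤ C * |x - y|) {r : ℚ}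
    (hr : |b - r| ≤ 1 / (r.den : ℝ) ^ 2) {N : ℕ} (hN : 2 ≤ N) (hrN : r.den ≤ N) {h η k : ℝ}
    (hh : 0 < h) (hη : 0 ≤ η) (hq : 52 / r.den ≤ (1 - Real.exp (-(h / 2))) * η) {g : ℂ[X]}
    (hg : g ≠ 0) (hgd : g.natDegree ≤ 2 * N)
    (hgle : ∀ z, ‖g.eval z‖ ≤ 4 * ‖evalMat z (iterPoly M.num b N)‖)
    (hgt : N * logAvg M.den t + meanLogNorm (M.cocycle t) b N ≤ Real.log 6 + logAvg g t)
    (hk : logAvg g (t + h) + logAvg g (t - h) - 2 * logAvg g t ≤ k * (h / 2))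
    (hden : ∀ x, |∑ j ∈ Finset.range N, Real.log ‖M.den.eval (circlePt t (x + j * b))‖ -
      N * logAvg M.den t| ≤ N * η) (x₀ : ℝ) :
    r.den * meanLogNorm (M.cocycle t) b N ≤ r.den * (Real.log 6 + Real.log 16 + 3 * (N * η) +
      2 * r.den * Real.log C + Real.log ‖cocycleIter (M.cocycle t) b N x₀‖) +
      k * (r.den * 26 + 3 * (N * Real.log (16 * C ^ 2))) := by
  set s := ((16 * C ^ 2) ^ N)⁻¹ with hs
  have h16 : 1 ≤ 16 * C ^ 2 := by nlinarith
  have hs₀ : 0 < s := by positivity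
  have hs₁ : s ≤ 1 := inv_le_one_of_one_le₀ (one_le_pow₀ h16)
  have hlogs : Real.log s = -(N * Real.log (16 * C ^ 2)) := by
    rw [hs, Real.log_inv, Real.log_pow]
  obtain ⟨i, hi, hsep⟩ := exists_forall_le_norm_circlePt_sub (M.one_half_le_exp ht) b x₀ hs₀
    ((card_roots' g).trans hgd) (mul_inv_pow_le_half hC hN hrN)
  have hx : ‖cocycleIter (M.cocycle t) b N (x₀ + i * s)‖ ≤
      2 * ‖cocycleIter (M.cocycle t) b N x₀‖ := by
    refine (M.isSL2Cocycle ht).norm_iter_le_two_mul hAC hC hLip b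
      ((mul_pow_mul_inv_pow_le_one hC (by omega) hrN).trans' ?_)
    rw [add_sub_cancel_left, abs_of_nonneg (by positivity)]
    gcongr
  have hlow := mul_logAvg_sub_le_sum_log_norm_eval hr (M.one_half_le_exp ht) (M.exp_le_two ht) hh
    hs₀ hs₁ hη hq hg hgd hsep hk
  have hup := Finset.sum_le_sum fun j hj => M.log_norm_eval_shift_le hC ht hAC
    (Finset.mem_range.mp hj) hgle hden hx fun h0 => by
      have hroot := hsep j (Finset.mem_range.mp hj) _ ((mem_roots hg).mpr h0)
      rw [sub_self, norm_zero] at hroot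
      exact hs₀.not_ge hroot
  rw [Finset.sum_const, Finset.card_range, nsmul_eq_mul] at hup
  have hgt' := mul_le_mul_of_nonneg_left hgt (Nat.cast_nonneg r.den)
  rw [hlogs] at hlow
  push_cast at hlow
  linarith

lemma mul_exponent_sub_le_log_norm_iter {C : ℝ} (hC : 1 ≤ C) {t h δ τ : ℝ}
    (ht : |t| ≤ M.width) (htp : |t + h| ≤ M.width) (htm : |t - h| ≤ M.width)
    (hAC : ∀ x, ‖M.cocycle t x‖ ≤ C)
    (hLip : ∀ x y, ‖M.cocycle t x - M.cocycle t y‖ ≤ C * |x - y|) {r : ℚ}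
    (hr : |b - r| ≤ 1 / (r.den : ℝ) ^ 2) {K N : ℕ} (hK : 0 < K) (hN : N = 2 * (K * r.den))
    (hh : 0 < h) (hδ : 0 < δ) (hq : 52 / r.den ≤ (1 - Real.exp (-(h / 2))) * (δ / 16))
    (hden : ∀ x, |∑ j ∈ Finset.range N, Real.log ‖M.den.eval (circlePt t (x + j * b))‖ -
      N * logAvg M.den t| ≤ N * (δ / 16))
    (hp : meanLogNorm (M.cocycle (t + h)) b N ≤ N * (M.exponent b (t + h) + τ * h / 4))
    (hm : meanLogNorm (M.cocycle (t - h)) b N ≤ N * (M.exponent b (t - h) + τ * h / 4))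
    (hL : M.exponent b (t + h) + M.exponent b (t - h) - 2 * M.exponent b t ≤ τ * h)
    (hKδ : 8 * Real.log C ≤ K * δ) (hτ : τ * (26 + 6 * K * Real.log (16 * C ^ 2)) = δ / 32)
    (hNτ : 2 * (Real.log 4 + Real.log 6) ≤ N * (τ * h / 2))
    (hNδ : Real.log 6 + Real.log 16 ≤ N * (δ / 16)) (x : ℝ) :
    N * (M.exponent b t - δ) ≤ Real.log ‖cocycleIter (M.cocycle t) b N x‖ := by
  have hden₀ : (0 : ℝ) < r.den := by exact_mod_cast r.pos
  have hKr : r.den ≤ K * r.den := Nat.le_mul_of_pos_left _ hK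
  have hNr : (N : ℝ) = 2 * (K * r.den) := by rw [hN]; push_cast; ring
  obtain ⟨g, hg, hgd, hgle, hgt⟩ := M.exists_comparison b N ht
  have hk : logAvg g (t + h) + logAvg g (t - h) - 2 * logAvg g t ≤ 4 * τ * N * (h / 2) := by
    have hsecond := M.logAvg_second_difference_le ht htp htm hg hgle hgt hp hm
    have hNL := mul_le_mul_of_nonneg_left hL (Nat.cast_nonneg (α := ℝ) N)
    linarith
  have hmain := M.den_mul_meanLogNorm_le hC ht hAC hLip hr (by have := r.pos; omega) (by omega)
    hh (by positivity) hq hg hgd hgle hgt hk hden x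
  have herr : 4 * τ * N * (r.den * 26 + 3 * (N * Real.log (16 * C ^ 2))) =
      r.den * (N * (δ / 8)) := by
    have hW : r.den * 26 + 3 * (N * Real.log (16 * C ^ 2)) =
        r.den * (26 + 6 * K * Real.log (16 * C ^ 2)) := by rw [hNr]; ring
    rw [hW]
    linear_combination 4 * N * r.den * hτ
  rw [herr, ← mul_add, mul_le_mul_iff_right₀ hden₀] at hmain
  have hlow := (M.isSL2Cocycle ht).mul_lyapExp_le_meanLogNorm b N
  have hqC : 2 * r.den * Real.log C ≤ N * (δ / 8) := by
    rw [hNr]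
    linarith [mul_le_mul_of_nonneg_left hKδ hden₀.le]
  have hNδ₀ : 0 ≤ N * δ := by positivity
  rw [← exponent] at hlow
  linarith

/-- If the convex function `exponent` is nearly affine around `t`, few zeros of the comparison
polynomial lie near the circle of radius `exp t`, so its logarithm cannot be small along an orbit
and the growth rate is attained at every point. -/
theorem exists_frequently_mul_exponent_sub_le (hb : Irrational b) {δ : ℝ} (hδ : 0 < δ) :
    ∃ τ > 0, ∀ t h : ℝ, 0 < h → |t| ≤ M.width → |t + h| ≤ M.width → |t - h| ≤ M.width →
      M.exponent b (t + h) + M.exponent b (t - h) - 2 * M.exponent b t ≤ τ * h →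
      ∃ᶠ n : ℕ in Filter.atTop, ∀ x, (2 * n : ℕ) * (M.exponent b t - δ) ≤
        Real.log ‖cocycleIter (M.cocycle t) b (2 * n) x‖ := by
  obtain ⟨C, hC, hbounds⟩ := M.exists_bounds
  obtain ⟨K, hK⟩ := exists_nat_gt (8 * Real.log C / δ)
  have hlogC : 0 ≤ Real.log C := Real.log_nonneg hC
  have hK₀ : (0 : ℝ) < K := hK.trans_le' (by positivity)
  have hlog16 : 0 ≤ Real.log (16 * C ^ 2) := Real.log_nonneg (by nlinarith)
  have hW : 0 < 26 + 6 * K * Real.log (16 * C ^ 2) := by positivity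
  obtain ⟨τ, hτ⟩ : ∃ τ, τ = δ / 32 / (26 + 6 * K * Real.log (16 * C ^ 2)) := ⟨_, rfl⟩
  have hτ₀ : 0 < τ := by rw [hτ]; positivity
  refine ⟨τ, hτ₀, fun t h hh ht htp htm hL => Filter.frequently_atTop.mpr fun n₀ => ?_⟩
  have hτh : 0 < τ * h := by positivity
  have hexp : 0 < (1 - Real.exp (-(h / 2))) * (δ / 16) :=
    mul_pos (sub_pos.mpr (Real.exp_lt_one_iff.mpr (by linarith))) (by positivity)
  have hlin (c : ℝ) {d : ℝ} (hd : 0 < d) : ∀ᶠ n : ℕ in Filter.atTop, c ≤ n * d :=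
    (tendsto_natCast_atTop_atTop.atTop_mul_const hd).eventually_ge_atTop c
  have hmean {s : ℝ} (hs : |s| ≤ M.width) := (M.isSL2Cocycle hs).eventually_meanLogNorm_le hb
    (v := M.exponent b s + τ * h / 4) (by rw [exponent]; linarith)
  obtain ⟨n₁, hn₁⟩ := Filter.eventually_atTop.mp <| (hmean htp).and <| (hmean htm).and <|
    (eventually_abs_sum_sub_mul_integral_le (fun x => by simp only [circlePt_periodic t x])
      (M.continuous_log_norm_den ht) hb (by positivity : 0 < δ / 16)).and <|
    (hlin (2 * (Real.log 4 + Real.log 6)) (half_pos hτh)).and <|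
    (hlin (Real.log 6 + Real.log 16) (by positivity : 0 < δ / 16)).and (hlin 52 hexp)
  obtain ⟨r, hrn, hr⟩ := exists_rat_lt_den_and_abs_sub_le hb (n₀ + n₁)
  have hKr : r.den ≤ K * r.den := Nat.le_mul_of_pos_left _ (by exact_mod_cast hK₀)
  obtain ⟨hp, hm, hden, hNτ, hNδ, -⟩ := hn₁ (2 * (K * r.den)) (by omega)
  obtain ⟨-, -, -, -, -, hq⟩ := hn₁ r.den (by omega)
  rw [div_lt_iff₀ hδ] at hK
  exact ⟨K * r.den, by omega, M.mul_exponent_sub_le_log_norm_iter hC ht htp htm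
    (fun x => (hbounds t ht x).1) (fun x => (hbounds t ht x).2) hr (by exact_mod_cast hK₀) rfl hh
    hδ ((div_le_iff₀' (by exact_mod_cast r.pos)).mpr hq) hden hp hm hL hK.le
    ((eq_div_iff hW.ne').mp hτ) hNτ hNδ⟩

end RationalCocycle

/-! ### Traces along rational frequencies -/

lemma exists_forall_abs_sum_sub_den_mul_integral_le {f : ℝ → ℝ} (hper : Function.Periodic f 1)
    (hf : Continuous f) {η : ℝ} (hη : 0 < η) : ∃ D : ℕ, ∀ r : ℚ, D < r.den → ∀ x,
      |∑ j ∈ Finset.range r.den, f (x + j * r) - r.den * ∫ y in (0 : ℝ)..1, f y| ≤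
        r.den * η := by
  obtain ⟨d, hd, hfd⟩ :=
    Metric.uniformContinuous_iff.mp (uniformContinuous_of_periodic hper hf) η hη
  obtain ⟨D, hD⟩ := exists_nat_gt (2 / d)
  refine ⟨D, fun r hr => abs_sum_sub_den_mul_integral_le hper hf (by simp) fun s t hst => ?_⟩
  have hden : (D : ℝ) < r.den := by exact_mod_cast hr
  have hlt : 2 / (r.den : ℝ) < d := div_lt_comm₀ hd (by positivity) |>.mp (hD.trans hden)
  exact (hfd (hst.trans_lt hlt)).le

lemma cast_den_mul_self (r : ℚ) : (r.den : ℝ) * r = r.num := by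
  exact_mod_cast Rat.den_mul_eq_num r

lemma periodic_natCast_mul_rat {X : Type*} {A : ℝ → X} (hA : Function.Periodic A 1) (r : ℚ)
    (x : ℝ) : Function.Periodic (fun j : ℕ => A (x + j * r)) r.den := fun j => by
  have hshift : x + ((j + r.den : ℕ) : ℝ) * r = x + j * r + r.num := by
    push_cast
    linear_combination cast_den_mul_self r
  simpa only [hshift, mul_one] using hA.int_mul r.num (x + j * r)

lemma trace_cocycleIter_add_rat {A : ℝ → Mat} (hA : Function.Periodic A 1) (r : ℚ) (x : ℝ) :
    (cocycleIter A r r.den (x + r)).trace = (cocycleIter A r r.den x).trace := by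
  obtain ⟨m, hm⟩ := Nat.exists_eq_succ_of_ne_zero r.den_nz
  have hone (y : ℝ) : cocycleIter A r 1 y = A y := by simp [cocycleIter, orderedProd]
  have hwrap : A (x + r + m * r) = A x := by
    have h := periodic_natCast_mul_rat hA r x 0
    simp only [hm, zero_add, Nat.succ_eq_add_one, Nat.cast_add, Nat.cast_one, Nat.cast_zero,
      zero_mul, add_zero] at h
    rw [← h]
    ring_nf
  rw [hm, Nat.succ_eq_add_one, cocycleIter_add, add_comm m 1, cocycleIter_add, hone, hone, hwrap,
    Nat.cast_one, one_mul, Matrix.trace_mul_comm]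

lemma eval_eq_of_comp_C_mul_X_eq_self {p : ℂ[X]} {ζ : ℂ} {q : ℕ} (hζ : IsPrimitiveRoot ζ q)
    (hq : 0 < q) (hp : p.comp (C ζ * X) = p) (hdeg : p.natDegree ≤ 2 * q) (z : ℂ) :
    p.eval z = p.coeff 0 + p.coeff q * z ^ q + p.coeff (2 * q) * (z ^ q) ^ 2 := by
  have hcoeff (k : ℕ) (hk : ¬ q ∣ k) : p.coeff k = 0 := by
    have h := congrArg (coeff · k) hp
    simp only [comp_C_mul_X_coeff] at h
    by_contra hne
    exact hk (hζ.dvd_of_pow_eq_one k (mul_left_cancel₀ hne (by rw [h, mul_one])))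
  rw [eval_eq_sum_range' (n := 2 * q + 1) (by omega),
    ← Finset.sum_subset (s₁ := {0, q, 2 * q}) (by grind)]
  · rw [Finset.sum_insert (by simp; omega), Finset.sum_insert (by simp; omega),
      Finset.sum_singleton]
    ring
  · intro k hk hk'
    rw [hcoeff k, zero_mul]
    rintro ⟨m, rfl⟩
    have hm : m < 3 := by
      by_contra! hm
      have := Nat.mul_le_mul_left q hm
      grind
    interval_cases m <;> grind

lemma norm_coeff_le_of_comp_C_mul_X_eq_self {p : ℂ[X]} {ζ : ℂ} {q : ℕ} (hζ : IsPrimitiveRoot ζ q)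
    (hq : 0 < q) (hp : p.comp (C ζ * X) = p) (hdeg : p.natDegree ≤ 2 * q) {B : ℝ}
    (hB : ∀ x, ‖p.eval (circlePt 0 x)‖ ≤ B) : ‖p.coeff q‖ ≤ B := by
  have hone : circlePt 0 0 ^ q = 1 := by simp [circlePt]
  have hneg : circlePt 0 (1 / (2 * q)) ^ q = -1 := by
    have hq' : (q : ℂ) ≠ 0 := by exact_mod_cast hq.ne'
    rw [circlePt, ← Complex.exp_nat_mul, ← Complex.exp_pi_mul_I]
    congr 1
    push_cast
    field_simp
    ring
  have hsub : 2 * p.coeff q =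
      p.eval (circlePt 0 0) - p.eval (circlePt 0 (1 / (2 * q))) := by
    have heval := eval_eq_of_comp_C_mul_X_eq_self hζ hq hp hdeg
    rw [heval, heval, hone, hneg]
    ring
  have h := norm_sub_le (p.eval (circlePt 0 0)) (p.eval (circlePt 0 (1 / (2 * q))))
  rw [← hsub, norm_mul, Complex.norm_ofNat] at h
  linarith [hB 0, hB (1 / (2 * q))]

section TracePolynomial

variable {D : PolyMat} (n : ℕ)

lemma eval_trace (P : PolyMat) (z : ℂ) : P.trace.eval z = (evalMat z P).trace := by
  simp [Matrix.trace_fin_two]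

lemma eval_trace_iterPoly (D : PolyMat) (a t x : ℝ) :
    (iterPoly D a n).trace.eval (circlePt t x) =
      (cocycleIter (fun y => evalMat (circlePt t y) D) a n x).trace := by
  rw [eval_trace, evalMat_iterPoly, cocycleIter]

lemma natDegree_trace_iterPoly_le (hD : ∀ i j, (D i j).natDegree ≤ 2) (a : ℝ) :
    (iterPoly D a n).trace.natDegree ≤ 2 * n := by
  rw [Matrix.trace_fin_two]
  exact (natDegree_add_le _ _).trans
    (max_le (natDegree_iterPoly_le hD a n 0 0) (natDegree_iterPoly_le hD a n 1 1))

lemma coeff_zero_trace_iterPoly (D : PolyMat) (a : ℝ) :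
    (iterPoly D a n).trace.coeff 0 = (evalMat 0 D ^ n).trace := by
  rw [coeff_zero_eq_eval_zero, eval_trace, iterPoly]
  refine congrArg Matrix.trace
    ((map_orderedProd (evalMat 0).toMonoidHom _ n).trans (Eq.trans ?_ (orderedProd_const _ n)))
  congr! 2 with j
  ext i k
  simp

lemma norm_coeff_trace_iterPoly (hD : ∀ i j, (D i j).natDegree ≤ 2) (a : ℝ) :
    ‖(iterPoly D a n).trace.coeff (2 * n)‖ = ‖((D.map (coeff · 2)) ^ n).trace‖ := by
  have htwist (k : ℕ) : (D.map fun g => g.comp (C (circlePt 0 (k * a)) * X)).map (coeff · 2) =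
      circlePt 0 (k * a) ^ 2 • D.map (coeff · 2) := by
    ext i j
    exact (comp_C_mul_X_coeff ..).trans (mul_comm _ _)
  have htrace : (iterPoly D a n).trace.coeff (2 * n) =
      ((iterPoly D a n).map (coeff · (2 * n))).trace := by
    simp [Matrix.trace_fin_two]
  rw [htrace, iterPoly, coeff_orderedProd fun _ => natDegree_twist_le hD _]
  simp only [htwist]
  rw [orderedProd_smul, orderedProd_const, Matrix.trace_smul, norm_smul, norm_prod]
  simp

lemma trace_iterPoly_comp (D : PolyMat) (r : ℚ) :
    (iterPoly D r r.den).trace.comp (C (circlePt 0 r) * X) = (iterPoly D r r.den).trace := by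
  refine eq_of_infinite_eval_eq _ _ (Set.Infinite.mono (s := circlePt 0 '' Set.Ioc 0 1) ?_
    ((Set.Ioc_infinite one_pos).image (circlePt_injOn 0)))
  rintro _ ⟨x, -, rfl⟩
  change eval _ _ = eval _ _
  rw [eval_comp, eval_mul, eval_C, eval_X, mul_comm, ← circlePt_add, eval_trace_iterPoly,
    eval_trace_iterPoly, trace_cocycleIter_add_rat fun y => by rw [circlePt_periodic]]

lemma isPrimitiveRoot_circlePt (r : ℚ) : IsPrimitiveRoot (circlePt 0 r) r.den := by
  simpa [circlePt] using Complex.isPrimitiveRoot_exp_rat r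

end TracePolynomial

/-! ### Stability under perturbation of the frequency -/

lemma le_of_forall_pow_le_mul_pow {u v B : ℝ} (hv : 1 ≤ v) (h : ∀ k : ℕ, u ^ k ≤ B * v ^ k) :
    u ≤ v := by
  by_contra! hvu
  have hv₀ : 0 < v := by linarith
  obtain ⟨k, hk⟩ := pow_unbounded_of_one_lt B ((one_lt_div hv₀).mpr hvu)
  rw [div_pow, lt_div_iff₀ (pow_pos hv₀ k)] at hk
  exact hk.not_ge (h k)

lemma eventually_le_exp_natCast_mul {δ : ℝ} (hδ : 0 < δ) (B : ℝ) :
    ∀ᶠ n : ℕ in Filter.atTop, B ≤ Real.exp (n * δ) :=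
  (Real.tendsto_exp_atTop.comp
    (tendsto_natCast_atTop_atTop.atTop_mul_const hδ)).eventually_ge_atTop B

namespace IsSL2Cocycle

variable {A : ℝ → Mat} (hA : IsSL2Cocycle A) {a : ℝ}

include hA

lemma eventually_norm_iter_sub_le (a : ℝ) (n : ℕ) : ∀ᶠ a' in nhds a, ∀ x,
    ‖cocycleIter A a n x - cocycleIter A a' n x‖ ≤ 1 := by
  obtain ⟨C, hC₁, hC⟩ := hA.exists_norm_le
  have hK : 0 < n * C ^ n + 1 := by positivity
  obtain ⟨d, hd, hAd⟩ := Metric.uniformContinuous_iff.mp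
    (uniformContinuous_of_periodic hA.periodic hA.continuous) _ (one_div_pos.mpr hK)
  refine Metric.eventually_nhds_iff.mpr ⟨d / (n + 1), by positivity, fun a' ha' x => ?_⟩
  rw [dist_comm, Real.dist_eq] at ha'
  have hstep (j : ℕ) (hj : j < n) :
      ‖A (x + j * a) - A (x + j * a')‖ ≤ 1 / (n * C ^ n + 1) := by
    rw [← dist_eq_norm]
    refine (hAd ?_).le
    have hj' : (j : ℝ) ≤ n + 1 := by exact_mod_cast hj.le.trans n.le_succ
    rw [Real.dist_eq, add_sub_add_left_eq_sub, ← mul_sub, abs_mul, Nat.abs_cast]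
    calc j * |a - a'| ≤ (n + 1) * |a - a'| := by gcongr
      _ < d := (lt_div_iff₀' (by positivity)).mp ha'
  refine (norm_orderedProd_sub_le n hC₁ (fun _ => hC _) (fun _ => hC _) hstep).trans ?_
  rw [mul_one_div, div_le_one hK]
  linarith

lemma log_norm_iter_le_add {C : ℝ} (hC₁ : 1 ≤ C) (hC : ∀ x, ‖A x‖ ≤ C) {n : ℕ} (hn : 0 < n)
    {s : ℝ} (hs : ∀ x, Real.log ‖cocycleIter A a n x‖ ≤ n * s) (q : ℕ) (x : ℝ) :
    Real.log ‖cocycleIter A a q x‖ ≤ q * s + n * Real.log C := by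
  have hs₀ : 0 ≤ s := nonneg_of_mul_nonneg_right
    ((hA.log_norm_iter_nonneg a n 0).trans (hs 0)) (by exact_mod_cast hn)
  have hblocks : Real.log ‖cocycleIter A a (n * (q / n)) x‖ ≤ q * s :=
    calc Real.log ‖cocycleIter A a (n * (q / n)) x‖
        ≤ ∑ j ∈ Finset.range (q / n), Real.log ‖cocycleIter A a n (x + j * (n * a))‖ :=
          hA.log_norm_iter_mul_le_sum a n _ x
      _ ≤ ∑ _j ∈ Finset.range (q / n), n * s := Finset.sum_le_sum fun j _ => hs _
      _ = (q / n * n : ℕ) * s := by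
          rw [Finset.sum_const, Finset.card_range, nsmul_eq_mul]
          push_cast
          ring
      _ ≤ q * s := by
          gcongr
          exact Nat.div_mul_le_self q n
  have hrest : Real.log ‖cocycleIter A a (q % n) (x + (n * (q / n) : ℕ) * a)‖ ≤ n * Real.log C :=
    (hA.log_norm_iter_le a _ hC _).trans (by
      have := Real.log_nonneg hC₁
      gcongr
      exact (Nat.mod_lt q hn).le)
  have hadd := hA.log_norm_iter_add_le a (q % n) (n * (q / n)) x
  rw [Nat.div_add_mod] at hadd
  linarith

lemma eventually_norm_iter_le_exp (ha : Irrational a) {s : ℝ} (hs : lyapExp A a < s) :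
    ∀ᶠ n : ℕ in Filter.atTop, ∀ᶠ a' in nhds a, ∀ x,
      ‖cocycleIter A a' n x‖ ≤ Real.exp (n * s) := by
  obtain ⟨v, hv, hvs⟩ := exists_between hs
  have hv₀ : 0 < v := (hA.lyapExp_nonneg a).trans_lt hv
  filter_upwards [hA.eventually_log_norm_iter_le ha hv,
    eventually_le_exp_natCast_mul (sub_pos.mpr hvs) 2] with n hn htwo
  filter_upwards [hA.eventually_norm_iter_sub_le a n] with a' ha' x
  have hle : ‖cocycleIter A a n x‖ ≤ Real.exp (n * v) :=
    (Real.log_le_iff_le_exp (hA.norm_iter_pos a n x)).mp (hn x)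
  calc ‖cocycleIter A a' n x‖
      ≤ ‖cocycleIter A a n x‖ + ‖cocycleIter A a n x - cocycleIter A a' n x‖ := norm_le_insert _ _
    _ ≤ Real.exp (n * v) + 1 := add_le_add hle (ha' x)
    _ ≤ Real.exp (n * v) * 2 := by
        linarith [Real.one_le_exp (mul_nonneg n.cast_nonneg hv₀.le)]
    _ ≤ Real.exp (n * v) * Real.exp (n * (s - v)) := by gcongr
    _ = Real.exp (n * s) := by rw [← Real.exp_add, ← mul_add, add_sub_cancel]

lemma eventually_log_norm_iter_le_add (ha : Irrational a) {s : ℝ} (hs : lyapExp A a < s) :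
    ∃ K : ℝ, ∀ᶠ a' in nhds a, ∀ q x, Real.log ‖cocycleIter A a' q x‖ ≤ q * s + K := by
  obtain ⟨C, hC₁, hC⟩ := hA.exists_norm_le
  obtain ⟨n, hn, hn₀⟩ := ((hA.eventually_norm_iter_le_exp ha hs).and
    (Filter.eventually_gt_atTop 0)).exists
  refine ⟨n * Real.log C, hn.mono fun a' ha' q x => ?_⟩
  exact hA.log_norm_iter_le_add hC₁ hC hn₀
    (fun y => (Real.log_le_iff_le_exp (hA.norm_iter_pos a' n y)).mpr (ha' y)) q x

lemma exp_le_norm_trace_iter_add_one (r : ℚ) {n : ℕ} (hn : 0 < n) {Γ s : ℝ} (hΓ : 0 < Γ)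
    (hs : 0 < s) (hup : ∀ x, ‖cocycleIter A r n x‖ ≤ Γ)
    (hlow : ∀ x, 2 * Γ * Real.exp (n * s) ≤ ‖cocycleIter A r (2 * n) x‖) (x : ℝ) :
    Real.exp (r.den * s) ≤ ‖(cocycleIter A r r.den x).trace‖ + 1 := by
  set τ : ℝ := ‖(cocycleIter A r r.den x).trace‖ + 1
  have hτ : 1 ≤ τ := le_add_of_nonneg_left (norm_nonneg _)
  have hgrowth (N : ℕ) : Real.exp (n * s) ^ N ≤ ‖cocycleIter A r (n * N) x‖ :=
    pow_le_norm_orderedProd (fun _ => hA.det_eq_one _) hΓ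
      (Real.one_lt_exp_iff.mpr (by positivity))
      (fun m => by rw [orderedProd_shift_eq_cocycleIter]; exact hup _)
      (fun m => by rw [orderedProd_shift_eq_cocycleIter]; exact hlow _) N
  have hpow : (Real.exp (r.den * s)) ^ n ≤ τ ^ n := by
    refine le_of_forall_pow_le_mul_pow (B := ‖cocycleIter A r r.den x‖) (one_le_pow₀ hτ)
      fun k => ?_
    calc (Real.exp (r.den * s) ^ n) ^ k = Real.exp (n * s) ^ (r.den * k) := by
          simp only [← Real.exp_nat_mul]
          push_cast
          ring_nf
      _ ≤ ‖cocycleIter A r (r.den * (n * k)) x‖ := by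
          rw [mul_left_comm r.den]
          exact hgrowth _
      _ = ‖cocycleIter A r r.den x ^ (n * k)‖ := by
          rw [cocycleIter, orderedProd_mul_of_periodic (periodic_natCast_mul_rat hA.periodic r x),
            cocycleIter]
      _ ≤ ‖cocycleIter A r r.den x‖ * (τ ^ n) ^ k := by
          rw [← pow_mul]
          exact norm_pow_le_of_det_eq_one (hA.det_iter r r.den x) (n * k)
  exact (pow_le_pow_iff_left₀ (Real.exp_pos _).le (by linarith) hn.ne').mp hpow

lemma eventually_exp_le_norm_trace_iter_add_one (ha : Irrational a) {δ : ℝ} (hδ : 0 < δ)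
    (hlow : ∃ᶠ n : ℕ in Filter.atTop, ∀ x, (2 * n : ℕ) * (lyapExp A a - δ) ≤
      Real.log ‖cocycleIter A a (2 * n) x‖) (hδA : 5 * δ < lyapExp A a) :
    ∀ᶠ r : ℚ in Filter.comap (↑) (nhds a), ∀ x,
      Real.exp (r.den * (lyapExp A a - 5 * δ)) ≤ ‖(cocycleIter A r r.den x).trace‖ + 1 := by
  set L := lyapExp A a
  obtain ⟨n, hn, hup, htwo, hn₀⟩ := (hlow.and_eventually
    ((hA.eventually_norm_iter_le_exp ha (lt_add_of_pos_right L hδ)).and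
      ((eventually_le_exp_natCast_mul hδ 2).and (Filter.eventually_gt_atTop 0)))).exists
  filter_upwards [Filter.tendsto_comap.eventually hup,
    Filter.tendsto_comap.eventually (hA.eventually_norm_iter_sub_le a (2 * n))] with r hup' hclose x
  refine hA.exp_le_norm_trace_iter_add_one r hn₀ (Real.exp_pos _) (sub_pos.mpr hδA) hup'
    (fun y => ?_) x
  have hexp : 1 ≤ Real.exp (n * (2 * L - 3 * δ)) :=
    Real.one_le_exp (mul_nonneg n.cast_nonneg (by linarith))
  have hlarge : Real.exp (n * (2 * L - 3 * δ)) * Real.exp (n * δ) ≤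
      ‖cocycleIter A a (2 * n) y‖ := by
    rw [← Real.exp_add, ← Real.le_log_iff_exp_le (hA.norm_iter_pos a _ y)]
    refine (hn y).trans_eq' ?_
    push_cast
    ring
  have hdouble := mul_le_mul_of_nonneg_left htwo (Real.exp_pos (n * (2 * L - 3 * δ))).le
  calc 2 * Real.exp (n * (L + δ)) * Real.exp (n * (L - 5 * δ))
      ≤ Real.exp (n * δ) * Real.exp (n * (L + δ)) * Real.exp (n * (L - 5 * δ)) := by gcongr
    _ = Real.exp (n * (2 * L - 3 * δ)) := by
        rw [← Real.exp_add, ← Real.exp_add]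
        ring_nf
    _ ≤ ‖cocycleIter A r (2 * n) y‖ := by
        linarith [hclose y, norm_le_insert' (cocycleIter A a (2 * n) y)
          (cocycleIter A r (2 * n) y)]

end IsSL2Cocycle

/-! ### Balanced rational cocycles -/

lemma le_add_of_exp_le_six_mul_exp_add_one {u v ε : ℝ} (h : Real.exp u ≤ 6 * Real.exp v + 1)
    (hv : 0 ≤ v) (hε : 7 ≤ Real.exp ε) : u ≤ v + ε := by
  rw [← Real.exp_le_exp, Real.exp_add]
  nlinarith [Real.one_le_exp hv]

namespace RationalCocycle

variable (M : RationalCocycle) {b : ℝ}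

/-- A rational cocycle is balanced if the extreme coefficients of the traces of its iterates do not
grow faster than the common denominator, whose logarithmic average has slope one. This is the
regime in which these coefficients alone cannot force a positive Lyapunov exponent. -/
structure IsBalanced : Prop where
  logAvg_den_eq : ∀ t, |t| ≤ M.width → logAvg M.den t = logAvg M.den 0 + t
  norm_trace_pow_eval_zero_le : ∀ n : ℕ,
    ‖(evalMat 0 M.num ^ n).trace‖ ≤ 2 * Real.exp (n * logAvg M.den 0)
  norm_trace_pow_coeff_two_le : ∀ n : ℕ,
    ‖(M.num.map (coeff · 2) ^ n).trace‖ ≤ 2 * Real.exp (n * logAvg M.den 0)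

lemma abs_zero_le_width : |(0 : ℝ)| ≤ M.width := by
  rw [abs_zero]
  exact M.width_pos.le

lemma exists_forall_abs_sum_log_norm_den_sub_le {t δ : ℝ} (ht : |t| ≤ M.width) (hδ : 0 < δ) :
    ∃ D : ℕ, ∀ r : ℚ, D < r.den → ∀ x, |∑ j ∈ Finset.range r.den,
      Real.log ‖M.den.eval (circlePt t (x + j * r))‖ - r.den * logAvg M.den t| ≤ r.den * δ :=
  exists_forall_abs_sum_sub_den_mul_integral_le
    (f := fun x => Real.log ‖M.den.eval (circlePt t x)‖)
    (fun x => by simp only [circlePt_periodic t x]) (M.continuous_log_norm_den ht) hδ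

section Trace

variable {M} (r : ℚ) {t δ : ℝ}

lemma exp_le_norm_prod_den (ht : |t| ≤ M.width) {x : ℝ} (hδ : |∑ j ∈ Finset.range r.den,
      Real.log ‖M.den.eval (circlePt t (x + j * r))‖ - r.den * logAvg M.den t| ≤ r.den * δ) :
    Real.exp (r.den * (logAvg M.den t - δ)) ≤
      ‖∏ j ∈ Finset.range r.den, M.den.eval (circlePt t (x + j * r))‖ := by
  have hne : ∀ j ∈ Finset.range r.den, ‖M.den.eval (circlePt t (x + j * r))‖ ≠ 0 :=
    fun j _ => norm_ne_zero_iff.mpr (M.eval_den_circlePt_ne_zero ht _)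
  have hpos := Finset.prod_pos fun j hj => (norm_nonneg _).lt_of_ne' (hne j hj)
  rw [norm_prod, ← Real.le_log_iff_exp_le hpos, Real.log_prod hne]
  linarith [(abs_le.mp hδ).1]

variable {S : ℝ} (hδ₀ : ∀ x, |∑ j ∈ Finset.range r.den,
    Real.log ‖M.den.eval (circlePt 0 (x + j * r))‖ - r.den * logAvg M.den 0| ≤ r.den * δ)
  (hS : ∀ x, Real.log ‖cocycleIter (M.cocycle 0) r r.den x‖ ≤ S)

include hδ₀ hS

lemma norm_coeff_den_trace_iterPoly_le : ‖(iterPoly M.num r r.den).trace.coeff r.den‖ ≤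
    2 * Real.exp (r.den * (logAvg M.den 0 + δ) + S) := by
  refine norm_coeff_le_of_comp_C_mul_X_eq_self (isPrimitiveRoot_circlePt r) r.pos
    (trace_iterPoly_comp M.num r) (natDegree_trace_iterPoly_le _ M.natDegree_num_le r) fun x => ?_
  rw [eval_trace]
  refine (norm_trace_le _).trans ?_
  gcongr
  rw [← Real.log_le_iff_le_exp
    (norm_pos_iff.mpr (M.evalMat_iterPoly_num_ne_zero r r.den M.abs_zero_le_width x)),
    M.log_norm_evalMat_iterPoly_num r r.den M.abs_zero_le_width]
  linarith [(abs_le.mp (hδ₀ x)).2, hS x]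

lemma IsBalanced.norm_eval_trace_iterPoly_le (hM : M.IsBalanced) (x : ℝ) :
    ‖(iterPoly M.num r r.den).trace.eval (circlePt t x)‖ ≤
      6 * Real.exp (r.den * (logAvg M.den 0 + t + δ) + max S (r.den * |t|)) := by
  have hδ : 0 ≤ r.den * δ := (abs_nonneg _).trans (hδ₀ 0)
  have ht₁ : -(r.den * t) ≤ r.den * |t| := by
    rw [← mul_neg]
    exact mul_le_mul_of_nonneg_left (neg_le_abs t) r.den.cast_nonneg
  have ht₂ : r.den * t ≤ r.den * |t| :=
    mul_le_mul_of_nonneg_left (le_abs_self t) r.den.cast_nonneg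
  have hmax₁ := le_max_left S (r.den * |t|)
  have hmax₂ := le_max_right S (r.den * |t|)
  set p := (iterPoly M.num r r.den).trace
  set B := Real.exp (r.den * (logAvg M.den 0 + t + δ) + max S (r.den * |t|))
  have hB {u : ℝ} (hu : u ≤ r.den * (logAvg M.den 0 + t + δ) + max S (r.den * |t|)) :
      2 * Real.exp u ≤ 2 * B :=
    mul_le_mul_of_nonneg_left (Real.exp_le_exp.mpr hu) zero_le_two
  have hzero : ‖p.coeff 0‖ ≤ 2 * B := by
    rw [coeff_zero_trace_iterPoly]
    exact (hM.norm_trace_pow_eval_zero_le _).trans (hB (by linarith))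
  have hmid : ‖p.coeff r.den * circlePt t x ^ r.den‖ ≤ 2 * B := by
    rw [norm_mul, norm_pow, norm_circlePt, ← Real.exp_nat_mul]
    refine (mul_le_mul_of_nonneg_right (norm_coeff_den_trace_iterPoly_le r hδ₀ hS)
      (Real.exp_pos _).le).trans ?_
    rw [mul_assoc, ← Real.exp_add]
    exact hB (by linarith)
  have htop : ‖p.coeff (2 * r.den) * (circlePt t x ^ r.den) ^ 2‖ ≤ 2 * B := by
    rw [norm_mul, norm_pow, norm_pow, norm_circlePt, ← Real.exp_nat_mul, ← Real.exp_nat_mul,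
      norm_coeff_trace_iterPoly _ M.natDegree_num_le]
    refine (mul_le_mul_of_nonneg_right (hM.norm_trace_pow_coeff_two_le _)
      (Real.exp_pos _).le).trans ?_
    rw [mul_assoc, ← Real.exp_add]
    exact hB (by push_cast; linarith)
  rw [eval_eq_of_comp_C_mul_X_eq_self (isPrimitiveRoot_circlePt r) r.pos
    (trace_iterPoly_comp M.num r) (natDegree_trace_iterPoly_le _ M.natDegree_num_le r)]
  linarith [norm_add₃_le (a := p.coeff 0) (b := p.coeff r.den * circlePt t x ^ r.den)
    (c := p.coeff (2 * r.den) * (circlePt t x ^ r.den) ^ 2)]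

lemma IsBalanced.norm_trace_iter_le (hM : M.IsBalanced) (ht : |t| ≤ M.width) {x : ℝ}
    (hδ : |∑ j ∈ Finset.range r.den, Real.log ‖M.den.eval (circlePt t (x + j * r))‖ -
      r.den * logAvg M.den t| ≤ r.den * δ) :
    ‖(cocycleIter (M.cocycle t) r r.den x).trace‖ ≤
      6 * Real.exp (2 * (r.den * δ) + max S (r.den * |t|)) := by
  set P := Real.exp (r.den * (logAvg M.den t - δ))
  have heval := hM.norm_eval_trace_iterPoly_le r (t := t) hδ₀ hS x
  rw [eval_trace, M.evalMat_iterPoly_num r r.den ht, Matrix.trace_smul, norm_smul] at heval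
  refine le_of_mul_le_mul_left ?_ (Real.exp_pos (r.den * (logAvg M.den t - δ)))
  calc P * ‖(cocycleIter (M.cocycle t) r r.den x).trace‖
      ≤ 6 * Real.exp (r.den * (logAvg M.den 0 + t + δ) + max S (r.den * |t|)) := by
        refine le_trans ?_ heval
        gcongr
        exact exp_le_norm_prod_den r ht hδ
    _ = P * (6 * Real.exp (2 * (r.den * δ) + max S (r.den * |t|))) := by
        rw [mul_left_comm, ← Real.exp_add, hM.logAvg_den_eq t ht]
        ring_nf

end Trace

/-- Comparing traces along rational approximations of the frequency: the lower bound on the trace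
comes from the uniform growth of the cocycle, the upper bound from its three coefficients. -/
theorem IsBalanced.exponent_le_max_add {M : RationalCocycle} (hM : M.IsBalanced)
    (hb : Irrational b) {t δ : ℝ} (ht : |t| ≤ M.width) (hδ : 0 < δ)
    (hlow : ∃ᶠ n : ℕ in Filter.atTop, ∀ x, (2 * n : ℕ) * (M.exponent b t - δ) ≤
      Real.log ‖cocycleIter (M.cocycle t) b (2 * n) x‖) :
    M.exponent b t ≤ max (M.exponent b 0) |t| + 10 * δ := by
  by_contra! hlt
  have h₀ := M.abs_zero_le_width
  have hmax : 0 ≤ max (M.exponent b 0) |t| := (abs_nonneg t).trans (le_max_right _ _)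
  obtain ⟨K, hK⟩ := (M.isSL2Cocycle h₀).eventually_log_norm_iter_le_add hb
    (lt_add_of_pos_right (M.exponent b 0) hδ)
  obtain ⟨D₀, hD₀⟩ := M.exists_forall_abs_sum_log_norm_den_sub_le h₀ hδ
  obtain ⟨D₁, hD₁⟩ := M.exists_forall_abs_sum_log_norm_den_sub_le ht hδ
  obtain ⟨D₂, hD₂⟩ := Filter.eventually_atTop.mp
    ((eventually_le_exp_natCast_mul hδ 7).and
      ((tendsto_natCast_atTop_atTop.atTop_mul_const hδ).eventually_ge_atTop K))
  have hneBot := Rat.isDenseEmbedding_coe_real.isDenseInducing.comap_nhds_neBot b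
  have htrace : ∀ᶠ r : ℚ in Filter.comap (↑) (nhds b), ∀ x,
      Real.exp (r.den * (M.exponent b t - 5 * δ)) ≤
        ‖(cocycleIter (M.cocycle t) r r.den x).trace‖ + 1 :=
    (M.isSL2Cocycle ht).eventually_exp_le_norm_trace_iter_add_one hb hδ hlow
      (show 5 * δ < M.exponent b t by linarith)
  obtain ⟨r, hlower, hKr, hden⟩ := (htrace.and
    ((Filter.tendsto_comap.eventually hK).and (eventually_lt_den hb (D₀ + D₁ + D₂)))).exists
  obtain ⟨hseven, hKδ⟩ := hD₂ r.den (by omega)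
  have hq : (0 : ℝ) < r.den := by exact_mod_cast r.pos
  have hupper := hM.norm_trace_iter_le r (hD₀ r (by omega)) (hKr r.den) ht (hD₁ r (by omega) 0)
  have hmaxS : max (r.den * (M.exponent b 0 + δ) + K) (r.den * |t|) ≤
      r.den * (max (M.exponent b 0) |t| + 2 * δ) := by
    refine max_le ?_ (by gcongr; linarith [le_max_right (M.exponent b 0) |t|])
    linarith [mul_le_mul_of_nonneg_left (le_max_left (M.exponent b 0) |t|) hq.le]
  have hnonneg : 0 ≤ 2 * (r.den * δ) +
      max (r.den * (M.exponent b 0 + δ) + K) (r.den * |t|) :=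
    add_nonneg (by positivity) (le_max_of_le_right (by positivity))
  have hexp : r.den * (M.exponent b t - 5 * δ) ≤ _ :=
    le_add_of_exp_le_six_mul_exp_add_one
      ((hlower 0).trans (add_le_add_left hupper 1)) hnonneg hseven
  exact hlt.not_ge (le_of_mul_le_mul_left (by linarith) hq)

end RationalCocycle

/-! ### Uniform domination -/

lemma exists_differentiableAt_of_convexOn {s U : Set ℝ} {f : ℝ → ℝ} (hf : ConvexOn ℝ s f)
    (hU : IsOpen U) (hUs : U ⊆ s) (hne : U.Nonempty) : ∃ t ∈ U, DifferentiableAt ℝ f t := by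
  obtain ⟨u, hu⟩ := hne
  have hUint := interior_maximal hUs hU
  obtain ⟨C, V, hV, hlip⟩ := hf.locallyLipschitzOn_interior (hUint hu)
  rw [nhdsWithin_eq_nhds.mpr (isOpen_interior.mem_nhds (hUint hu))] at hV
  obtain ⟨W, hWV, hW, huW⟩ := mem_nhds_iff.mp (Filter.inter_mem hV (hU.mem_nhds hu))
  have hpos : volume W ≠ 0 := (hW.measure_pos volume ⟨u, huW⟩).ne'
  obtain ⟨t, htW, ht⟩ := Measure.exists_mem_of_measure_ne_zero_of_ae hpos
    (ae_restrict_of_ae (hlip.mono fun x hx => (hWV hx).1).ae_differentiableWithinAt_of_mem_real)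
  exact ⟨t, (hWV htW).2, (ht htW).differentiableAt (hW.mem_nhds htW)⟩

lemma eventually_second_difference_le {f : ℝ → ℝ} {t τ : ℝ} (hf : DifferentiableAt ℝ f t)
    (hτ : 0 < τ) : ∀ᶠ h in nhds (0 : ℝ), f (t + h) + f (t - h) - 2 * f t ≤ τ * |h| := by
  have hadd : HasDerivAt (fun h => f (t + h)) (deriv f t) 0 :=
    HasDerivAt.comp_const_add t 0 (by simpa using hf.hasDerivAt)
  have hsub : HasDerivAt (fun h => f (t - h)) (-deriv f t) 0 :=
    HasDerivAt.comp_const_sub t 0 (by simpa using hf.hasDerivAt)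
  have hsecond := (hadd.add hsub).isLittleO.bound hτ
  filter_upwards [hsecond] with h hh
  simp only [Pi.add_apply, add_zero, sub_zero, add_neg_cancel, smul_zero, Real.norm_eq_abs] at hh
  linarith [le_abs_self (f (t + h) + f (t - h) - (f t + f t))]

/-- A lower bound valid at every phase, combined with the upper bound that unique ergodicity
gives, separates the scales `n` and `2 * n` uniformly. -/
lemma IsSL2Cocycle.exists_forall_mul_norm_iter_le {A : ℝ → Mat} (hA : IsSL2Cocycle A) {a δ : ℝ}
    (ha : Irrational a) (hδ : 0 < δ) (hδA : 3 * δ < lyapExp A a)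
    (hlow : ∃ᶠ n : ℕ in Filter.atTop, ∀ x, (2 * n : ℕ) * (lyapExp A a - δ) ≤
      Real.log ‖cocycleIter A a (2 * n) x‖) (C : ℝ) :
    ∃ n > 0, ∀ x y, C * ‖cocycleIter A a n x‖ ≤ ‖cocycleIter A a (2 * n) y‖ := by
  obtain ⟨n, hlow, hup, hC, hn⟩ := (hlow.and_eventually
    ((hA.eventually_log_norm_iter_le ha (lt_add_of_pos_right (lyapExp A a) hδ)).and
      ((eventually_le_exp_natCast_mul (sub_pos.mpr hδA) C).and
        (Filter.eventually_gt_atTop 0)))).exists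
  refine ⟨n, hn, fun x y => ?_⟩
  calc C * ‖cocycleIter A a n x‖
      ≤ Real.exp (n * (lyapExp A a - 3 * δ)) * Real.exp (n * (lyapExp A a + δ)) :=
        mul_le_mul hC ((Real.log_le_iff_le_exp (hA.norm_iter_pos a n x)).mp (hup x))
          (norm_nonneg _) (Real.exp_pos _).le
    _ = Real.exp ((2 * n : ℕ) * (lyapExp A a - δ)) := by
        rw [← Real.exp_add]
        push_cast
        ring_nf
    _ ≤ ‖cocycleIter A a (2 * n) y‖ :=
        (Real.le_log_iff_exp_le (hA.norm_iter_pos a (2 * n) y)).mp (hlow y)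

namespace RationalCocycle

variable {M : RationalCocycle} {b : ℝ}

lemma frequently_mul_exponent_sub_le (hb : Irrational b) {t δ : ℝ} (ht : |t| < M.width)
    (hdiff : DifferentiableAt ℝ (M.exponent b) t) (hδ : 0 < δ) :
    ∃ᶠ n : ℕ in Filter.atTop, ∀ x, (2 * n : ℕ) * (M.exponent b t - δ) ≤
      Real.log ‖cocycleIter (M.cocycle t) b (2 * n) x‖ := by
  obtain ⟨τ, hτ, hlow⟩ := M.exists_frequently_mul_exponent_sub_le hb hδ
  obtain ⟨h, ⟨hdiff, hht⟩, hh⟩ := (((eventually_second_difference_le hdiff hτ).and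
    (Metric.ball_mem_nhds 0 (sub_pos.mpr ht))).filter_mono nhdsWithin_le_nhds |>.and
      (self_mem_nhdsWithin : Set.Ioi (0 : ℝ) ∈ nhdsWithin 0 (Set.Ioi 0))).exists
  replace hh : 0 < h := hh
  rw [Real.dist_0_eq_abs] at hht
  rw [abs_of_pos hh] at hdiff
  exact hlow t h hh ht.le ((abs_add_le t h).trans (by linarith))
    ((abs_sub t h).trans (by linarith)) hdiff

lemma IsBalanced.exponent_le_max (hM : M.IsBalanced) (hb : Irrational b) {t : ℝ}
    (ht : |t| < M.width) (hdiff : DifferentiableAt ℝ (M.exponent b) t) :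
    M.exponent b t ≤ max (M.exponent b 0) |t| := by
  refine le_of_forall_pos_le_add fun ε hε => ?_
  have hle := hM.exponent_le_max_add hb ht.le (by positivity : 0 < ε / 10)
    (frequently_mul_exponent_sub_le hb ht hdiff (by positivity))
  linarith

/-- Positivity of the exponent and convexity leave room for `exponent_le_max` on both sides of the
unit circle, so that the exponent cannot have a corner there. -/
theorem IsBalanced.exists_exponent_le (hM : M.IsBalanced) (hb : Irrational b)
    (hpos : 0 < M.exponent b 0) :
    ∃ h > 0, h ≤ M.width ∧ M.exponent b h ≤ M.exponent b 0 ∧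
      M.exponent b (-h) ≤ M.exponent b 0 := by
  have hconv := M.convexOn_exponent hb
  set w := min M.width (M.exponent b 0)
  have hw : 0 < w := lt_min M.width_pos hpos
  have hwidth : w ≤ M.width := min_le_left _ _
  have hexists {u v : ℝ} (huv : u < v) (hu : -w ≤ u) (hv : v ≤ w) :
      ∃ t ∈ Set.Ioo u v, M.exponent b t ≤ M.exponent b 0 := by
    obtain ⟨t, ht, hdiff⟩ := exists_differentiableAt_of_convexOn hconv isOpen_Ioo
      (fun s (hs : s ∈ Set.Ioo u v) => ⟨by linarith [hs.1], by linarith [hs.2]⟩)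
      (Set.nonempty_Ioo.mpr huv)
    have htw : |t| < w := abs_lt.mpr ⟨by linarith [ht.1], by linarith [ht.2]⟩
    exact ⟨t, ht, (hM.exponent_le_max hb (htw.trans_le hwidth) hdiff).trans
      (max_le le_rfl (htw.le.trans (min_le_right _ _)))⟩
  obtain ⟨t, ht, hright⟩ := hexists hw (by linarith) le_rfl
  obtain ⟨t', ht', hleft⟩ := hexists (neg_lt_zero.mpr hw) le_rfl hw.le
  have hle {s : ℝ} (hs : s ∈ Set.Icc t' t) : M.exponent b s ≤ M.exponent b 0 :=
    (hconv.le_max_of_mem_Icc ⟨by linarith [ht'.1], by linarith [ht'.2]⟩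
      ⟨by linarith [ht.1], by linarith [ht.2]⟩ hs).trans (max_le hleft hright)
  have hh : 0 < min t (-t') := lt_min ht.1 (neg_pos.mpr ht'.2)
  refine ⟨min t (-t'), hh, ?_, hle ⟨?_, min_le_left _ _⟩, hle ⟨?_, ?_⟩⟩
  · linarith [min_le_left t (-t'), ht.2]
  · linarith [ht'.2]
  · linarith [min_le_right t (-t')]
  · linarith [ht.1]

theorem IsBalanced.exists_forall_mul_norm_iter_le (hM : M.IsBalanced) (hb : Irrational b)
    (hpos : 0 < M.exponent b 0) (C : ℝ) :
    ∃ n > 0, ∀ x y, C * ‖cocycleIter (M.cocycle 0) b n x‖ ≤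
      ‖cocycleIter (M.cocycle 0) b (2 * n) y‖ := by
  obtain ⟨h, hh, hhw, hright, hleft⟩ := hM.exists_exponent_le hb hpos
  have hδ : 0 < M.exponent b 0 / 4 := by positivity
  obtain ⟨τ, hτ, hlow⟩ := M.exists_frequently_mul_exponent_sub_le hb hδ
  have hsecond : M.exponent b (0 + h) + M.exponent b (0 - h) - 2 * M.exponent b 0 ≤ τ * h := by
    rw [zero_add, zero_sub]
    linarith [mul_pos hτ hh]
  have hhw' : |h| ≤ M.width := by rwa [abs_of_pos hh]
  exact (M.isSL2Cocycle M.abs_zero_le_width).exists_forall_mul_norm_iter_le hb hδ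
    (by rw [← exponent]; linarith)
    (hlow 0 h hh M.abs_zero_le_width (by rwa [zero_add]) (by rwa [zero_sub, abs_neg]) hsecond) C

end RationalCocycle

/-! ### The spectrum of discrete Schrödinger operators -/

lemma norm_act_orderedProd_sub_le {C : ℝ} (hC : 1 ≤ C) {F : ℕ → Mat} (hF : ∀ j, ‖F j‖ ≤ C)
    {w : ℕ → Vec} {ε : ℕ → ℝ} (hw : ∀ j, ‖act (F j) (w j) - w (j + 1)‖ ≤ ε j) (n : ℕ) :
    ‖act (orderedProd F n) (w 0) - w n‖ ≤ C ^ n * ∑ j ∈ Finset.range n, ε j := by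
  induction n with
  | zero => simp [orderedProd]
  | succ n ih =>
    have hε : 0 ≤ ε n := (norm_nonneg _).trans (hw n)
    have hsplit : act (orderedProd F (n + 1)) (w 0) - w (n + 1) =
        act (F n) (act (orderedProd F n) (w 0) - w n) + (act (F n) (w n) - w (n + 1)) := by
      rw [orderedProd, act_mul, map_sub]
      abel
    calc ‖act (orderedProd F (n + 1)) (w 0) - w (n + 1)‖
        ≤ C * (C ^ n * ∑ j ∈ Finset.range n, ε j) + 1 * ε n := by
          rw [hsplit, one_mul]
          refine (norm_add_le _ _).trans (add_le_add ((norm_act_le _ _).trans ?_) (hw n))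
          exact mul_le_mul (hF n) ih (norm_nonneg _) (zero_le_one.trans hC)
      _ ≤ C * (C ^ n * ∑ j ∈ Finset.range n, ε j) + C ^ (n + 1) * ε n := by
          gcongr
          exact one_le_pow₀ hC
      _ = C ^ (n + 1) * ∑ j ∈ Finset.range (n + 1), ε j := by
          rw [Finset.sum_range_succ]
          ring

/-- Exponential growth forces convexity of the norm along exact orbits, hence approximate convexity
along pseudo-orbits. -/
lemma mul_norm_le_add_of_domination {C κ : ℝ} (hC : 1 ≤ C) (hκ : 0 < κ) {F : ℕ → Mat}
    (hF : ∀ j, ‖F j‖ ≤ C) (hdet : ∀ j, (F j).det = 1) {w : ℕ → Vec} {ε : ℕ → ℝ}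
    (hw : ∀ j, ‖act (F j) (w j) - w (j + 1)‖ ≤ ε j) {n : ℕ}
    (hfst : κ * ‖orderedProd F n‖ ≤ ‖orderedProd F (2 * n)‖)
    (hsnd : κ * ‖orderedProd (fun j => F (j + n)) n‖ ≤ ‖orderedProd F (2 * n)‖) :
    κ * ‖w n‖ ≤ ‖w (2 * n)‖ + ‖w 0‖ +
      (κ + 1) * (C ^ (2 * n) * ∑ j ∈ Finset.range (2 * n), ε j) := by
  have hε (j : ℕ) : 0 ≤ ε j := (norm_nonneg _).trans (hw j)
  have hprod : orderedProd F (2 * n) = orderedProd (fun j => F (j + n)) n * orderedProd F n := by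
    rw [two_mul, orderedProd_add]
  have hmid : ‖act (orderedProd F n) (w 0) - w n‖ ≤
      C ^ (2 * n) * ∑ j ∈ Finset.range (2 * n), ε j := by
    refine (norm_act_orderedProd_sub_le hC hF hw n).trans ?_
    have hle : n ≤ 2 * n := by omega
    gcongr
    · exact Finset.sum_nonneg fun j _ => hε j
    · exact fun j _ _ => hε j
  have hend := norm_act_orderedProd_sub_le hC hF hw (2 * n)
  have hpos : 0 < ‖orderedProd F (2 * n)‖ :=
    one_pos.trans_le (one_le_norm_of_det_eq_one (det_orderedProd_eq_one hdet _))
  have hconvex : κ * ‖act (orderedProd F n) (w 0)‖ ≤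
      ‖act (orderedProd F (2 * n)) (w 0)‖ + ‖w 0‖ := by
    have h := two_mul_norm_act_le (div_pos hpos hκ) ((le_div_iff₀' hκ).mpr hsnd)
      ((le_div_iff₀' hκ).mpr hfst) (κ := κ / 2) (det_orderedProd_eq_one hdet n)
      (by rw [← hprod]; exact (by field_simp : _ = _).le) (w 0)
    rwa [mul_div_cancel₀ κ two_ne_zero, ← act_mul, ← hprod] at h
  have hn := norm_le_insert (act (orderedProd F n) (w 0)) (w n)
  have h2n := norm_le_insert' (act (orderedProd F (2 * n)) (w 0)) (w (2 * n))
  have hκn := mul_le_mul_of_nonneg_left (hn.trans (add_le_add_right hmid _)) hκ.le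
  linarith

/-- `H u n = u (n + 1) + u (n - 1) + v n * u n` on `ℓ²(ℤ)`, for an arbitrary real potential. -/
def IsDiscreteSchrodingerOp (v : ℤ → ℝ)
    (H : lp (fun _ : ℤ => ℂ) 2 →L[ℂ] lp (fun _ : ℤ => ℂ) 2) : Prop :=
  ∀ u n, H u n = u (n + 1) + u (n - 1) + v n * u n

/-- The one-step transfer matrix of `u (n + 1) + u (n - 1) = z * u n`. -/
def schrodingerMat (z : ℂ) : Mat :=
  !![z, -1; 1, 0]

lemma det_schrodingerMat (z : ℂ) : (schrodingerMat z).det = 1 := by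
  simp [schrodingerMat, Matrix.det_fin_two]

/-- The vectors `(u m, u (m - 1))` propagated by the transfer matrices. -/
noncomputable def transferVec (u : ℤ → ℂ) (m : ℤ) : Vec :=
  !₂[u m, u (m - 1)]

lemma norm_sq_transferVec (u : ℤ → ℂ) (m : ℤ) :
    ‖transferVec u m‖ ^ 2 = ‖u m‖ ^ 2 + ‖u (m - 1)‖ ^ 2 :=
  norm_sq_eq_add _

lemma norm_act_schrodingerMat_transferVec_sub (z : ℂ) (u : ℤ → ℂ) (m : ℤ) :
    ‖act (schrodingerMat z) (transferVec u m) - transferVec u (m + 1)‖ =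
      ‖u (m + 1) + u (m - 1) - z * u m‖ := by
  have hvec : act (schrodingerMat z) (transferVec u m) - transferVec u (m + 1) =
      !₂[z * u m - u (m - 1) - u (m + 1), 0] := by
    ext i
    fin_cases i
    · simp [schrodingerMat, transferVec, sub_eq_add_neg, mul_comm]
    · simp [schrodingerMat, transferVec]
  rw [hvec, ← norm_neg (_ - z * u m), ← sq_eq_sq₀ (norm_nonneg _) (norm_nonneg _), norm_sq_eq_add]
  simp only [Matrix.cons_val_zero, Matrix.cons_val_one, norm_zero]
  ring_nf

lemma norm_sq_transferVec_le_of_domination {C : ℝ} (hC : 1 ≤ C) {z : ℤ → ℂ}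
    (hz : ∀ m, ‖schrodingerMat (z m)‖ ≤ C) {n : ℕ}
    (hn : ∀ m m' : ℤ, 8 * ‖orderedProd (fun j => schrodingerMat (z (m + j))) n‖ ≤
      ‖orderedProd (fun j => schrodingerMat (z (m' + j))) (2 * n)‖) (u : ℤ → ℂ) (m : ℤ) :
    64 * ‖transferVec u (m + n)‖ ^ 2 ≤
      3 * (‖transferVec u (m + (2 * n : ℕ))‖ ^ 2 + ‖transferVec u m‖ ^ 2) +
        243 * (C ^ (2 * n)) ^ 2 * (2 * n : ℕ) * ∑ j ∈ Finset.range (2 * n),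
          ‖u (m + j + 1) + u (m + j - 1) - z (m + j) * u (m + j)‖ ^ 2 := by
  set ε : ℕ → ℝ := fun j => ‖u (m + j + 1) + u (m + j - 1) - z (m + j) * u (m + j)‖
  have hw (j : ℕ) : ‖act (schrodingerMat (z (m + j))) (transferVec u (m + j)) -
      transferVec u (m + (j + 1 : ℕ))‖ ≤ ε j := by
    rw [Nat.cast_add_one, ← add_assoc, norm_act_schrodingerMat_transferVec_sub]
  have hle := mul_norm_le_add_of_domination hC (by norm_num) (fun j => hz (m + j))
    (fun j => det_schrodingerMat _) (w := fun j => transferVec u (m + j)) hw (hn m m)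
    (by simpa only [Nat.cast_add, add_assoc, add_comm (n : ℤ)] using hn (m + n) m)
  simp only [Nat.cast_zero, add_zero] at hle
  have hcs := mul_le_mul_of_nonneg_left
    (sq_sum_le_card_mul_sum_sq (s := Finset.range (2 * n)) (f := ε))
    (by positivity : 0 ≤ 243 * (C ^ (2 * n)) ^ 2)
  rw [Finset.card_range] at hcs
  have hsq := pow_le_pow_left₀ (by positivity) hle 2
  generalize ∑ j ∈ Finset.range (2 * n), ε j = S at *
  nlinarith [sq_nonneg (‖transferVec u (m + (2 * n : ℕ))‖ - ‖transferVec u m‖),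
    sq_nonneg (‖transferVec u (m + (2 * n : ℕ))‖ - 9 * (C ^ (2 * n) * S)),
    sq_nonneg (‖transferVec u m‖ - 9 * (C ^ (2 * n) * S))]

lemma hasSum_comp_add_right {α : Type*} [AddCommMonoid α] [TopologicalSpace α] {g : ℤ → α} {s : α}
    (h : HasSum g s) (k : ℤ) : HasSum (fun m => g (m + k)) s :=
  (Equiv.addRight k).hasSum_iff.mpr h

lemma hasSum_norm_sq (u : lp (fun _ : ℤ => ℂ) 2) : HasSum (fun n => ‖u n‖ ^ 2) (‖u‖ ^ 2) := by
  simpa using lp.hasSum_norm (p := 2) (by norm_num) u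

lemma summable_inner_add_right (u w : lp (fun _ : ℤ => ℂ) 2) (k : ℤ) :
    Summable fun n : ℤ => inner ℂ (u n) (w (n + k)) := by
  refine .of_norm_bounded (g := fun n : ℤ => ‖u n‖ ^ 2 + ‖w (n + k)‖ ^ 2)
    ((hasSum_norm_sq u).add (hasSum_comp_add_right (hasSum_norm_sq w) k)).summable fun n => ?_
  refine (norm_inner_le_norm _ _).trans ?_
  nlinarith [sq_nonneg (‖u n‖ - ‖w (n + k)‖), sq_nonneg ‖u n‖, sq_nonneg ‖w (n + k)‖]

lemma sq_mul_sq_le_of_mul_le_add {η x p q z : ℝ} (hη : 0 < η) (hx : 0 ≤ x)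
    (h : (2 + η) * x ≤ p + q + z) :
    (2 + η) ^ 2 * x ^ 2 ≤ (2 + η) * (p ^ 2 + q ^ 2) + (1 + 2 / η) * z ^ 2 := by
  have hsq := pow_le_pow_left₀ (by positivity : 0 ≤ (2 + η) * x) h 2
  have hcross : 2 / η * (η / 2 * (p + q) - z) ^ 2 =
      η / 2 * (p + q) ^ 2 - 2 * (p + q) * z + 2 / η * z ^ 2 := by
    field_simp
    ring
  have hcross₀ : 0 ≤ 2 / η * (η / 2 * (p + q) - z) ^ 2 := by positivity
  have hpq : 0 ≤ (1 + η / 2) * (p - q) ^ 2 := by positivity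
  linarith

namespace IsDiscreteSchrodingerOp

variable {v : ℤ → ℝ} {H : lp (fun _ : ℤ => ℂ) 2 →L[ℂ] lp (fun _ : ℤ => ℂ) 2}

-- The difference of the two sides is the telescoping sum of a summable Wronskian.
lemma inner_apply_left (hH : IsDiscreteSchrodingerOp v H) (u w : lp (fun _ : ℤ => ℂ) 2) :
    inner ℂ (H u) w = inner ℂ u (H w) := by
  have hsum : Summable fun n : ℤ => inner ℂ (u (n + 1)) (w n) - inner ℂ (u n) (w (n + 1)) := by
    refine .sub ?_ (summable_inner_add_right u w 1)
    simpa using (hasSum_comp_add_right (summable_inner_add_right u w (-1)).hasSum 1).summable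
  have htel := (hasSum_comp_add_right hsum.hasSum (-1)).sub hsum.hasSum
  have hdiff := (lp.hasSum_inner (𝕜 := ℂ) u (H w)).sub (lp.hasSum_inner (𝕜 := ℂ) (H u) w)
  rw [sub_self] at htel
  refine (sub_eq_zero.mp (hdiff.unique (htel.congr_fun fun n => ?_))).symm
  simp only [hH _ n, RCLike.inner_apply, map_add, map_mul, Complex.conj_ofReal,
    ← sub_eq_add_neg]
  ring_nf

lemma apply_sub_smul (hH : IsDiscreteSchrodingerOp v H) (u : lp (fun _ : ℤ => ℂ) 2) (E : ℝ)
    (n : ℤ) : (H u - (E : ℂ) • u) n = u (n + 1) + u (n - 1) - (E - v n) * u n := by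
  rw [lp.coeFn_sub, Pi.sub_apply, hH u n, lp.coeFn_smul, Pi.smul_apply, smul_eq_mul]
  ring

lemma notMem_spectrum_of_norm_sq_le (hH : IsDiscreteSchrodingerOp v H) {E K : ℝ} (hK : 0 < K)
    (h : ∀ u, ‖u‖ ^ 2 ≤ K * ‖H u - (E : ℂ) • u‖ ^ 2) : (E : ℂ) ∉ spectrum ℂ H := by
  rw [spectrum.notMem_iff, IsUnit.sub_iff]
  set S := H - algebraMap ℂ _ (E : ℂ)
  have hS (u) : S u = H u - (E : ℂ) • u := by
    rw [sub_apply, Algebra.algebraMap_eq_smul_one]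
    rfl
  have hsymm (u w) : inner ℂ (S u) w = inner ℂ u (S w) := by
    rw [hS, hS, inner_sub_left, inner_sub_right, hH.inner_apply_left, inner_smul_left,
      inner_smul_right, Complex.conj_ofReal]
  rw [← isUnit_pow_iff two_ne_zero]
  refine ContinuousLinearMap.isUnit_of_forall_le_norm_inner_map _ (c := K⁻¹.toNNReal)
    (Real.toNNReal_pos.mpr (inv_pos.mpr hK)) fun u => ?_
  calc ‖u‖ ^ 2 * K⁻¹.toNNReal ≤ ‖S u‖ ^ 2 := by
        rw [Real.coe_toNNReal _ (inv_pos.mpr hK).le, ← div_eq_mul_inv, div_le_iff₀' hK, hS]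
        exact h u
    _ = ‖inner ℂ ((S ^ 2) u) u‖ := by
        rw [pow_two S, mul_apply_eq_comp, hsymm, inner_self_eq_norm_sq_to_K, norm_pow,
          RCLike.norm_ofReal, abs_norm]

/-- Domination makes the transfer vectors of `u` convex up to the size of `(H - E) u`, which bounds
`H - E` from below. -/
theorem notMem_spectrum_of_domination (hH : IsDiscreteSchrodingerOp v H) {E C : ℝ} (hC : 1 ≤ C)
    (hF : ∀ m, ‖schrodingerMat (E - v m)‖ ≤ C) {n : ℕ}
    (hn : ∀ m m' : ℤ, 8 * ‖orderedProd (fun j => schrodingerMat (E - v (m + j))) n‖ ≤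
      ‖orderedProd (fun j => schrodingerMat (E - v (m' + j))) (2 * n)‖) :
    (E : ℂ) ∉ spectrum ℂ H := by
  set Q := 243 * (C ^ (2 * n)) ^ 2 * (2 * n : ℕ)
  refine hH.notMem_spectrum_of_norm_sq_le (K := Q * (2 * n : ℕ) + 1) (by positivity) fun u => ?_
  have hle (m : ℤ) := norm_sq_transferVec_le_of_domination hC hF hn u m
  simp only [← hH.apply_sub_smul] at hle
  have hsumw : HasSum (fun m => ‖transferVec u m‖ ^ 2) (‖u‖ ^ 2 + ‖u‖ ^ 2) := by
    simp_rw [norm_sq_transferVec]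
    exact (hasSum_norm_sq u).add (hasSum_comp_add_right (hasSum_norm_sq u) (-1))
  have hsumf := hasSum_sum (s := Finset.range (2 * n))
    fun j _ => hasSum_comp_add_right (hasSum_norm_sq (H u - (E : ℂ) • u)) j
  rw [Finset.sum_const, Finset.card_range, nsmul_eq_mul] at hsumf
  have htotal := hasSum_le hle ((hasSum_comp_add_right hsumw n).mul_left 64)
    ((((hasSum_comp_add_right hsumw (2 * n : ℕ)).add hsumw).mul_left 3).add (hsumf.mul_left Q))
  rw [← mul_assoc] at htotal
  linarith [sq_nonneg ‖u‖, sq_nonneg ‖H u - (E : ℂ) • u‖]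

theorem notMem_spectrum_of_two_lt_abs_sub (hH : IsDiscreteSchrodingerOp v H) {E η : ℝ} (hη : 0 < η)
    (hv : ∀ n, 2 + η ≤ |E - v n|) : (E : ℂ) ∉ spectrum ℂ H := by
  have hK : 0 < (1 + 2 / η) / (2 * η) := by positivity
  refine hH.notMem_spectrum_of_norm_sq_le hK fun u => ?_
  have hle (n : ℤ) : (2 + η) ^ 2 * ‖u n‖ ^ 2 ≤ (2 + η) * (‖u (n + 1)‖ ^ 2 + ‖u (n - 1)‖ ^ 2) +
      (1 + 2 / η) * ‖(H u - (E : ℂ) • u) n‖ ^ 2 := by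
    have hnorm : (2 + η) * ‖u n‖ ≤ ‖u (n + 1)‖ + ‖u (n - 1)‖ + ‖(H u - (E : ℂ) • u) n‖ := by
      calc (2 + η) * ‖u n‖ ≤ ‖(E - v n : ℂ) * u n‖ := by
            rw [norm_mul, ← Complex.ofReal_sub, Complex.norm_real]
            exact mul_le_mul_of_nonneg_right (hv n) (norm_nonneg _)
        _ = ‖u (n + 1) + u (n - 1) - (H u - (E : ℂ) • u) n‖ := by
            rw [hH.apply_sub_smul, sub_sub_cancel]
        _ ≤ _ := norm_sub_le_of_le (norm_add_le _ _) le_rfl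
    exact sq_mul_sq_le_of_mul_le_add hη (norm_nonneg _) hnorm
  have htotal := hasSum_le hle ((hasSum_norm_sq u).mul_left _)
    ((((hasSum_comp_add_right (hasSum_norm_sq u) 1).add
      (hasSum_comp_add_right (hasSum_norm_sq u) (-1))).mul_left (2 + η)).add
        ((hasSum_norm_sq (H u - (E : ℂ) • u)).mul_left (1 + 2 / η)))
  rw [div_mul_eq_mul_div, le_div_iff₀ (by positivity)]
  nlinarith [mul_nonneg (sq_nonneg η) (sq_nonneg ‖u‖)]

end IsDiscreteSchrodingerOp

/-! ### The quasi-periodic cosine model -/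

lemma RationalCocycle.exponent_pos_of_exp_le_norm_trace (M : RationalCocycle) {b s : ℝ}
    (hb : Irrational b) (hs : logAvg M.den 0 < s)
    (htr : ∀ n : ℕ, Real.exp (n * s) ≤ ‖(evalMat 0 M.num ^ n).trace‖) : 0 < M.exponent b 0 := by
  set v := (s - logAvg M.den 0) / 2 with hv
  by_contra! hle
  have hlt : lyapExp (M.cocycle 0) b < v := by
    rw [exponent] at hle
    linarith
  have hlog := (Filter.tendsto_id.atTop_mul_const (by linarith : 0 < v)).comp
    tendsto_natCast_atTop_atTop |>.eventually_gt_atTop (Real.log 4)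
  obtain ⟨n, hn, hn4⟩ := (((M.isSL2Cocycle M.abs_zero_le_width).eventually_meanLogNorm_le hb
    hlt).and hlog).exists
  have hcoeff := htr n
  rw [← coeff_zero_trace_iterPoly n M.num b] at hcoeff
  have hne := norm_pos_iff.mp ((Real.exp_pos _).trans_le hcoeff)
  have hjensen := log_norm_coeff_le hne
  have hg : (iterPoly M.num b n).trace ≠ 0 := fun h => hne (by rw [h, coeff_zero])
  have hlow := (Real.le_log_iff_exp_le (norm_pos_iff.mpr hne)).mpr hcoeff
  have hup := M.logAvg_le_of_norm_eval_le hg b n (fun z => by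
    rw [eval_trace]
    linarith [norm_trace_le (evalMat z (iterPoly M.num b n)),
      norm_nonneg (evalMat z (iterPoly M.num b n))]) M.abs_zero_le_width
  have h2v : n * s - n * logAvg M.den 0 = 2 * (n * v) := by
    rw [hv]
    ring
  simp only [Nat.choose_zero_right, Nat.cast_one, Real.log_one] at hjensen
  simp only [Function.comp_apply, id] at hn4
  linarith

/-- The geometric mean of `1 - α * cos (2πx)` over a period. -/
noncomputable def geomMean (α : ℝ) : ℝ :=
  (1 + √(1 - α ^ 2)) / 2

/-- The root of `z - α / 2 * (z ^ 2 + 1)` inside the unit disc. -/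
noncomputable def innerRoot (α : ℝ) : ℝ :=
  α / (2 * geomMean α)

lemma half_le_geomMean (α : ℝ) : 1 / 2 ≤ geomMean α := by
  rw [geomMean]
  linarith [Real.sqrt_nonneg (1 - α ^ 2)]

lemma geomMean_pos (α : ℝ) : 0 < geomMean α :=
  one_half_pos.trans_le (half_le_geomMean α)

lemma geomMean_mul_innerRoot (α : ℝ) : geomMean α * innerRoot α = α / 2 := by
  have hne := (geomMean_pos α).ne'
  rw [innerRoot]
  field_simp

lemma abs_innerRoot_lt_one {α : ℝ} (hα : |α| < 1) : |innerRoot α| < 1 := by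
  have hpos := geomMean_pos α
  rw [innerRoot, abs_div, abs_of_pos (by positivity : 0 < 2 * geomMean α),
    div_lt_one (by positivity)]
  linarith [half_le_geomMean α]

lemma geomMean_mul_one_sub {α : ℝ} (hα : |α| < 1) :
    geomMean α * (1 - geomMean α) = α ^ 2 / 4 := by
  have hsq := Real.sq_sqrt (sub_pos.mpr ((sq_lt_one_iff_abs_lt_one α).mpr hα)).le
  rw [geomMean]
  linarith

/-- The polynomial `z - α / 2 * (z ^ 2 + 1)`, which equals `z * (1 - α * cos (2πx))` at
`z = exp (2πix)`. -/
noncomputable def cosDen (α : ℝ) : ℂ[X] :=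
  X - C (α / 2 : ℂ) * (X ^ 2 + 1)

lemma cosDen_eq_mul {α : ℝ} (hα : |α| < 1) : cosDen α =
    C (geomMean α : ℂ) * (X - C (innerRoot α : ℂ)) * (C (-innerRoot α : ℂ) * X + C 1) := by
  have hroot : (geomMean α * innerRoot α : ℂ) = α / 2 := by
    exact_mod_cast geomMean_mul_innerRoot α
  have hsum : (geomMean α * (1 + innerRoot α ^ 2) : ℂ) = 1 := by
    have h := geomMean_mul_one_sub hα
    have h' : geomMean α * (geomMean α * (1 + innerRoot α ^ 2)) = geomMean α * 1 := by
      linear_combination (geomMean α * innerRoot α + α / 2) * geomMean_mul_innerRoot α - h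
    exact_mod_cast mul_left_cancel₀ (geomMean_pos α).ne' h'
  have hC := congrArg (C : ℂ → ℂ[X]) hroot
  have hC' := congrArg (C : ℂ → ℂ[X]) hsum
  simp only [map_mul, map_add, map_pow, map_one, map_neg] at hC hC' ⊢
  rw [cosDen, ← hC]
  linear_combination -X * hC'

/-- Half the distance of `innerRoot α` from the unit circle. -/
noncomputable def cosWidth (α : ℝ) : ℝ :=
  (1 - |innerRoot α|) / 2

lemma abs_innerRoot_lt_exp {α t : ℝ} (hα : |α| < 1) (ht : |t| ≤ cosWidth α) :
    |innerRoot α| < Real.exp t := by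
  rw [cosWidth] at ht
  linarith [Real.add_one_le_exp t, neg_abs_le t, abs_innerRoot_lt_one hα]

lemma abs_innerRoot_mul_exp_lt_one {α t : ℝ} (hα : |α| < 1) (ht : |t| ≤ cosWidth α) :
    |innerRoot α| * Real.exp t < 1 := by
  have h := abs_innerRoot_lt_exp hα (t := -t) (by rwa [abs_neg])
  rwa [Real.exp_neg, ← one_div, lt_div_iff₀ (Real.exp_pos t)] at h

lemma eval_cosDen_ne_zero {α : ℝ} (hα : |α| < 1) {z : ℂ} (hz : z ∈ closedAnnulus (cosWidth α)) :
    (cosDen α).eval z ≠ 0 := by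
  have hw : |cosWidth α| = cosWidth α := abs_of_pos (by
    rw [cosWidth]; linarith [abs_innerRoot_lt_one hα])
  have hlow := abs_innerRoot_lt_exp hα (t := -cosWidth α) (by rw [abs_neg, hw])
  have hup := abs_innerRoot_mul_exp_lt_one hα hw.le
  rw [cosDen_eq_mul hα]
  simp only [eval_mul, eval_C, eval_sub, eval_X, eval_add]
  refine mul_ne_zero (mul_ne_zero (by exact_mod_cast (geomMean_pos α).ne') fun h => ?_) fun h => ?_
  · have hnorm := congrArg norm (sub_eq_zero.mp h)
    rw [Complex.norm_real, Real.norm_eq_abs] at hnorm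
    exact (hlow.trans_le hz.1).ne' hnorm
  · have hnorm := congrArg norm (eq_neg_of_add_eq_zero_right h)
    rw [neg_mul, neg_neg, norm_mul, Complex.norm_real, Real.norm_eq_abs, norm_one] at hnorm
    exact (hup.trans_le' (mul_le_mul_of_nonneg_left hz.2 (abs_nonneg _))).ne' hnorm

lemma logAvg_cosDen {α t : ℝ} (hα : |α| < 1) (ht : |t| ≤ cosWidth α) :
    logAvg (cosDen α) t = Real.log (geomMean α) + t := by
  have houter : (dilate t (C (-innerRoot α : ℂ) * X + C 1)).mahlerMeasure = 1 := by
    have h : dilate t (C (-innerRoot α : ℂ) * X + C 1) =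
        C (-innerRoot α * Real.exp t : ℂ) * X + C 1 := by
      simp [dilate, mul_assoc]
    rw [h]
    rcases eq_or_ne (innerRoot α) 0 with h0 | h0
    · simp [h0]
    · rw [mahlerMeasure_C_mul_X_add_C (by simp [h0]), norm_one, max_eq_right]
      simpa using (abs_innerRoot_mul_exp_lt_one hα ht).le
  have hmul : dilate t (cosDen α) = C (geomMean α : ℂ) * dilate t (X - C (innerRoot α : ℂ)) *
      dilate t (C (-innerRoot α : ℂ) * X + C 1) := by
    rw [cosDen_eq_mul hα]
    simp only [dilate, mul_comp, C_comp]
  rw [logAvg_eq_log_mahlerMeasure, hmul, mahlerMeasure_mul, mahlerMeasure_mul, houter,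
    mahlerMeasure_const, mahlerMeasure_dilate_X_sub_C, mul_one, Complex.norm_real,
    Complex.norm_real, Real.norm_of_nonneg (geomMean_pos α).le, Real.norm_eq_abs,
    max_eq_left (abs_innerRoot_lt_exp hα ht).le,
    Real.log_mul (geomMean_pos α).ne' (Real.exp_pos t).ne', Real.log_exp]

lemma norm_le_geomMean {α c : ℝ} (hα : |α| < 1) (hc : |c| ≤ 2) {μ : ℂ}
    (hμ : μ ^ 2 + c / 2 * μ + α ^ 2 / 4 = 0) : ‖μ‖ ≤ geomMean α := by
  have hroot := geomMean_mul_one_sub hα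
  have hhalf := half_le_geomMean α
  have hnorm : ‖μ‖ ^ 2 = μ.re * μ.re + μ.im * μ.im := by
    rw [Complex.sq_norm, Complex.normSq_apply]
  have hre : μ.re * μ.re - μ.im * μ.im + c / 2 * μ.re + α ^ 2 / 4 = 0 := by
    have h := congrArg Complex.re hμ
    norm_cast at h
    simpa [pow_two] using h
  have him : μ.im * (2 * μ.re + c / 2) = 0 := by
    have h := congrArg Complex.im hμ
    norm_cast at h
    simp [pow_two] at h
    linear_combination h
  rcases mul_eq_zero.mp him with hreal | hconj
  · have hle : -(c / 2) * μ.re ≤ ‖μ‖ := by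
      refine (le_abs_self _).trans ?_
      rw [abs_mul, abs_neg, abs_div, abs_two]
      exact (mul_le_of_le_one_left (abs_nonneg _) (by linarith)).trans (Complex.abs_re_le_norm μ)
    rw [hreal] at hnorm hre
    by_contra! hlt
    nlinarith
  · have heq : ‖μ‖ ^ 2 = α ^ 2 / 4 := by linear_combination hnorm - hre + μ.re * hconj
    rw [← sq_le_sq₀ (norm_nonneg _) (by linarith), heq, ← hroot]
    nlinarith

lemma exists_add_eq_and_mul_eq (s p : ℂ) : ∃ μ ν, μ + ν = s ∧ μ * ν = p := by
  obtain ⟨d, hd⟩ := IsAlgClosed.exists_pow_nat_eq (s ^ 2 - 4 * p) two_pos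
  exact ⟨(s + d) / 2, (s - d) / 2, by ring, by linear_combination -hd / 4⟩

/-- The common value of the numerator of `cosCocycle` at `z = 0` and of its coefficient of `z ^ 2`,
with `c = α * E + 2 * lam`. -/
noncomputable def poleMat (α c : ℝ) : Mat :=
  !![-(c / 2 : ℂ), α / 2; -(α / 2 : ℂ), 0]

lemma trace_poleMat (α c : ℝ) : (poleMat α c).trace = -(c / 2) := by
  simp [poleMat, Matrix.trace_fin_two]

lemma det_poleMat (α c : ℝ) : (poleMat α c).det = α ^ 2 / 4 := by
  rw [poleMat, Matrix.det_fin_two_of]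
  ring

lemma norm_trace_poleMat_pow_le {α c : ℝ} (hα : |α| < 1) (hc : |c| ≤ 2) (n : ℕ) :
    ‖(poleMat α c ^ n).trace‖ ≤ 2 * geomMean α ^ n := by
  obtain ⟨μ, ν, hadd, hmul⟩ := exists_add_eq_and_mul_eq (-(c / 2)) (α ^ 2 / 4)
  have hμ := norm_le_geomMean hα hc (μ := μ) (by linear_combination μ * hadd - hmul)
  have hν := norm_le_geomMean hα hc (μ := ν) (by linear_combination ν * hadd - hmul)
  rw [trace_pow_eq_add ((trace_poleMat α c).trans hadd.symm) ((det_poleMat α c).trans hmul.symm),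
    two_mul]
  refine (norm_add_le _ _).trans (add_le_add ?_ ?_) <;> rw [norm_pow] <;> gcongr

lemma exists_pow_le_norm_trace_poleMat_pow {α c : ℝ} (hα : |α| < 1) (hc : 2 < |c|) :
    ∃ m > geomMean α, ∀ n : ℕ, m ^ n ≤ ‖(poleMat α c ^ n).trace‖ := by
  have hα2 := (sq_lt_one_iff_abs_lt_one α).mpr hα
  have hgap : 1 - α ^ 2 < c ^ 2 / 4 - α ^ 2 := by
    linarith [(sq_lt_sq₀ zero_le_two (abs_nonneg c)).mpr hc, sq_abs c]
  have hsq := Real.sq_sqrt ((sub_pos.mpr hα2).trans hgap).le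
  have hsqrt := Real.sqrt_lt_sqrt (sub_pos.mpr hα2).le hgap
  have hsmall : √(c ^ 2 / 4 - α ^ 2) ≤ |c| / 2 := by
    rw [Real.sqrt_le_left (by positivity), div_pow, sq_abs]
    linarith [sq_nonneg α]
  obtain ⟨σ, hσ, hσc⟩ : ∃ σ : ℝ, |σ| = 1 ∧ -(c / 2) = σ * (|c| / 2) := by
    rcases abs_choice c with h | h <;> rw [h]
    exacts [⟨-1, by norm_num, by ring⟩, ⟨1, by norm_num, by ring⟩]
  have hσ2 : σ ^ 2 = 1 := by rw [← sq_abs, hσ, one_pow]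
  set D := √(c ^ 2 / 4 - α ^ 2)
  refine ⟨(|c| / 2 + D) / 2, by rw [geomMean]; linarith, fun n => ?_⟩
  have htrace := trace_pow_eq_add (M := poleMat α c) (μ := ↑(σ * ((|c| / 2 + D) / 2)))
    (ν := ↑(σ * ((|c| / 2 - D) / 2))) (by
      rw [trace_poleMat]
      norm_cast
      linarith) (by
      rw [det_poleMat]
      norm_cast
      linear_combination -(|c| ^ 2 / 4 - D ^ 2) / 4 * hσ2 - sq_abs c / 16 + hsq / 4) n
  rw [htrace]
  norm_cast
  rw [mul_pow, mul_pow, ← mul_add, norm_mul, norm_pow, Real.norm_eq_abs, Real.norm_eq_abs, hσ,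
    one_pow, one_mul]
  refine (le_add_of_nonneg_right ?_).trans (le_abs_self _)
  exact pow_nonneg (by linarith) n

/-- The numerator `z * (E - α * E * cos - 2 * lam * cos)` of `E - potV α lam`, at
`z = exp (2πix)`. -/
noncomputable def cosNum (α lam E : ℝ) : ℂ[X] :=
  C (E : ℂ) * X - C ((α * E + 2 * lam) / 2 : ℂ) * (X ^ 2 + 1)

lemma circlePt_zero_sq_add_one (x : ℝ) :
    circlePt 0 x ^ 2 + 1 = circlePt 0 x * (2 * Real.cos (2 * π * x) : ℝ) := by
  have hne : circlePt 0 x ≠ 0 := Complex.exp_ne_zero _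
  have h : circlePt 0 x = Complex.exp ((2 * π * x : ℂ) * Complex.I) := by
    rw [circlePt, Complex.ofReal_zero, zero_add, mul_right_comm]
  push_cast
  rw [Complex.two_cos, ← h, neg_mul, Complex.exp_neg, ← h]
  field_simp

lemma one_sub_mul_cos_pos {α : ℝ} (hα : |α| < 1) (x : ℝ) : 0 < 1 - α * Real.cos x := by
  have h := mul_le_of_le_one_right (abs_nonneg α) (Real.abs_cos_le_one x)
  rw [← abs_mul] at h
  linarith [le_abs_self (α * Real.cos x)]

section CosCocycle

variable {α : ℝ} (hα : |α| < 1) (lam E : ℝ)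

/-- The transfer matrices of `potV α lam` at energy `E`, extended to complex phases. -/
noncomputable def cosCocycle : RationalCocycle where
  num := !![cosNum α lam E, -cosDen α; cosDen α, 0]
  den := cosDen α
  width := cosWidth α
  natDegree_num_le i j := by
    have hnum : (cosNum α lam E).natDegree ≤ 2 := by
      unfold cosNum
      compute_degree
    have hden : (cosDen α).natDegree ≤ 2 := by
      unfold cosDen
      compute_degree
    fin_cases i <;> fin_cases j <;> simp [hnum, hden]
  det_num := by
    rw [Matrix.det_fin_two_of]
    ring
  width_pos := by
    rw [cosWidth]
    linarith [abs_innerRoot_lt_one hα]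
  width_le_half := by
    rw [cosWidth]
    linarith [abs_nonneg (innerRoot α)]
  eval_den_ne_zero _ hz := eval_cosDen_ne_zero hα hz

lemma cosCocycle_cocycle_zero (x : ℝ) :
    (cosCocycle hα lam E).cocycle 0 x = schrodingerMat (E - potV α lam x) := by
  have hden : (cosDen α).eval (circlePt 0 x) = circlePt 0 x * (1 - α * Real.cos (2 * π * x)) := by
    simp only [cosDen, eval_sub, eval_X, eval_mul, eval_C, eval_add, eval_pow, eval_one,
      circlePt_zero_sq_add_one]
    push_cast
    ring
  have hnum : (cosNum α lam E).eval (circlePt 0 x) =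
      (cosDen α).eval (circlePt 0 x) * (E - potV α lam x) := by
    have hne : (1 - α * Real.cos (2 * π * x) : ℂ) ≠ 0 := by
      exact_mod_cast (one_sub_mul_cos_pos hα (2 * π * x)).ne'
    simp only [hden, cosNum, eval_sub, eval_X, eval_mul, eval_C, eval_add, eval_pow, eval_one,
      circlePt_zero_sq_add_one, potV]
    push_cast at hne ⊢
    field_simp
    ring
  have hne := (cosCocycle hα lam E).eval_den_circlePt_ne_zero
    (cosCocycle hα lam E).abs_zero_le_width x
  rw [cosCocycle] at hne
  ext i j
  fin_cases i <;> fin_cases j <;>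
    simp [RationalCocycle.cocycle, cosCocycle, schrodingerMat, hnum, hne]

lemma lyap_eq_lyapExp (V : ℝ → ℝ) (b : ℝ) (z : ℂ) :
    lyap V b z = lyapExp (fun x => schrodingerMat (z - V x)) b := by
  have h (n : ℕ) (x : ℝ) :
      tProd V b n x z = cocycleIter (fun x => schrodingerMat (z - V x)) b n x := by
    -- the product in `tProd` is indexed by the list of naturals coerced to reals
    have hcast : (do let j ← (List.range n).reverse; pure (j : ℝ)) =
        (List.range n).reverse.map Nat.cast := bind_pure_comp _ _
    rw [cocycleIter, orderedProd_eq_prod_reverse, tProd, hcast, List.map_map]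
    rfl
  simp only [lyap, h]
  rfl

lemma lyap_potV_eq_exponent (b : ℝ) :
    lyap (potV α lam) b E = (cosCocycle hα lam E).exponent b 0 := by
  rw [lyap_eq_lyapExp, RationalCocycle.exponent, funext (cosCocycle_cocycle_zero hα lam E)]

include hα in
lemma lyap_potV_nonneg (b : ℝ) : 0 ≤ lyap (potV α lam) b E := by
  rw [lyap_potV_eq_exponent hα]
  exact ((cosCocycle hα lam E).isSL2Cocycle
    (cosCocycle hα lam E).abs_zero_le_width).lyapExp_nonneg b

lemma exp_natCast_mul_logAvg_den (n : ℕ) :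
    Real.exp (n * logAvg (cosCocycle hα lam E).den 0) = geomMean α ^ n := by
  have h := logAvg_cosDen hα (cosCocycle hα lam E).abs_zero_le_width
  rw [cosCocycle, h, add_zero, Real.exp_nat_mul, Real.exp_log (geomMean_pos α)]

lemma evalMat_zero_num :
    evalMat 0 (cosCocycle hα lam E).num = poleMat α (α * E + 2 * lam) := by
  ext i j
  fin_cases i <;> fin_cases j <;> simp [poleMat, cosCocycle, cosNum, cosDen]

lemma map_coeff_two_num :
    (cosCocycle hα lam E).num.map (coeff · 2) = poleMat α (α * E + 2 * lam) := by
  ext i j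
  fin_cases i <;> fin_cases j <;> simp [poleMat, cosCocycle, cosNum, cosDen, coeff_X, coeff_one]

lemma isBalanced_cosCocycle (hc : |α * E + 2 * lam| ≤ 2) : (cosCocycle hα lam E).IsBalanced where
  logAvg_den_eq t ht := by
    have h₀ := logAvg_cosDen hα (cosCocycle hα lam E).abs_zero_le_width
    rw [add_zero] at h₀
    exact (logAvg_cosDen hα ht).trans (congrArg (· + t) h₀.symm)
  norm_trace_pow_eval_zero_le n := by
    rw [evalMat_zero_num, exp_natCast_mul_logAvg_den]
    exact norm_trace_poleMat_pow_le hα hc n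
  norm_trace_pow_coeff_two_le n := by
    rw [map_coeff_two_num, exp_natCast_mul_logAvg_den]
    exact norm_trace_poleMat_pow_le hα hc n

lemma exponent_cosCocycle_pos {b : ℝ} (hb : Irrational b) (hc : 2 < |α * E + 2 * lam|) :
    0 < (cosCocycle hα lam E).exponent b 0 := by
  obtain ⟨m, hm, htr⟩ := exists_pow_le_norm_trace_poleMat_pow hα hc
  have hm₀ := (geomMean_pos α).trans hm
  refine (cosCocycle hα lam E).exponent_pos_of_exp_le_norm_trace hb (s := Real.log m) ?_
    fun n => ?_
  · have h := logAvg_cosDen hα (cosCocycle hα lam E).abs_zero_le_width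
    rw [add_zero] at h
    exact h.trans_lt (Real.log_lt_log (geomMean_pos α) hm)
  · rw [evalMat_zero_num, Real.exp_nat_mul, Real.exp_log hm₀]
    exact htr n

end CosCocycle

/-! ### The spectrum of the model -/

section Spectrum

variable {α lam b θ E : ℝ} {H : lp (fun _ : ℤ => ℂ) 2 →L[ℂ] lp (fun _ : ℤ => ℂ) 2}
  (hα : |α| < 1) (hb : Irrational b) (hH : IsSchrodingerOp (potV α lam) b θ H)

include hα hb hH

lemma lyap_eq_zero_of_mem_spectrum (hc : |α * E + 2 * lam| ≤ 2) (hE : (E : ℂ) ∈ spectrum ℂ H) :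
    lyap (potV α lam) b E = 0 := by
  set M := cosCocycle hα lam E
  have hM := M.isSL2Cocycle M.abs_zero_le_width
  rw [lyap_potV_eq_exponent hα]
  refine (hM.lyapExp_nonneg b).eq_of_not_lt' fun hpos => ?_
  obtain ⟨n, -, hdom⟩ :=
    (isBalanced_cosCocycle hα lam E hc).exists_forall_mul_norm_iter_le hb hpos 8
  obtain ⟨C, hC, hle⟩ := hM.exists_norm_le
  have horbit (m : ℤ) (k : ℕ) : cocycleIter (M.cocycle 0) b k (m * b + θ) =
      orderedProd (fun j => schrodingerMat (E - potV α lam ((m + j : ℤ) * b + θ))) k := by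
    rw [cocycleIter, funext (cosCocycle_cocycle_zero hα lam E)]
    refine congrArg (orderedProd · k) (funext fun j => ?_)
    rw [show (m * b + θ + j * b : ℝ) = (m + j : ℤ) * b + θ by push_cast; ring]
  refine IsDiscreteSchrodingerOp.notMem_spectrum_of_domination
    (v := fun n => potV α lam (n * b + θ)) hH hC (fun m => ?_) (n := n) (fun m m' => ?_) hE
  · rw [← cosCocycle_cocycle_zero hα]
    exact hle _
  · rw [← horbit, ← horbit]
    exact hdom _ _

theorem lyap_pos_iff_of_mem_spectrum (hE : (E : ℂ) ∈ spectrum ℂ H) :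
    0 < lyap (potV α lam) b E ↔ 2 < |α * E + 2 * lam| := by
  refine ⟨fun hpos => ?_, fun hc => ?_⟩
  · by_contra! hc
    exact hpos.ne' (lyap_eq_zero_of_mem_spectrum hα hb hH hc hE)
  · rw [lyap_potV_eq_exponent hα]
    exact exponent_cosCocycle_pos hα lam E hb hc

end Spectrum

lemma one_add_half_abs_le_abs_sub {α lam E k : ℝ} (hα : |α| < 1) (hlam : lam ≤ 0)
    (hc : 2 < α * E + 2 * lam) (hk : |k| ≤ 1) :
    (1 + |E| / 2) * (1 - α * k) ≤ |E * (1 - α * k) - 2 * lam * k| := by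
  obtain ⟨hk₁, hk₂⟩ := abs_le.mp hk
  wlog hα₀ : 0 ≤ α generalizing α E k
  · have h := this (α := -α) (E := -E) (k := -k) (by rwa [abs_neg]) (by linarith)
      (by rwa [abs_neg]) (by linarith) (by linarith) (by linarith)
    have hodd : -E * (1 - α * k) - 2 * lam * -k = -(E * (1 - α * k) - 2 * lam * k) := by ring
    rwa [abs_neg E, neg_mul_neg, hodd, abs_neg] at h
  · have hE : 2 < E := by nlinarith [(abs_lt.mp hα).2]
    rw [abs_of_pos (by linarith : 0 < E)]
    refine le_trans ?_ (le_abs_self _)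
    rcases le_total 0 k with hk₀ | hk₀ <;> nlinarith [hk₀, (abs_lt.mp hα).2]

lemma one_add_half_abs_le_abs_sub_potV {α lam E : ℝ} (hα : |α| < 1) (hlam : lam ≤ 0)
    (hc : 2 < α * E + 2 * lam) (x : ℝ) : 1 + |E| / 2 ≤ |E - potV α lam x| := by
  have hpos := one_sub_mul_cos_pos hα (2 * π * x)
  have h := one_add_half_abs_le_abs_sub hα hlam hc (Real.abs_cos_le_one (2 * π * x))
  rwa [potV, sub_div' hpos.ne', abs_div, abs_of_pos hpos, le_div_iff₀ hpos]

lemma mul_add_le_two_of_mem_spectrum {α lam b θ E : ℝ}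
    {H : lp (fun _ : ℤ => ℂ) 2 →L[ℂ] lp (fun _ : ℤ => ℂ) 2} (hα : |α| < 1) (hlam : lam ≤ 0)
    (hH : IsSchrodingerOp (potV α lam) b θ H) (hE : (E : ℂ) ∈ spectrum ℂ H) :
    α * E + 2 * lam ≤ 2 := by
  by_contra! hc
  have hE2 : 2 < |E| := by
    have h := mul_le_of_le_one_left (abs_nonneg E) hα.le
    rw [← abs_mul] at h
    linarith [le_abs_self (α * E)]
  refine IsDiscreteSchrodingerOp.notMem_spectrum_of_two_lt_abs_sub
    (v := fun n => potV α lam (n * b + θ)) (η := |E| / 2 - 1) hH (by linarith) (fun n => ?_) hE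
  linarith [one_add_half_abs_le_abs_sub_potV hα hlam hc (n * b + θ)]

end LyapunovDichotomy

open LyapunovDichotomy

/-- suppose `λ < 0`; then for every `θ` and every `E` in the spectrum of
`H_{α,θ,b}`: `L(E) > 0 ↔ αE < -2(1-|λ|)`, and `L(E) = 0 ↔ αE ≥ -2(1-|λ|)`. -/
theorem lyapunov_dichotomy_neg_coupling (α lam b θ : ℝ) (hα : α ∈ Set.Ioo (-1 : ℝ) 1)
    (hb : Irrational b) (hlam : lam < 0)
    (H : lp (fun _ : ℤ => ℂ) 2 →L[ℂ] lp (fun _ : ℤ => ℂ) 2)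
    (hH : IsSchrodingerOp (potV α lam) b θ H)
    (E : ℝ) (hE : (E : ℂ) ∈ spectrum ℂ H) :
    (0 < lyap (potV α lam) b (E : ℂ) ↔ α * E < -(2 * (1 - |lam|))) ∧
    (lyap (potV α lam) b (E : ℂ) = 0 ↔ -(2 * (1 - |lam|)) ≤ α * E) := by
  have hα' : |α| < 1 := abs_lt.mpr hα
  have hle : α * E + 2 * lam ≤ 2 := mul_add_le_two_of_mem_spectrum hα' hlam.le hH hE
  have hpos : 0 < lyap (potV α lam) b E ↔ α * E < -(2 * (1 - |lam|)) := by
    rw [lyap_pos_iff_of_mem_spectrum hα' hb hH hE, abs_of_neg hlam, lt_abs]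
    constructor
    · rintro (h | h) <;> linarith
    · exact fun h => Or.inr (by linarith)
  refine ⟨hpos, ?_⟩
  rw [← not_lt, ← hpos, not_lt]
  exact ⟨le_of_eq, fun h => h.antisymm (lyap_potV_nonneg hα' lam E b)⟩
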